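/- Let G be a finite group, let x ∈ G with x ≠ 1, let K = x^G, and suppose that K² = {1} ∪ D where D = d^G is the conjugacy class of some element d ≠ 1 of G. Then the subgroup ⟨K⟩ generated by K is a solvable normal subgroup of G. -/

import Mathlib

open Pointwise

/-- The conjugacy class of `x` in `G`. -/
def conjClass {G : Type*} [Group G] (x : G) : Set G :=
  {a : G | ∃ g : G, a = g⁻¹ * x * g}

set_option linter.all false

structure Wed (H : Type*) [Group H] where
  n : ℕ
  d : Fin n → ℕ
  pos : ∀ i, NeZero (d i)
  e : MonoidAlgebra ℂ H ≃ₐ[ℂ] Π i : Fin n, Matrix (Fin (d i)) (Fin (d i)) ℂ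

theorem Wed.exists (H : Type*) [Group H] [Finite H] : Nonempty (Wed H) := by
  obtain ⟨n, d, h, ⟨e⟩⟩ := IsSemisimpleRing.exists_algEquiv_pi_matrix_of_isAlgClosed ℂ (MonoidAlgebra ℂ H)
  exact ⟨⟨n, d, h, e⟩⟩

/-- idempotent matrices factor -/
theorem idem_factor {m : ℕ} (Z : Matrix (Fin m) (Fin m) ℂ) (h : Z * Z = Z) :
    ∃ (r : ℕ) (B : Matrix (Fin m) (Fin r) ℂ) (C : Matrix (Fin r) (Fin m) ℂ), Z = B * C ∧ C * B = 1 := by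
  let f := Matrix.toLin' Z
  have hf : f ∘ₗ f = f := by
    rw [← Matrix.toLin'_mul, h]
  let b := Module.finBasis ℂ (LinearMap.range f)
  let B := LinearMap.toMatrix b (Pi.basisFun ℂ (Fin m)) (LinearMap.range f).subtype
  let C := LinearMap.toMatrix (Pi.basisFun ℂ (Fin m)) b f.rangeRestrict
  refine ⟨_, B, C, ?_, ?_⟩
  · rw [← LinearMap.toMatrix_comp]
    have : (LinearMap.range f).subtype ∘ₗ f.rangeRestrict = f := by ext; rfl
    rw [this]
    simp [f, LinearMap.toMatrix_eq_toMatrix']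
  · rw [← LinearMap.toMatrix_comp]
    have : f.rangeRestrict ∘ₗ (LinearMap.range f).subtype = LinearMap.id := by
      ext ⟨y, z, rfl⟩
      simpa using congrFun (LinearMap.congr_fun hf z) _
    rw [this, LinearMap.toMatrix_id]

theorem idem_trace_det {m : ℕ} (Z : Matrix (Fin m) (Fin m) ℂ) (h : Z * Z = Z) :
    ∃ r : ℕ, Z.trace = r ∧ (r = 0 → Z = 0) ∧ ∀ c : ℂ, (1 + c • Z).det = (1 + c)^r := by
  obtain ⟨r, B, C, h1, h2⟩ := idem_factor Z h
  refine ⟨r, ?_, ?_, ?_⟩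
  · rw [h1, Matrix.trace_mul_comm, h2]; simp
  · rintro rfl
    rw [h1]; ext; simp [Matrix.mul_apply]
  · intro c
    rw [h1, ← Matrix.smul_mul, Matrix.det_one_add_mul_comm, Matrix.mul_smul, h2]
    have : (1 : Matrix (Fin r) (Fin r) ℂ) + c • 1 = (1+c) • 1 := by rw [add_smul, one_smul]
    rw [this, Matrix.det_smul]; simp


noncomputable abbrev sg {H : Type*} [Group H] (h : H) : MonoidAlgebra ℂ H := MonoidAlgebra.single h (1:ℂ)

theorem sg_mul {H : Type*} [Group H] (g h : H) : sg g * sg h = sg (g * h) := by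
  simp [sg, MonoidAlgebra.single_mul_single]

theorem sg_one {H : Type*} [Group H] : sg (1 : H) = 1 := rfl

theorem eq_sum_sg {H : Type*} [Group H] [Fintype H] (a : MonoidAlgebra ℂ H) :
    a = ∑ h, a.coeff h • sg h := by
  have := (MonoidAlgebra.basis H ℂ).sum_repr a
  simpa [MonoidAlgebra.basis] using this.symm

theorem lin_ext {H : Type*} [Group H] {V : Type*} [AddCommGroup V] [Module ℂ V]
    (f g : MonoidAlgebra ℂ H →ₗ[ℂ] V) (h : ∀ x, f (sg x) = g (sg x)) : f = g := by
  apply MonoidAlgebra.lhom_ext'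
  intro x
  ext
  exact h x

namespace Wed
variable {H : Type*} [Group H] (W : Wed H)

noncomputable def rho (i : Fin W.n) : MonoidAlgebra ℂ H →ₐ[ℂ] Matrix (Fin (W.d i)) (Fin (W.d i)) ℂ :=
  (Pi.evalAlgHom ℂ _ i).comp W.e.toAlgHom

theorem rho_surj (i : Fin W.n) (M) : ∃ a, W.rho i a = M := by
  refine ⟨W.e.symm (Pi.single i M), ?_⟩
  simp [rho]

noncomputable def chi (i : Fin W.n) : MonoidAlgebra ℂ H →ₗ[ℂ] ℂ :=
  Matrix.traceLinearMap (Fin (W.d i)) ℂ ℂ ∘ₗ (W.rho i).toLinearMap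

theorem chi_apply (i) (a) : W.chi i a = (W.rho i a).trace := rfl

theorem chi_comm (i) (a b) : W.chi i (a * b) = W.chi i (b * a) := by
  simp only [chi_apply, map_mul]; exact Matrix.trace_mul_comm _ _

theorem chi_one (i) : W.chi i 1 = W.d i := by simp [chi_apply]

theorem d_pos (i) : 0 < W.d i := Nat.pos_of_ne_zero (W.pos i).out

/-- minimal idempotents -/
noncomputable def E (i : Fin W.n) : MonoidAlgebra ℂ H :=
  haveI := W.pos i
  W.e.symm (Pi.single i (Matrix.single 0 0 1))

theorem E_idem (i) : W.E i * W.E i = W.E i := by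
  haveI := W.pos i
  simp only [E, ← map_mul]
  congr 1
  rw [← Pi.single_mul]
  simp

theorem chi_idem (i) (a : MonoidAlgebra ℂ H) (h : a * a = a) :
   ∃ r : ℕ, W.chi i a = r ∧ (r = 0 → W.rho i a = 0) ∧ ∀ c : ℂ, (W.rho i (1 + c • a)).det = (1 + c)^r := by
  obtain ⟨r, h1, h2, h3⟩ := idem_trace_det (W.rho i a) (by rw [← map_mul, h])
  exact ⟨r, h1, h2, fun c => by rw [← h3]; simp⟩

theorem traceLike (τ : MonoidAlgebra ℂ H →ₗ[ℂ] ℂ) (h : ∀ a b, τ (a * b) = τ (b * a)) (a) :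
    τ a = ∑ i, τ (W.E i) * W.chi i a := by
  obtain ⟨f, rfl⟩ := W.e.symm.surjective a
  have h1 : ∀ i (p q : Fin (W.d i)) (c : ℂ), τ (W.e.symm (Pi.single i (Matrix.single p q c))) =
      if p = q then c * τ (W.E i) else 0 := by
    intro i p q c
    haveI := W.pos i
    have e1 : W.e.symm (Pi.single i (Matrix.single p q c)) =
      W.e.symm (Pi.single i (Matrix.single p 0 c)) * W.e.symm (Pi.single i (Matrix.single 0 q 1)) := by
      rw [← map_mul, ← Pi.single_mul]; simp
    rw [e1, h, ← map_mul, ← Pi.single_mul]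
    split_ifs with hpq
    · subst hpq
      simp only [Matrix.single_mul_single_same, one_mul]
      have : (Matrix.single 0 0 c : Matrix (Fin (W.d i)) (Fin (W.d i)) ℂ) = c • Matrix.single 0 0 1 := by simp
      rw [this, Pi.single_smul, map_smul, map_smul, smul_eq_mul]
      rfl
    · rw [Matrix.single_mul_single_of_ne]
      · simp
      · exact fun h => hpq h.symm
  have h2 : ∀ i M, τ (W.e.symm (Pi.single i M)) = τ (W.E i) * M.trace := by
    intro i M
    conv_lhs => rw [Matrix.matrix_eq_sum_single M]
    have : ∀ M : Matrix (Fin (W.d i)) (Fin (W.d i)) ℂ, τ (W.e.symm (Pi.single i M)) = (τ ∘ₗ W.e.symm.toLinearMap ∘ₗ LinearMap.single ℂ _ i) M := fun M => rfl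
    rw [this]
    simp only [map_sum]
    simp only [← this, h1]
    simp [Matrix.trace, Finset.mul_sum, mul_comm]
  conv_lhs => rw [← Finset.univ_sum_single f]
  simp only [map_sum, h2]
  simp [chi_apply, rho]

theorem trace_conj_eq (a b : MonoidAlgebra ℂ H) :
    LinearMap.trace ℂ _ (LinearMap.mulLeft ℂ a ∘ₗ LinearMap.mulRight ℂ b) = ∑ i, W.chi i a * W.chi i b := by
  rw [← LinearMap.trace_conj' _ W.e.toLinearEquiv]
  rw [LinearMap.trace_eq_matrix_trace ℂ (Pi.basis (fun i => Matrix.stdBasis ℂ (Fin (W.d i)) (Fin (W.d i))))]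
  rw [Matrix.trace, Fintype.sum_sigma]
  apply Finset.sum_congr rfl
  intro i _
  rw [chi_apply, chi_apply, Matrix.trace, Matrix.trace, Finset.sum_mul_sum, Fintype.sum_prod_type]
  apply Finset.sum_congr rfl
  intro p _
  apply Finset.sum_congr rfl
  intro q _
  simp [LinearMap.toMatrix_apply, LinearEquiv.conj_apply, Matrix.stdBasis, rho]
  rw [← Matrix.single_eq_of_single_single]
  simp [Matrix.mul_apply, Matrix.single_apply, ite_and, Finset.sum_ite_eq]

theorem col_orth [Fintype H] [DecidableEq H] (g y : H) :
    ∑ i, W.chi i (sg g) * W.chi i (sg y) = ((Finset.univ.filter (fun h : H => h⁻¹ * g⁻¹ * h = y)).card : ℂ) := by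
  rw [← trace_conj_eq]
  rw [LinearMap.trace_eq_matrix_trace ℂ (MonoidAlgebra.basis H ℂ)]
  rw [Matrix.trace, Finset.card_filter]
  push_cast
  apply Finset.sum_congr rfl
  intro h _
  simp [LinearMap.toMatrix_apply, MonoidAlgebra.basis]
  have hh : (g * (h * y) = h) ↔ (h⁻¹ * g⁻¹ * h = y) := by
    constructor
    · intro h1
      conv_lhs => rw [mul_assoc]; rhs; rhs; rw [← h1]
      group
    · rintro rfl; group
  rw [Finsupp.single_apply]
  simp only [hh]

open Classical in
theorem sum_d_chi [Fintype H] (g : H) : ∑ i, (W.d i : ℂ) * W.chi i (sg g) = if g = 1 then (Fintype.card H : ℂ) else 0 := by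
  classical
  have := W.col_orth g 1
  simp only [sg_one, chi_one] at this
  simp only [mul_comm (W.d _ : ℂ)]
  refine this.trans ?_
  · split_ifs with h
    · subst h; simp
    · have : ∀ h : H, ¬ (h⁻¹ * g⁻¹ * h = 1) := by
        intro k hk
        apply h
        have : g⁻¹ = 1 := by
          have := congrArg (fun z => k * z * k⁻¹) hk
          simpa [mul_assoc] using this
        simpa using this
      simp [this]

theorem coeff_eq [Fintype H] (a : MonoidAlgebra ℂ H) (h : H) :
    (Fintype.card H : ℂ) * a.coeff h = ∑ i, (W.d i : ℂ) * W.chi i (a * sg h⁻¹) := by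
  induction a using MonoidAlgebra.induction_on with
  | of g =>
    simp only [MonoidAlgebra.of_apply]
    rw [sg_mul, sum_d_chi]
    classical
    simp [Finsupp.single_apply, mul_inv_eq_one]
  | add x y hx hy =>
    simp only [MonoidAlgebra.coeff_add, Finsupp.add_apply, mul_add, hx, hy, add_mul, map_add, Finset.sum_add_distrib]
  | smul r x hx =>
    simp only [MonoidAlgebra.coeff_smul, Finsupp.smul_apply, smul_mul_assoc, map_smul, smul_eq_mul]
    rw [mul_left_comm, hx, Finset.mul_sum]
    exact Finset.sum_congr rfl fun _ _ => by ring

noncomputable def F (j : Fin W.n) : MonoidAlgebra ℂ H :=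
  ((W.d j : ℂ)⁻¹) • W.e.symm (Pi.single j 1)

theorem chi_F (i j) (a) : W.chi i (W.F j * a) = if i = j then (W.d j : ℂ)⁻¹ * W.chi j a else 0 := by
  simp only [chi_apply, rho, F]
  split_ifs with h
  · subst h; simp
  · simp [h]

theorem row_orth [Fintype H] (i j) : ∑ h, W.chi i (sg h) * W.chi j (sg h⁻¹) = if i = j then (Fintype.card H : ℂ) else 0 := by
  have hc : (Fintype.card H : ℂ) ≠ 0 := by exact_mod_cast Fintype.card_ne_zero
  have hdj : (W.d j : ℂ) ≠ 0 := by exact_mod_cast (W.d_pos j).ne'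
  have h1 : ∀ h, (Fintype.card H : ℂ) * (W.F j).coeff h = W.chi j (sg h⁻¹) := by
    intro h
    rw [W.coeff_eq]
    simp only [chi_F, mul_ite, mul_zero, Finset.sum_ite_eq', Finset.sum_ite_eq, Finset.mem_univ, if_true]
    field_simp
  have h2 : W.chi i (W.F j) = ∑ h, (W.F j).coeff h * W.chi i (sg h) := by
    conv_lhs => rw [eq_sum_sg (W.F j)]
    simp only [map_sum, map_smul, smul_eq_mul]
  have h3 := W.chi_F i j 1
  rw [mul_one, h2, chi_one] at h3
  have h4 := congrArg (fun z => (Fintype.card H : ℂ) * z) h3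
  simp only [Finset.mul_sum, ← mul_assoc, h1] at h4
  simp only [mul_comm (W.chi i _), h4]
  split_ifs
  · field_simp
  · simp

theorem chi_inj [Fintype H] {i j} (h : ∀ g, W.chi i (sg g) = W.chi j (sg g)) : i = j := by
  by_contra hij
  have h1 := W.row_orth i j
  have h2 := W.row_orth j j
  simp only [h] at h1
  rw [h1, if_neg hij, if_pos rfl] at h2
  have hc : (Fintype.card H : ℂ) ≠ 0 := by exact_mod_cast Fintype.card_ne_zero
  exact hc h2.symm

theorem traceLike_of_class (τ : MonoidAlgebra ℂ H →ₗ[ℂ] ℂ) (h : ∀ a b, τ (sg (a * b)) = τ (sg (b * a))) :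
    ∀ a b, τ (a * b) = τ (b * a) := by
  intro a b
  have : (LinearMap.mul ℂ (MonoidAlgebra ℂ H)).compr₂ τ = (LinearMap.mul ℂ (MonoidAlgebra ℂ H)).flip.compr₂ τ := by
    apply lin_ext; intro x
    apply lin_ext; intro y
    simpa [sg_mul] using h x y
  exact LinearMap.congr_fun (LinearMap.congr_fun this a) b

theorem exists_irr [Fintype H] (τ : MonoidAlgebra ℂ H →ₗ[ℂ] ℂ) (h : ∀ a b, τ (sg (a * b)) = τ (sg (b * a)))
    (hidem : ∀ a, a * a = a → ∃ r : ℕ, τ a = r)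
    (hn : ∑ h, τ (sg h) * τ (sg h⁻¹) = (Fintype.card H : ℂ)) : ∃ i, ∀ a, τ a = W.chi i a := by
  have hc : (Fintype.card H : ℂ) ≠ 0 := by exact_mod_cast Fintype.card_ne_zero
  have h1 := W.traceLike τ (traceLike_of_class τ h)
  choose m hm using fun i => hidem (W.E i) (W.E_idem i)
  simp only [hm] at h1
  have h2 : ∑ i, (m i : ℂ)^2 = 1 := by
    simp only [h1, Finset.sum_mul_sum] at hn
    rw [Finset.sum_comm] at hn
    have : ∀ i, ∑ h : H, ∑ j, (m i : ℂ) * W.chi i (sg h) * (m j * W.chi j (sg h⁻¹)) = (m i:ℂ)^2 * Fintype.card H := by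
      intro i
      rw [Finset.sum_comm]
      have : ∀ j, ∑ h : H, (m i : ℂ) * W.chi i (sg h) * (m j * W.chi j (sg h⁻¹)) =
         m i * m j * (if i = j then (Fintype.card H : ℂ) else 0) := by
        intro j
        rw [← W.row_orth, Finset.mul_sum]
        exact Finset.sum_congr rfl fun _ _ => by ring
      simp only [this]
      simp [pow_two]
    simp only [this, ← Finset.sum_mul] at hn
    exact mul_right_cancel₀ hc (by rw [hn, one_mul])
  have h3 : ∑ i, (m i)^2 = 1 := by exact_mod_cast h2
  obtain ⟨i, hi⟩ : ∃ i, m i ≠ 0 := by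
    by_contra! hh
    simp [hh] at h3
  refine ⟨i, fun a => ?_⟩
  have h4 := Finset.add_sum_erase Finset.univ (fun i => (m i)^2) (Finset.mem_univ i)
  simp only [h3] at h4
  have h5 : 1 ≤ (m i)^2 := Nat.one_le_iff_ne_zero.2 (pow_ne_zero 2 hi)
  have h6 : m i = 1 := by
    have : m i ^ 2 = 1 := by omega
    simpa using this
  have h7 : ∀ j, j ≠ i → m j = 0 := by
    intro j hj
    have : ∑ x ∈ Finset.univ.erase i, m x ^ 2 = 0 := by omega
    rw [Finset.sum_eq_zero_iff] at this
    simpa using this j (by simp [hj])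
  rw [h1, Finset.sum_eq_single i]
  · simp [h6]
  · intro j _ hj; simp [h7 j hj]
  · simp

/-- twisting by automorphisms -/
theorem exists_twist [Fintype H] (φ : H ≃* H) (i) : ∃ j, ∀ h, W.chi j (sg h) = W.chi i (sg (φ h)) := by
  let Φ := MonoidAlgebra.mapDomainAlgHom ℂ ℂ (φ : H →* H)
  have hΦ : ∀ h, Φ (sg h) = sg (φ h) := by intro h; simp [Φ, sg]
  obtain ⟨j, hj⟩ := W.exists_irr (W.chi i ∘ₗ Φ.toLinearMap) (by
    intro a b
    simp only [LinearMap.comp_apply, AlgHom.toLinearMap_apply, ← sg_mul, map_mul]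
    rw [W.chi_comm]) (by
    intro a ha
    obtain ⟨r, hr, -⟩ := W.chi_idem i (Φ a) (by rw [← map_mul, ha])
    exact ⟨r, hr⟩) (by
    have := W.row_orth i i
    rw [if_pos rfl] at this
    rw [← this, ← Equiv.sum_comp φ.toEquiv (fun h => W.chi i (sg h) * W.chi i (sg h⁻¹))]
    simp [hΦ])
  exact ⟨j, fun h => by rw [← hj]; simp [hΦ]⟩

theorem exists_dual [Fintype H] (i) : ∃ j, ∀ h, W.chi j (sg h) = W.chi i (sg h⁻¹) := by
  let Φ : MonoidAlgebra ℂ H →ₗ[ℂ] MonoidAlgebra ℂ H := (MonoidAlgebra.basis H ℂ).constr ℂ (fun h => sg h⁻¹)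
  have hΦ : ∀ h, Φ (sg h) = sg (h⁻¹) := by
    intro h
    have := (MonoidAlgebra.basis H ℂ).constr_basis ℂ (fun h => sg h⁻¹) h
    simpa [Φ, MonoidAlgebra.basis] using this
  have hΦm : ∀ a b, Φ (a * b) = Φ b * Φ a := by
    intro a b
    have : (LinearMap.mul ℂ (MonoidAlgebra ℂ H)).compr₂ Φ = ((LinearMap.mul ℂ (MonoidAlgebra ℂ H)).compl₁₂ Φ Φ).flip := by
      apply lin_ext; intro x
      apply lin_ext; intro y
      simp only [LinearMap.compr₂_apply, LinearMap.flip_apply, LinearMap.compl₁₂_apply, LinearMap.mul_apply', sg_mul, hΦ, mul_inv_rev]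
    exact LinearMap.congr_fun (LinearMap.congr_fun this a) b
  obtain ⟨j, hj⟩ := W.exists_irr (W.chi i ∘ₗ Φ) (by
    intro a b
    simp only [← sg_mul, LinearMap.comp_apply, hΦm]
    rw [W.chi_comm]) (by
    intro a ha
    obtain ⟨r, hr, -⟩ := W.chi_idem i (Φ a) (by rw [← hΦm, ha])
    exact ⟨r, hr⟩) (by
    have := W.row_orth i i
    rw [if_pos rfl] at this
    rw [← this, ← Equiv.sum_comp (Equiv.inv H) (fun h => W.chi i (sg h) * W.chi i (sg h⁻¹))]
    simp [hΦ])
  exact ⟨j, fun h => by rw [← hj]; simp [hΦ]⟩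

theorem exists_triv [Fintype H] : ∃ j, ∀ h : H, W.chi j (sg h) = 1 := by
  let Φ := MonoidAlgebra.lift ℂ ℂ H (1 : H →* ℂ)
  have hΦ : ∀ h, Φ (sg h) = 1 := by intro h; simp [Φ, sg]
  obtain ⟨j, hj⟩ := W.exists_irr (Φ.toLinearMap) (by
    intro a b
    simp [hΦ]) (by
    intro a ha
    have : Φ a * Φ a = Φ a := by rw [← map_mul, ha]
    rcases IsIdempotentElem.iff_eq_zero_or_one.1 this with h | h
    · exact ⟨0, by simp [h]⟩
    · exact ⟨1, by simp [h]⟩) (by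
    simp [hΦ])
  exact ⟨j, fun h => by rw [← hj]; simp [hΦ]⟩

/-- Schur -/
theorem schur [Fintype H] (K : Finset H) (x : H) (hK : ∀ u ∈ K, ∀ g, g⁻¹ * u * g ∈ K)
    (hx : ∀ u ∈ K, ∃ g, u = g⁻¹ * x * g) (i) :
    (W.d i : ℂ) * ∑ u ∈ K, ∑ v ∈ K, W.chi i (sg (u * v)) = (K.card * W.chi i (sg x))^2 := by
  let z : MonoidAlgebra ℂ H := ∑ u ∈ K, sg u
  have hz : ∀ a, a * z = z * a := by
    intro a
    have : LinearMap.mulRight ℂ z = LinearMap.mulLeft ℂ z := by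
      apply lin_ext
      intro g
      simp only [LinearMap.mulRight_apply, LinearMap.mulLeft_apply, z, Finset.mul_sum, Finset.sum_mul, sg_mul]
      refine Finset.sum_bij' (fun u _ => g * u * g⁻¹) (fun u _ => g⁻¹ * u * g) ?_ ?_ ?_ ?_ ?_
      · intro u hu; simpa using hK u hu g⁻¹
      · intro u hu; exact hK u hu g
      · intro u hu; group
      · intro u hu; group
      · intro u hu; simp
    exact LinearMap.congr_fun this a
  obtain ⟨c, hc⟩ : ∃ c : ℂ, W.rho i z = c • 1 := by
    have hcen : W.rho i z ∈ Set.center _ := by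
      rw [Semigroup.mem_center_iff]
      intro M
      obtain ⟨a, rfl⟩ := W.rho_surj i M
      rw [← map_mul, ← map_mul, hz]
    haveI := W.pos i
    rw [Matrix.center_eq_range] at hcen
    obtain ⟨c, hc⟩ := hcen
    exact ⟨c, by rw [← hc]; ext; simp [Matrix.scalar_apply, Matrix.one_apply, Matrix.diagonal_apply]⟩
  have h1 : ∑ u ∈ K, ∑ v ∈ K, W.chi i (sg (u * v)) = W.chi i (z * z) := by
    simp only [z, Finset.sum_mul_sum, map_sum, sg_mul]
  have h2 : W.chi i z = K.card * W.chi i (sg x) := by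
    simp only [z, map_sum]
    rw [Finset.sum_congr rfl (g := fun _ => W.chi i (sg x))]
    · simp
    · intro u hu
      obtain ⟨g, rfl⟩ := hx u hu
      rw [← sg_mul, W.chi_comm, sg_mul]; simp
  rw [h1, ← h2, chi_apply, chi_apply, map_mul, hc]
  simp
  ring

end Wed


theorem uniq4 {G : Type*} [Group G] [Finite G] (g v v' : G) (h : v ∈ Subgroup.zpowers g)
    (h' : v' ∈ Subgroup.zpowers g) (hv : orderOf v = 4) (hv' : orderOf v' = 4) : v' = v ∨ v' = v⁻¹ := by
  classical
  haveI : Fintype G := Fintype.ofFinite G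
  have hvv : v ≠ v⁻¹ := by
    intro h
    have : v ^ 2 = 1 := by rw [pow_two]; nth_rw 1 [h]; simp
    have := orderOf_le_of_pow_eq_one (by norm_num) this
    omega
  let V : Subgroup.zpowers g := ⟨v, h⟩
  let V' : Subgroup.zpowers g := ⟨v', h'⟩
  have hV : orderOf V = 4 := by rw [← hv]; exact (Subgroup.orderOf_coe V).symm
  have hV' : orderOf V' = 4 := by rw [← hv']; exact (Subgroup.orderOf_coe V').symm
  have hc := IsCyclic.card_orderOf_eq_totient (α := Subgroup.zpowers g) (d := 4) (by rw [← hV]; exact orderOf_dvd_card)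
  have hsub : ({V, V⁻¹} : Finset (Subgroup.zpowers g)) ⊆ Finset.univ.filter (fun a => orderOf a = 4) := by
    intro a ha
    simp only [Finset.mem_insert, Finset.mem_singleton] at ha
    rcases ha with rfl | rfl <;> simp [hV]
  have hne : V ≠ V⁻¹ := fun h => hvv (congrArg Subtype.val h)
  have heq := Finset.eq_of_subset_of_card_le hsub (by
    rw [hc, Finset.card_pair hne]; decide)
  have hmem : V' ∈ ({V, V⁻¹} : Finset (Subgroup.zpowers g)) := by rw [heq]; simp [hV']
  simp only [Finset.mem_insert, Finset.mem_singleton] at hmem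
  rcases hmem with h | h
  · left; exact congrArg Subtype.val h
  · right; exact congrArg Subtype.val h

theorem orderOf_conj' {G : Type*} [Group G] (h v : G) : orderOf (h * v * h⁻¹) = orderOf v :=
  (SemiconjBy.orderOf_eq h (show h * v = h * v * h⁻¹ * h by group)).symm

section isom
variable {G : Type*} [Group G] [Fintype G] (W : Wed G) (v w : G)

noncomputable def cL {G : Type*} [Group G] (v : G) : ℂ := (Nat.card (Subgroup.centralizer ({v} : Set G)) : ℂ)

theorem cL_ne {G : Type*} [Group G] [Finite G] (v : G) : cL v ≠ 0 := by
  unfold cL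
  exact_mod_cast Nat.card_pos.ne'

noncomputable def hat (φ : G → ℂ) (i : Fin W.n) : ℂ := (cL v)⁻¹ * ∑ g, φ g⁻¹ * W.chi i (sg g)

theorem hat_frob (φ : G → ℂ) (y : G) : ∑ i, hat W v φ i * W.chi i (sg y) = (cL v)⁻¹ * ∑ h, φ (h * y * h⁻¹) := by
  classical
  simp only [hat, mul_assoc, Finset.sum_mul]
  rw [← Finset.mul_sum, Finset.sum_comm]
  simp only [← Finset.mul_sum, W.col_orth, Finset.card_filter]
  push_cast
  simp only [Finset.mul_sum]
  rw [Finset.sum_comm]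
  apply Finset.sum_congr rfl
  intro h _
  rw [Finset.sum_eq_single (h * y⁻¹ * h⁻¹)]
  · simp [mul_assoc]
  · intro b _ hb
    rw [if_neg, mul_zero, mul_zero]
    intro h1
    apply hb
    rw [← h1]; group
  · simp

theorem hat_isom (hv : orderOf v = 4) (hw : w * v * w⁻¹ = v⁻¹) (φ ψ : G → ℂ)
    (hφ : ∀ g, φ g ≠ 0 → v ∈ Subgroup.zpowers g) (hψ : ∀ g, ψ g ≠ 0 → v ∈ Subgroup.zpowers g)
    (hφL : ∀ l, l * v = v * l → ∀ g, φ (l * g * l⁻¹) = φ g) :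
    ∑ i, hat W v φ i * hat W v ψ i = (cL v)⁻¹ * ∑ y, ψ y⁻¹ * (φ y + φ (w * y * w⁻¹)) := by
  classical
  have hvv : v⁻¹ ≠ v := by
    intro h
    have : v ^ 2 = 1 := by rw [pow_two]; nth_rw 1 [← h]; simp
    have := orderOf_le_of_pow_eq_one (by norm_num) this
    omega
  have e1 : ∀ i, hat W v φ i * hat W v ψ i = (cL v)⁻¹ * ∑ y, ψ y⁻¹ * (hat W v φ i * W.chi i (sg y)) := by
    intro i
    conv_lhs => rw [hat.eq_1 (φ := ψ)]
    rw [mul_left_comm, Finset.mul_sum]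
    congr 1
    exact Finset.sum_congr rfl fun _ _ => by ring
  simp only [e1]
  rw [← Finset.mul_sum, Finset.sum_comm]
  simp only [← Finset.mul_sum, hat_frob]
  congr 1
  apply Finset.sum_congr rfl
  intro y _
  by_cases hy : ψ y⁻¹ = 0
  · simp [hy]
  congr 1
  have hvy : v ∈ Subgroup.zpowers y := by simpa using hψ _ hy
  rw [inv_mul_eq_iff_eq_mul₀ (cL_ne v)]
  have e2 : ∀ h : G, φ (h * y * h⁻¹) = (if h * v = v * h then φ y else 0) +
      (if (h * w⁻¹) * v = v * (h * w⁻¹) then φ (w * y * w⁻¹) else 0) := by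
    intro h
    have hwv : w⁻¹ * v = v⁻¹ * w⁻¹ := by
      calc w⁻¹ * v = w⁻¹ * (v⁻¹)⁻¹ := by group
        _ = w⁻¹ * (w * v * w⁻¹)⁻¹ := by rw [hw]
        _ = v⁻¹ * w⁻¹ := by group
    by_cases h1 : h * v = v * h
    · have h2 : ¬ ((h * w⁻¹) * v = v * (h * w⁻¹)) := by
        intro h2
        rw [mul_assoc, hwv, ← mul_assoc, ← mul_assoc] at h2
        have h3 := mul_right_cancel h2
        rw [← h1] at h3
        exact hvv (mul_left_cancel h3)
      rw [if_pos h1, if_neg h2, hφL h h1, add_zero]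
    · rw [if_neg h1, zero_add]
      split_ifs with h2
      · rw [← hφL _ h2 (w * y * w⁻¹)]
        congr 1; simp [mul_assoc]
      · by_contra h3
        have h4 := hφ _ h3
        have h5 : h * v * h⁻¹ ∈ Subgroup.zpowers (h * y * h⁻¹) := by
          obtain ⟨k, rfl⟩ := hvy
          exact ⟨k, by simp⟩
        rcases uniq4 _ _ _ h4 h5 hv (by rw [← hv]; exact orderOf_conj' h v) with h6 | h6
        · apply h1
          conv_rhs => rw [← h6]
          group
        · apply h2
          rw [mul_assoc, hwv, ← mul_assoc, ← mul_assoc]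
          congr 1
          have h7 : h * v⁻¹ * h⁻¹ = v := by
            calc h * v⁻¹ * h⁻¹ = (h * v * h⁻¹)⁻¹ := by group
              _ = v := by rw [h6, inv_inv]
          conv_rhs => rw [← h7]
          group
  rw [Finset.sum_congr rfl (fun h _ => e2 h), Finset.sum_add_distrib]
  have c1 : ∀ c : ℂ, ∑ h : G, (if h * v = v * h then c else 0) = cL v * c := by
    intro c
    rw [← Finset.sum_filter, Finset.sum_const, nsmul_eq_mul]
    congr 1
    unfold cL
    rw [Nat.card_eq_fintype_card, Fintype.card_subtype]
    congr 2
    ext h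
    simp only [Finset.mem_filter, Finset.mem_univ, true_and, Subgroup.mem_centralizer_singleton_iff]
  have c2 : ∀ c : ℂ, ∑ h : G, (if (h * w⁻¹) * v = v * (h * w⁻¹) then c else 0) = cL v * c := by
    intro c
    rw [← c1 c]
    exact Equiv.sum_comp (Equiv.mulRight w⁻¹) (fun h => if h * v = v * h then c else 0)
  rw [c1, c2, mul_add]

end isom


theorem nt_final (b1 b2 f1 f2 : ℕ) (q1 q2 : ℤ) (hb1 : 0 < b1) (e1 : Even b1) (e2 : Even b2)
    (h1 : (f1 : ℤ) - b1 - 4 * q1 = -1) (h2 : (f2 : ℤ) - b2 - 4 * q2 = -1)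
    (h : ((b2 : ℤ) * f1 - b1 * f2)^2 = b1^2 * f2 + b2^2 * f1) : False := by
  have hg : Nat.gcd b1 b2 ≠ 0 := (Nat.gcd_pos_of_pos_left _ hb1).ne'
  obtain ⟨v, m, hm, hgm⟩ := Nat.exists_eq_pow_mul_and_not_dvd hg 2 (by norm_num)
  have hv : v ≠ 0 := by
    rintro rfl
    have : 2 ∣ Nat.gcd b1 b2 := Nat.dvd_gcd e1.two_dvd e2.two_dvd
    rw [hgm] at this
    exact hm (by simpa using this)
  obtain ⟨s, rfl⟩ := Nat.exists_eq_succ_of_ne_zero hv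
  obtain ⟨β1, hβ1⟩ : 2^(s+1) ∣ b1 := (Dvd.intro _ hgm.symm).trans (Nat.gcd_dvd_left _ _)
  obtain ⟨β2, hβ2⟩ : 2^(s+1) ∣ b2 := (Dvd.intro _ hgm.symm).trans (Nat.gcd_dvd_right _ _)
  have hnot : ¬ (2 ∣ β1 ∧ 2 ∣ β2) := by
    rintro ⟨⟨a, rfl⟩, ⟨b, rfl⟩⟩
    have : 2^(s+1) * 2 ∣ Nat.gcd b1 b2 := Nat.dvd_gcd ⟨a, by rw [hβ1]; ring⟩ ⟨b, by rw [hβ2]; ring⟩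
    rw [hgm] at this
    exact hm (Nat.dvd_of_mul_dvd_mul_left (by positivity) this)
  have heq : ((β2 : ℤ) * f1 - β1 * f2)^2 = β1^2 * f2 + β2^2 * f1 := by
    have hp : ((2:ℤ)^(s+1))^2 ≠ 0 := by positivity
    apply mul_left_cancel₀ hp
    rw [hβ1, hβ2] at h
    push_cast at h
    linear_combination h
  have z1 : (f1 : ZMod 4) = 2 * (2^s * β1) + 3 := by
    have : (f1 : ℤ) = 2 * (2 ^ s * β1) + 4 * q1 - 1 := by rw [hβ1] at h1; push_cast at h1; linear_combination h1
    have := congrArg (Int.cast : ℤ → ZMod 4) this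
    push_cast at this
    rw [this, show (4 : ZMod 4) = 0 from rfl, show (3 : ZMod 4) = -1 from rfl]; ring
  have z2 : (f2 : ZMod 4) = 2 * (2^s * β2) + 3 := by
    have : (f2 : ℤ) = 2 * (2 ^ s * β2) + 4 * q2 - 1 := by rw [hβ2] at h2; push_cast at h2; linear_combination h2
    have := congrArg (Int.cast : ℤ → ZMod 4) this
    push_cast at this
    rw [this, show (4 : ZMod 4) = 0 from rfl, show (3 : ZMod 4) = -1 from rfl]; ring
  have z3 := congrArg (Int.cast : ℤ → ZMod 4) heq
  push_cast at z3
  rw [z1, z2] at z3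
  have z4 : ¬ (2 * (β1 : ZMod 4) = 0 ∧ 2 * (β2 : ZMod 4) = 0) := by
    rintro ⟨ha, hb⟩
    apply hnot
    have key : ∀ n : ℕ, 2 * (n : ZMod 4) = 0 → 2 ∣ n := by
      intro n hn
      have : ((2 * n : ℕ) : ZMod 4) = 0 := by push_cast; exact hn
      rw [ZMod.natCast_eq_zero_iff] at this
      omega
    exact ⟨key _ ha, key _ hb⟩
  have key : ∀ a b s : ZMod 4, ¬ (2 * a = 0 ∧ 2 * b = 0) →
    (b * (2 * (s * a) + 3) - a * (2 * (s * b) + 3))^2 = a^2 * (2 * (s * b) + 3) + b^2 * (2 * (s * a) + 3) → False := by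
    decide
  exact key _ _ _ z4 z3

theorem ar_core {ι : Type*} [Fintype ι] [DecidableEq ι] (c : ι → ℤ) (f b : ι → ℕ) (i0 : ι) (N : ℕ) (hN : N ≤ 3)
    (hc0 : c i0 = 1) (hs : ∑ i, (c i)^2 = N + 1) :
    ∃ S : Finset ι, i0 ∉ S ∧ S.card = N ∧ (∀ i ∈ S, c i = 1 ∨ c i = -1) ∧ (∀ i, i ≠ i0 → i ∉ S → c i = 0) ∧
      ∀ F : ι → ℚ, ∑ i, (c i : ℚ) * F i = F i0 + ∑ i ∈ S, (c i : ℚ) * F i := by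
  let S := (Finset.univ.erase i0).filter (fun i => c i ≠ 0)
  have h1 : ∑ i ∈ S, (c i)^2 = N := by
    have e1 := Finset.add_sum_erase Finset.univ (fun i => (c i)^2) (Finset.mem_univ i0)
    have e2 : ∑ i ∈ S, (c i)^2 = ∑ i ∈ Finset.univ.erase i0, (c i)^2 := by
      apply Finset.sum_filter_of_ne
      intro i _ h h'
      simp [h'] at h
    rw [e2]
    simp only [hs, hc0] at e1
    linarith
  have h2 : ∀ i ∈ S, c i = 1 ∨ c i = -1 := by
    intro i hi
    have h3 : (c i)^2 ≤ N := by
      rw [← h1]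
      exact Finset.single_le_sum (f := fun i => (c i)^2) (fun _ _ => sq_nonneg _) hi
    have h4 : c i ≠ 0 := (Finset.mem_filter.1 hi).2
    have h5 : (N : ℤ) ≤ 3 := by exact_mod_cast hN
    have : c i ≤ 1 := by nlinarith
    have : -1 ≤ c i := by nlinarith
    omega
  refine ⟨S, by simp [S], ?_, h2, ?_, ?_⟩
  · have : ∑ i ∈ S, (c i)^2 = ∑ i ∈ S, 1 := Finset.sum_congr rfl (fun i hi => by rcases h2 i hi with h | h <;> simp [h])
    rw [this] at h1
    simpa using h1
  · intro i hi hS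
    by_contra h
    exact hS (by simp [S, hi, h])
  · intro F
    rw [← Finset.add_sum_erase Finset.univ _ (Finset.mem_univ i0), hc0]
    congr 1
    · simp
    · symm
      apply Finset.sum_filter_of_ne
      intro i _ h h'
      simp [h'] at h

theorem ar3 {ι : Type*} [Fintype ι] [DecidableEq ι] (c : ι → ℤ) (f b : ι → ℕ) (i0 : ι)
    (hc0 : c i0 = 1) (hs : ∑ i, (c i)^2 = 3) (hf : ∀ i, 0 < f i) (hf0 : f i0 = 1) (hb0 : b i0 = 0)
    (hb : ∀ i, b i = 0 → i = i0)
    (h1 : ∑ i, (c i : ℚ) * f i = 0) (h2 : ∑ i, (c i : ℚ) * b i = 0) (h3 : ∑ i, (c i : ℚ) * (b i ^ 2 / f i) = 0) : False := by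
  obtain ⟨S, hS0, hSc, hS1, hS2, hS3⟩ := ar_core c f b i0 2 (by norm_num) hc0 (by rw [hs]; norm_num)
  rw [hS3] at h1 h2 h3
  obtain ⟨i, j, hij, rfl⟩ := Finset.card_eq_two.1 hSc
  simp only [Finset.sum_pair hij, hf0, hb0] at h1 h2 h3
  have hfi : (0:ℚ) < f i := by exact_mod_cast hf i
  have hfj : (0:ℚ) < f j := by exact_mod_cast hf j
  have hbi : (0:ℚ) < b i := by
    have : b i ≠ 0 := fun h => hS0 (by simp [hb i h])
    exact_mod_cast Nat.pos_of_ne_zero this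
  have hbj : (0:ℚ) < b j := by
    have : b j ≠ 0 := fun h => hS0 (by simp [hb j h])
    exact_mod_cast Nat.pos_of_ne_zero this
  have aux : ∀ F G B C : ℚ, 0 < F → 0 < G → 0 < B → G = 1 + F → C = B → B^2/F = C^2/G → False := by
    intro F G B C hF hG hB h1 h2 h3
    subst h2
    rw [div_eq_div_iff hF.ne' hG.ne'] at h3
    have : G = F := mul_left_cancel₀ (by positivity) h3
    linarith
  rcases hS1 i (by simp) with hi | hi <;> rcases hS1 j (by simp) with hj | hj <;>
    simp only [hi, hj] at h1 h2 h3 <;> norm_num at h1 h2 h3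
  · linarith
  · exact aux (f i) (f j) (b i) (b j) hfi hfj hbi (by linarith) (by linarith) (by linarith)
  · exact aux (f j) (f i) (b j) (b i) hfj hfi hbj (by linarith) (by linarith) (by linarith)
  · linarith

theorem ar4 {ι : Type*} [Fintype ι] [DecidableEq ι] (c : ι → ℤ) (f b : ι → ℕ) (i0 : ι)
    (hc0 : c i0 = 1) (hs : ∑ i, (c i)^2 = 4) (hf : ∀ i, 0 < f i) (hf0 : f i0 = 1) (hb0 : b i0 = 0)
    (hb : ∀ i, b i = 0 → i = i0)
    (h1 : ∑ i, (c i : ℚ) * f i = 0) (h2 : ∑ i, (c i : ℚ) * b i = 0) (h3 : ∑ i, (c i : ℚ) * (b i ^ 2 / f i) = 0) :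
    ∃ i j k, i ≠ j ∧ i ≠ k ∧ j ≠ k ∧ i ≠ i0 ∧ j ≠ i0 ∧ k ≠ i0 ∧ c i = -1 ∧ c j = -1 ∧ c k = 1 ∧
      (∀ l, l ≠ i0 → l ≠ i → l ≠ j → l ≠ k → c l = 0) ∧
      ((b j : ℤ) * f i - b i * f j)^2 = b i^2 * f j + b j^2 * f i := by
  obtain ⟨S, hS0, hSc, hS1, hS2, hS3⟩ := ar_core c f b i0 3 (by norm_num) hc0 (by rw [hs]; norm_num)
  rw [hS3] at h1 h2 h3
  obtain ⟨i, j, k, hij, hik, hjk, rfl⟩ := Finset.card_eq_three.1 hSc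
  have hfi : (0:ℚ) < f i := by exact_mod_cast hf i
  have hfj : (0:ℚ) < f j := by exact_mod_cast hf j
  have hfk : (0:ℚ) < f k := by exact_mod_cast hf k
  have hbi : (0:ℚ) < b i := by
    have : b i ≠ 0 := fun h => hS0 (by simp [hb i h])
    exact_mod_cast Nat.pos_of_ne_zero this
  have hbj : (0:ℚ) < b j := by
    have : b j ≠ 0 := fun h => hS0 (by simp [hb j h])
    exact_mod_cast Nat.pos_of_ne_zero this
  have hbk : (0:ℚ) < b k := by
    have : b k ≠ 0 := fun h => hS0 (by simp [hb k h])
    exact_mod_cast Nat.pos_of_ne_zero this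
  have hsum : ∀ F : ι → ℚ, ∑ x ∈ {i, j, k}, F x = F i + F j + F k := by
    intro F
    rw [Finset.sum_insert (by simp [hij, hik]), Finset.sum_pair hjk, add_assoc]
  simp only [hsum, hf0, hb0] at h1 h2 h3
  simp only [Finset.mem_insert, Finset.mem_singleton, not_or] at hS0 hS2
  obtain ⟨n1, n2, n3⟩ := hS0
  -- two plus, one minus
  have auxA : ∀ f1 f2 f3 b1 b2 b3 : ℚ, 0 < f1 → 0 < f2 → 0 < f3 → 0 < b1 → f3 = 1 + f1 + f2 → b3 = b1 + b2 →
      b1^2/f1 + b2^2/f2 = b3^2/f3 → False := by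
    intro f1 f2 f3 b1 b2 b3 p1 p2 p3 q1 e1 e2 e3
    rw [div_add_div _ _ p1.ne' p2.ne', div_eq_div_iff (by positivity) p3.ne', e1, e2] at e3
    have : (b2 * f1 - b1 * f2)^2 + b1^2 * f2 + b2^2*f1 = 0 := by linear_combination e3
    have : 0 < b1^2 * f2 := by positivity
    nlinarith [sq_nonneg (b2 * f1 - b1 * f2), mul_nonneg (sq_nonneg b2) p1.le]
  have auxB : ∀ f1 f2 f3 b1 b2 b3 : ℚ, 0 < f1 → 0 < f2 → 0 < f3 → f3 + 1 = f1 + f2 → b3 = b1 + b2 →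
      b1^2/f1 + b2^2/f2 = b3^2/f3 → (b2 * f1 - b1 * f2)^2 = b1^2 * f2 + b2^2*f1 := by
    intro f1 f2 f3 b1 b2 b3 p1 p2 p3 e1 e2 e3
    have e1' : f3 = f1 + f2 - 1 := by linarith
    rw [div_add_div _ _ p1.ne' p2.ne', div_eq_div_iff (by positivity) p3.ne', e1', e2] at e3
    linear_combination e3
  rcases hS1 i (by simp) with hi | hi <;> rcases hS1 j (by simp) with hj | hj <;> rcases hS1 k (by simp) with hk | hk <;>
    simp only [hi, hj, hk] at h1 h2 h3 <;> norm_num at h1 h2 h3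
  · linarith
  · exact (auxA (f i) (f j) (f k) (b i) (b j) (b k) hfi hfj hfk hbi (by linarith) (by linarith) (by linarith)).elim
  · exact (auxA (f i) (f k) (f j) (b i) (b k) (b j) hfi hfk hfj hbi (by linarith) (by linarith) (by linarith)).elim
  · have := auxB (f j) (f k) (f i) (b j) (b k) (b i) hfj hfk hfi (by linarith) (by linarith) (by linarith)
    exact ⟨j, k, i, hjk, hij.symm, hik.symm, Ne.symm n2, Ne.symm n3, Ne.symm n1, hj, hk, hi, fun l a1 a2 a3 a4 => hS2 l a1 ⟨a4, a2, a3⟩, by exact_mod_cast this⟩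
  · exact (auxA (f j) (f k) (f i) (b j) (b k) (b i) hfj hfk hfi hbj (by linarith) (by linarith) (by linarith)).elim
  · have := auxB (f i) (f k) (f j) (b i) (b k) (b j) hfi hfk hfj (by linarith) (by linarith) (by linarith)
    exact ⟨i, k, j, hik, hij, hjk.symm, Ne.symm n1, Ne.symm n3, Ne.symm n2, hi, hk, hj, fun l a1 a2 a3 a4 => hS2 l a1 ⟨a2, a4, a3⟩, by exact_mod_cast this⟩
  · have := auxB (f i) (f j) (f k) (b i) (b j) (b k) hfi hfj hfk (by linarith) (by linarith) (by linarith)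
    exact ⟨i, j, k, hij, hik, hjk, Ne.symm n1, Ne.symm n2, Ne.symm n3, hi, hj, hk, fun l a1 a2 a3 a4 => hS2 l a1 ⟨a2, a3, a4⟩, by exact_mod_cast this⟩
  · have : (0:ℚ) < 0 := by
      linarith
    exact absurd this (lt_irrefl _)


structure Quat {G : Type*} [Group G] (K : Finset G) (x v w : G) (p : ℕ) : Prop where
  conj : ∀ u ∈ K, ∀ g, g⁻¹ * u * g ∈ K
  cls : ∀ u ∈ K, ∃ g, u = g⁻¹ * x * g
  xK : x ∈ K
  gen : Subgroup.closure (K : Set G) = ⊤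
  podd : Odd p
  pw : ∀ u ∈ K, ∀ v ∈ K, (u * v)^p = 1
  v4 : orderOf v = 4
  vx : v * v = x
  hw : w * v * w⁻¹ = v⁻¹

namespace Quat
variable {G : Type*} [Group G] [Fintype G] {K : Finset G} {x v w : G} {p : ℕ} (Q : Quat K x v w p) (W : Wed G)
include Q

theorem vpow4 : v ^ 4 = 1 := by rw [← Q.v4]; exact pow_orderOf_eq_one v

theorem xx : x * x = 1 := by
  rw [← Q.vx]
  have := Q.vpow4
  rw [← this]; simp [pow_succ, mul_assoc]

theorem hom_triv {M : Type*} [Monoid M] (f : G →* M) (h : f x = 1) (g : G) : f g = 1 := by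
  have : (⊤ : Subgroup G) ≤ f.ker := by
    rw [← Q.gen, Subgroup.closure_le]
    intro u hu
    obtain ⟨g, rfl⟩ := Q.cls u hu
    rw [SetLike.mem_coe, MonoidHom.mem_ker, map_mul, map_mul, h, mul_one, ← map_mul]
    simp
  exact this (Subgroup.mem_top g)

theorem exists_b (i) : ∃ b : ℕ, W.chi i (sg x) = W.d i - 2 * b ∧ (b = 0 → ∀ g, W.chi i (sg g) = W.d i) ∧
    (W.rho i (sg x)).det = (-1)^b := by
  have hxx : sg x * sg x = 1 := by rw [sg_mul, Q.xx, sg_one]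
  obtain ⟨b, h1, h2, h3⟩ := W.chi_idem i ((1/2 : ℂ) • (1 - sg x)) (by
    simp only [smul_mul_smul_comm, mul_sub, sub_mul, one_mul, mul_one, hxx]
    module)
  refine ⟨b, ?_, ?_, ?_⟩
  · rw [map_smul, map_sub, W.chi_one, smul_eq_mul] at h1
    linear_combination -2 * h1
  · intro hb g
    have h4 := h2 hb
    have h5 : W.rho i (sg x) = 1 := by
      rw [map_smul, map_sub, map_one] at h4
      have := (smul_eq_zero.1 h4).resolve_left (by norm_num)
      exact (sub_eq_zero.1 this).symm
    have := Q.hom_triv ((W.rho i).toRingHom.toMonoidHom.comp (MonoidAlgebra.of ℂ G)) h5 g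
    rw [W.chi_apply]
    have h6 : W.rho i (sg g) = 1 := this
    rw [h6]; simp
  · have := h3 (-2)
    rw [smul_smul] at this
    norm_num at this
    exact this

theorem supp1 (φ : G → ℂ) (hφ : ∀ g, φ g ≠ 0 → v ∈ Subgroup.zpowers g) (g : G) (n : ℕ) (hg : g ^ n = 1)
    (hn : ¬ (4 ∣ n)) : φ g = 0 := by
  by_contra h
  have h1 := hφ g h
  apply hn
  rw [← Q.v4]
  apply orderOf_dvd_of_pow_eq_one
  obtain ⟨k, rfl⟩ := h1
  show (g ^ k)^n = 1
  rw [← zpow_natCast, ← zpow_mul, mul_comm, zpow_mul, zpow_natCast, hg, one_zpow]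

theorem orth0 (φ : G → ℂ) (hφ : ∀ g, φ g ≠ 0 → v ∈ Subgroup.zpowers g) (g : G) (n : ℕ) (hg : g ^ n = 1)
    (hn : ¬ (4 ∣ n)) : ∑ i, hat W v φ i * W.chi i (sg g) = 0 := by
  rw [hat_frob, Finset.sum_eq_zero, mul_zero]
  intro h _
  apply Q.supp1 φ hφ _ n _ hn
  rw [conj_pow, hg]; simp

theorem orth (φ : G → ℂ) (hφ : ∀ g, φ g ≠ 0 → v ∈ Subgroup.zpowers g) (b : Fin W.n → ℕ)
    (hb : ∀ i, W.chi i (sg x) = W.d i - 2 * b i) :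
    ∑ i, hat W v φ i * W.d i = 0 ∧ ∑ i, hat W v φ i * b i = 0 ∧ ∑ i, hat W v φ i * (b i ^ 2 / W.d i) = 0 := by
  have h1 : ∑ i, hat W v φ i * W.d i = 0 := by
    have := Q.orth0 W φ hφ 1 1 (by simp) (by norm_num)
    simpa only [sg_one, W.chi_one] using this
  have h2 : ∑ i, hat W v φ i * b i = 0 := by
    have := Q.orth0 W φ hφ x 2 (by rw [pow_two, Q.xx]) (by norm_num)
    simp only [hb, mul_sub, Finset.sum_sub_distrib, h1] at this
    have e : ∑ i, hat W v φ i * (2 * (b i : ℂ)) = 2 * ∑ i, hat W v φ i * b i := by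
      rw [Finset.mul_sum]; exact Finset.sum_congr rfl fun _ _ => by ring
    rw [e] at this
    linear_combination (-1/2) * this
  refine ⟨h1, h2, ?_⟩
  have hk : (K.card : ℂ) ≠ 0 := by
    have := Finset.card_pos.2 ⟨x, Q.xK⟩
    exact_mod_cast this.ne'
  have h3 : ∀ i, (K.card : ℂ)^2 * (W.d i - 4 * b i + 4 * (b i ^ 2 / W.d i)) = ∑ u ∈ K, ∑ v ∈ K, W.chi i (sg (u * v)) := by
    intro i
    have hd : (W.d i : ℂ) ≠ 0 := by exact_mod_cast (W.d_pos i).ne'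
    have := W.schur K x Q.conj Q.cls i
    rw [hb i] at this
    apply mul_left_cancel₀ hd
    rw [this]
    field_simp
    ring
  have h4 : ∑ i, hat W v φ i * ((K.card : ℂ)^2 * (W.d i - 4 * b i + 4 * (b i ^ 2 / W.d i))) = 0 := by
    simp only [h3, Finset.mul_sum]
    rw [Finset.sum_comm]
    apply Finset.sum_eq_zero
    intro u hu
    rw [Finset.sum_comm]
    apply Finset.sum_eq_zero
    intro u' hu'
    apply Q.orth0 W φ hφ _ p (Q.pw u hu u' hu')
    intro h
    have := Q.podd
    rw [Nat.odd_iff] at this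
    omega
  have h5 : ∑ i, hat W v φ i * ((K.card : ℂ)^2 * (W.d i - 4 * b i + 4 * (b i ^ 2 / W.d i))) =
    (K.card : ℂ)^2 * (∑ i, hat W v φ i * W.d i - 4 * ∑ i, hat W v φ i * b i + 4 * ∑ i, hat W v φ i * (b i ^ 2 / W.d i)) := by
    simp only [Finset.mul_sum, ← Finset.sum_sub_distrib, ← Finset.sum_add_distrib]
    exact Finset.sum_congr rfl fun _ _ => by ring
  rw [h5, h1, h2] at h4
  have := (mul_eq_zero.1 h4).resolve_left (pow_ne_zero 2 hk)
  linear_combination (1/4) * this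

theorem chi_conj (i) (g h : G) : W.chi i (sg (h * g * h⁻¹)) = W.chi i (sg g) := by
  rw [← sg_mul, W.chi_comm, sg_mul]; simp [mul_assoc]

theorem mod4 (i) (b : ℕ) (hb : W.chi i (sg x) = W.d i - 2 * b) (hdet : (W.rho i (sg x)).det = (-1)^b) :
    Even b ∧ ∃ q : ℤ, W.chi i (sg v) = W.d i - b - 4 * q := by
  have hv3 : v * v * v = v⁻¹ := by
    rw [eq_inv_iff_mul_eq_one, ← Q.vpow4]; simp [pow_succ, mul_assoc]
  set V := sg v with hV
  set X := sg x with hX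
  set U := sg v⁻¹ with hU
  have m1 : V * V = X := by rw [hV, sg_mul, Q.vx]
  have m2 : X * X = 1 := by rw [hX, sg_mul, Q.xx, sg_one]
  have m3 : V * X = U := by rw [hV, sg_mul, ← Q.vx, ← mul_assoc, hv3]
  have m4 : X * V = U := by rw [hV, sg_mul, ← Q.vx, hv3]
  have m5 : V * U = 1 := by rw [hV, hU, sg_mul]; simp [sg_one]
  have m6 : U * V = 1 := by rw [hV, hU, sg_mul]; simp [sg_one]
  have m7 : X * U = V := by rw [← m3, ← mul_assoc, m4, ← m3, mul_assoc, m2, mul_one]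
  have m8 : U * X = V := by rw [← m3, mul_assoc, m2, mul_one]
  have m9 : U * U = X := by
    calc U * U = U * (V * X) := by rw [m3]
      _ = X := by rw [← mul_assoc, m6, one_mul]
  have hz : ∀ a : ℂ, a^4 = 1 → ((1/4 : ℂ) • (1 + a • V + a^2 • X + a^3 • U)) * ((1/4 : ℂ) • (1 + a • V + a^2 • X + a^3 • U)) =
      ((1/4 : ℂ) • (1 + a • V + a^2 • X + a^3 • U)) := by
    intro a ha
    have ha5 : a^5 = a := by rw [pow_succ, ha, one_mul]
    have ha6 : a^6 = a^2 := by rw [show 6 = 4 + 2 from rfl, pow_add, ha, one_mul]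
    simp only [smul_mul_smul_comm, mul_add, add_mul, one_mul, mul_one, m1, m2, m3, m4, m5, m6, m7, m8, m9]
    match_scalars <;> ring_nf <;> simp only [ha, ha5, ha6] <;> ring
  have hI3 : Complex.I ^ 3 = - Complex.I := by rw [pow_succ, Complex.I_sq]; ring
  obtain ⟨M0, h0, -, -⟩ := W.chi_idem i _ (hz 1 (by norm_num))
  obtain ⟨M1, h1, -, d1⟩ := W.chi_idem i _ (hz (-Complex.I) (by rw [neg_pow]; norm_num))
  obtain ⟨M2, h2, -, d2⟩ := W.chi_idem i _ (hz (-1) (by norm_num))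
  obtain ⟨M3, h3, -, d3⟩ := W.chi_idem i _ (hz (Complex.I) (by norm_num))
  have hUV : W.chi i U = W.chi i V := by
    rw [hU, ← Q.hw]; exact Q.chi_conj W i v w
  have hnI2 : (-Complex.I) ^ 2 = -1 := by rw [neg_sq, Complex.I_sq]
  have hnI3 : (-Complex.I) ^ 3 = Complex.I := by rw [pow_succ, hnI2]; ring
  simp only [map_smul, map_add, W.chi_one, hUV, smul_eq_mul, hnI2, hnI3, hI3, Complex.I_sq, hb] at h0 h1 h2 h3
  norm_num at h0 h1 h2 h3
  have hM13 : M1 = M3 := by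
    have : (M1 : ℂ) = M3 := by linear_combination h3 - h1
    exact_mod_cast this
  have hbM : b = 2 * M1 := by
    have : (b : ℂ) = 2 * M1 := by linear_combination (2 : ℂ) * h1
    exact_mod_cast this
  have hfac : V = (1 + (-2 : ℂ) • ((1/4 : ℂ) • (1 + (-1:ℂ) • V + (-1:ℂ)^2 • X + (-1:ℂ)^3 • U))) *
      ((1 + (Complex.I - 1) • ((1/4 : ℂ) • (1 + (-Complex.I) • V + (-Complex.I)^2 • X + (-Complex.I)^3 • U))) *
      (1 + (-Complex.I - 1) • ((1/4 : ℂ) • (1 + Complex.I • V + Complex.I^2 • X + Complex.I^3 • U)))) := by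
    simp only [smul_mul_smul_comm, mul_add, add_mul, one_mul, mul_one, m1, m2, m3, m4, m5, m6, m7, m8, m9,
      smul_add, smul_smul, mul_smul_comm, smul_mul_assoc]
    have hI4 : Complex.I ^ 4 = 1 := by norm_num
    have hI5 : Complex.I ^ 5 = Complex.I := by rw [pow_succ, hI4, one_mul]
    have hI6 : Complex.I ^ 6 = -1 := by rw [pow_succ, hI5]; norm_num
    have hI7 : Complex.I ^ 7 = -Complex.I := by rw [pow_succ, hI6]; norm_num
    have hI8 : Complex.I ^ 8 = 1 := by rw [pow_succ, hI7]; norm_num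
    match_scalars <;> ring_nf <;> simp only [Complex.I_sq, hI3, hI4, hI5, hI6, hI7, hI8] <;> ring
  have hdetx : (W.rho i X).det = 1 := by rw [hdet, hbM]; simp
  have hdetv : (W.rho i V).det = 1 := by
    exact Q.hom_triv ((Matrix.detMonoidHom).comp ((W.rho i).toRingHom.toMonoidHom.comp (MonoidAlgebra.of ℂ G))) hdetx v
  rw [hfac, map_mul, map_mul, Matrix.det_mul, Matrix.det_mul, d1, d2, d3, ← hM13, ← mul_pow] at hdetv
  have e1 : (1 + (Complex.I - 1)) * (1 + (-Complex.I - 1)) = 1 := by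
    linear_combination - Complex.I_sq
  rw [e1] at hdetv
  norm_num at hdetv
  have hM2 : Even M2 := by
    rwa [neg_one_pow_eq_one_iff_even] at hdetv
    norm_num
  obtain ⟨q, rfl⟩ := hM2
  refine ⟨⟨M1, by omega⟩, q, ?_⟩
  push_cast at h2
  push_cast
  linear_combination (-2) * h2

theorem exists_data : ∃ (b : Fin W.n → ℕ) (i0 : Fin W.n), (∀ i, W.chi i (sg x) = W.d i - 2 * b i) ∧
    (∀ i, Even (b i) ∧ ∃ q : ℤ, W.chi i (sg v) = W.d i - b i - 4 * q) ∧
    (∀ g, W.chi i0 (sg g) = 1) ∧ W.d i0 = 1 ∧ b i0 = 0 ∧ ∀ i, b i = 0 → i = i0 := by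
  choose b hb using Q.exists_b W
  obtain ⟨i0, h0⟩ := W.exists_triv
  have hd0 : W.d i0 = 1 := by
    have := h0 1
    rw [sg_one, W.chi_one] at this
    exact_mod_cast this
  refine ⟨b, i0, fun i => (hb i).1, fun i => Q.mod4 W i (b i) (hb i).1 (hb i).2.2, h0, hd0, ?_, ?_⟩
  · have := (hb i0).1
    rw [h0, hd0] at this
    have h2 : (b i0 : ℂ) = 0 := by push_cast at this; linear_combination (1/2) * this
    exact_mod_cast h2
  · intro i hi
    by_contra hne
    have h1 := (hb i).2.1 hi
    have h2 := W.row_orth i i0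
    rw [if_neg hne] at h2
    simp only [h1, h0, mul_one, Finset.sum_const, Finset.card_univ, nsmul_eq_mul] at h2
    have hc : (Fintype.card G : ℂ) ≠ 0 := by exact_mod_cast Fintype.card_ne_zero
    have hd : (W.d i : ℂ) ≠ 0 := by exact_mod_cast (W.d_pos i).ne'
    exact mul_ne_zero hc hd h2

end Quat


open Classical in
theorem sum_dite_mem {G : Type*} [Group G] [Fintype G] (L : Subgroup G) (F : L → ℂ) :
    ∑ g : G, (if h : g ∈ L then F ⟨g, h⟩ else 0) = ∑ l : L, F l := by
  have h1 : ∑ g : G, (if h : g ∈ L then F ⟨g, h⟩ else 0) = ∑ g ∈ Finset.univ.filter (fun g => g ∈ L), (if h : g ∈ L then F ⟨g, h⟩ else 0) := by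
    rw [Finset.sum_filter_of_ne]
    intro g _ h
    by_contra h'
    simp [h'] at h
  rw [h1, Finset.sum_subtype (p := fun g => g ∈ L) _ (by simp)]
  apply Finset.sum_congr rfl
  rintro ⟨l, hl⟩ _
  simp [hl]

theorem e_idem {G : Type*} [Group G] [Fintype G] (L : Subgroup G) [Fintype L] (μ : L →* ℂ) :
    ((Fintype.card L : ℂ)⁻¹ • ∑ l : L, μ l⁻¹ • sg (l : G)) * ((Fintype.card L : ℂ)⁻¹ • ∑ l : L, μ l⁻¹ • sg (l : G)) =
      ((Fintype.card L : ℂ)⁻¹ • ∑ l : L, μ l⁻¹ • sg (l : G)) := by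
  have hc : (Fintype.card L : ℂ) ≠ 0 := by exact_mod_cast Fintype.card_ne_zero
  rw [smul_mul_smul_comm, Finset.sum_mul_sum]
  have h1 : ∀ l : L, ∑ k : L, (μ l⁻¹ • sg (l : G)) * (μ k⁻¹ • sg (k : G)) = ∑ l : L, μ l⁻¹ • sg (l : G) := by
    intro l
    rw [← Equiv.sum_comp (Equiv.mulLeft l) (fun l : L => μ l⁻¹ • sg (l : G))]
    apply Finset.sum_congr rfl
    intro k _
    rw [smul_mul_smul_comm, sg_mul]
    simp only [Equiv.coe_mulLeft, mul_inv_rev, map_mul, Subgroup.coe_mul]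
    rw [mul_comm]
  simp only [h1, Finset.sum_const, Finset.card_univ]
  rw [← Nat.cast_smul_eq_nsmul ℂ, smul_smul]
  congr 1
  field_simp

namespace Quat
variable {G : Type*} [Group G] [Fintype G] {K : Finset G} {x v w : G} {p : ℕ} (Q : Quat K x v w p) (W : Wed G)
include Q

theorem to_rat (c : Fin W.n → ℤ) (b : Fin W.n → ℕ) (φ : G → ℂ) (hφ : ∀ g, φ g ≠ 0 → v ∈ Subgroup.zpowers g)
    (hc : ∀ i, hat W v φ i = c i) (hb : ∀ i, W.chi i (sg x) = W.d i - 2 * b i) :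
    ∑ i, (c i : ℚ) * W.d i = 0 ∧ ∑ i, (c i : ℚ) * b i = 0 ∧ ∑ i, (c i : ℚ) * (b i ^ 2 / W.d i) = 0 := by
  obtain ⟨h1, h2, h3⟩ := Q.orth W φ hφ b hb
  simp only [hc] at h1 h2 h3
  refine ⟨by exact_mod_cast h1, by exact_mod_cast h2, ?_⟩
  have h4 : ((∑ i, (c i : ℚ) * (b i ^ 2 / W.d i) : ℚ) : ℂ) = 0 := by push_cast; exact h3
  exact_mod_cast h4

theorem conj_mem (l : G) (hl : l ∈ Subgroup.centralizer ({v} : Set G)) :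
    w * l * w⁻¹ ∈ Subgroup.centralizer ({v} : Set G) := by
  rw [Subgroup.mem_centralizer_singleton_iff] at *
  have h1 : w * l * w⁻¹ * v⁻¹ = v⁻¹ * (w * l * w⁻¹) := by
    rw [← Q.hw]
    calc w * l * w⁻¹ * (w * v * w⁻¹) = w * (l * v) * w⁻¹ := by group
      _ = w * (v * l) * w⁻¹ := by rw [hl]
      _ = _ := by group
  have h2 := congrArg (fun z => v * z * v) h1
  simp only [mul_assoc, inv_mul_cancel, mul_one, mul_inv_cancel_left] at h2
  simp only [mul_assoc]
  exact h2.symm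

noncomputable def cw : Subgroup.centralizer ({v} : Set G) →* Subgroup.centralizer ({v} : Set G) where
  toFun l := ⟨w * l * w⁻¹, Q.conj_mem l l.2⟩
  map_one' := by ext; simp
  map_mul' a b := by ext; simp [mul_assoc]

theorem mem_L_of_zpowers {g : G} (h : v ∈ Subgroup.zpowers g) : g ∈ Subgroup.centralizer ({v} : Set G) := by
  rw [Subgroup.mem_centralizer_singleton_iff]
  obtain ⟨k, rfl⟩ := h
  exact (Commute.self_zpow g k).eq

theorem norm3 (μ : Subgroup.centralizer ({v} : Set G) →* ℂ)
    (hsupp : ∀ l : Subgroup.centralizer ({v} : Set G), μ l ≠ 1 → v ∈ Subgroup.zpowers (l : G))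
    (hne : ∃ l, μ (Q.cw l) ≠ μ l) : False := by
  classical
  obtain ⟨W⟩ := Wed.exists G
  obtain ⟨b, i0, hb, -, h0, hd0, hb0, hbi⟩ := Q.exists_data W
  let L : Subgroup G := Subgroup.centralizer ({v} : Set G)
  have hL : L = Subgroup.centralizer ({v} : Set G) := rfl
  have hcL : cL v = Fintype.card L := by rw [cL, Nat.card_eq_fintype_card]
  have hcne : (Fintype.card L : ℂ) ≠ 0 := by exact_mod_cast Fintype.card_ne_zero
  have hμ1 : μ ≠ 1 := by
    intro h
    obtain ⟨l, hl⟩ := hne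
    exact hl (by rw [h]; rfl)
  have hinv : ∀ l : L, μ l⁻¹ * μ l = 1 := by intro l; rw [← map_mul]; simp
  -- conjugate character
  have s1 : ∑ l : L, μ l = 0 := by
    have := sum_hom_units_eq_zero μ (by exact hμ1)
    exact this
  have s2 : ∑ l : L, μ l⁻¹ = 0 := by
    rw [← s1]
    exact Equiv.sum_comp (Equiv.inv L) (fun l => μ l)
  have hcwbij : Function.Bijective Q.cw := by
    rw [← Finite.injective_iff_bijective]
    intro a b hab
    have := congrArg Subtype.val hab
    simp [cw] at this
    exact this
  have s3 : ∑ l : L, μ (Q.cw l) = 0 := by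
    rw [← s1]
    exact Equiv.sum_comp (Equiv.ofBijective _ hcwbij) (fun l => μ l)
  have s4 : ∑ l : L, μ l⁻¹ * μ (Q.cw l) = 0 := by
    let ν : L →* ℂ :=
      { toFun := fun l => μ l⁻¹ * μ (Q.cw l)
        map_one' := by simp
        map_mul' := by intro a b; simp only [mul_inv_rev, map_mul]; ring }
    apply sum_hom_units_eq_zero ν
    obtain ⟨l, hl⟩ := hne
    intro h
    apply hl
    have h1 : μ l⁻¹ * μ (Q.cw l) = 1 := by
      have := DFunLike.congr_fun h l
      exact this
    calc μ (Q.cw l) = (μ l⁻¹ * μ l) * μ (Q.cw l) := by rw [hinv, one_mul]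
      _ = μ l * (μ l⁻¹ * μ (Q.cw l)) := by ring
      _ = μ l := by rw [h1, mul_one]
  let κ : G → ℂ := fun g => if h : g ∈ L then 1 - μ ⟨g, h⟩ else 0
  have hκ : ∀ g, κ g ≠ 0 → v ∈ Subgroup.zpowers g := by
    intro g hg
    by_cases h : g ∈ L
    · refine hsupp ⟨g, h⟩ ?_
      intro h1
      apply hg
      simp [κ, h, h1]
    · simp [κ, h] at hg
  have hκL : ∀ l, l * v = v * l → ∀ g, κ (l * g * l⁻¹) = κ g := by
    intro l hl g
    have hlL : l ∈ L := by rw [hL, Subgroup.mem_centralizer_singleton_iff]; exact hl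
    by_cases h : g ∈ L
    · have h' : l * g * l⁻¹ ∈ L := L.mul_mem (L.mul_mem hlL h) (L.inv_mem hlL)
      simp only [κ, h, h', dif_pos]
      have : (⟨l * g * l⁻¹, h'⟩ : L) = ⟨l, hlL⟩ * ⟨g, h⟩ * ⟨l, hlL⟩⁻¹ := rfl
      rw [this, map_mul, map_mul]
      have := hinv ⟨l, hlL⟩
      linear_combination - μ ⟨g, h⟩ * this
    · have h' : l * g * l⁻¹ ∉ L := by
        intro h1
        apply h
        have := L.mul_mem (L.mul_mem (L.inv_mem hlL) h1) hlL
        simpa [mul_assoc] using this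
      simp [κ, h, h']
  have hκl : ∀ l : L, κ l = 1 - μ l := by
    intro l; simp [κ]
  have hsum : ∀ F : G → ℂ, ∑ g, κ g⁻¹ * F g = ∑ l : L, (1 - μ l⁻¹) * F l := by
    intro F
    rw [← sum_dite_mem]
    apply Finset.sum_congr rfl
    intro g _
    by_cases h : g ∈ L
    · have h' : g⁻¹ ∈ L := L.inv_mem h
      simp only [κ, h, h', dif_pos]
      rfl
    · have h' : g⁻¹ ∉ L := by simpa using h
      simp only [κ, h, h', dif_neg, not_false_eq_true, zero_mul]
  have hInt : ∀ i, ∃ c : ℤ, hat W v κ i = c := by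
    intro i
    obtain ⟨r1, hr1, -⟩ := W.chi_idem i _ (e_idem L 1)
    obtain ⟨r2, hr2, -⟩ := W.chi_idem i _ (e_idem L μ)
    refine ⟨r1 - r2, ?_⟩
    push_cast
    rw [← hr1, ← hr2, hat, hsum, hcL]
    simp only [map_smul, map_sum, smul_eq_mul, MonoidHom.one_apply, one_mul, sub_mul, Finset.sum_sub_distrib, mul_sub]
  choose c hc using hInt
  obtain ⟨e1, e2, e3⟩ := Q.to_rat W c b κ hκ hc hb
  refine ar3 c W.d b i0 ?_ ?_ W.d_pos hd0 hb0 hbi e1 e2 e3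
  · have h1 := hc i0
    rw [hat, hsum, hcL] at h1
    simp only [h0, mul_one, Finset.sum_sub_distrib, s2, Finset.sum_const, Finset.card_univ, nsmul_eq_mul, sub_zero] at h1
    rw [inv_mul_cancel₀ hcne] at h1
    exact_mod_cast h1.symm
  · have h1 := hat_isom W v w Q.v4 Q.hw κ κ hκ hκ hκL
    rw [hsum, hcL] at h1
    simp only [hc, hκl] at h1
    have h2 : ∀ l : L, (1 - μ l⁻¹) * (1 - μ l + κ (w * l * w⁻¹)) = 3 - 2 * μ l⁻¹ - μ l - μ (Q.cw l) + μ l⁻¹ * μ (Q.cw l) - μ l⁻¹ + μ l⁻¹ := by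
      intro l
      have : κ (w * l * w⁻¹) = 1 - μ (Q.cw l) := hκl (Q.cw l)
      rw [this]
      linear_combination hinv l
    simp only [h2, Finset.sum_add_distrib, Finset.sum_sub_distrib, ← Finset.mul_sum, s1, s2, s3, s4, Finset.sum_const, Finset.card_univ, nsmul_eq_mul] at h1
    have h3 : ∑ i, (c i : ℂ) * c i = 3 := by rw [h1]; field_simp; ring
    have h4 : ∑ i, (c i : ℂ)^2 = 3 := by rw [← h3]; exact Finset.sum_congr rfl fun _ _ => by ring
    exact_mod_cast h4
end Quat


theorem four_bd (a b : ℤ) (h : a^2+a*b+b^2 ≤ 1) : a ≤ 1 ∧ -1 ≤ a ∧ b ≤ 1 ∧ -1 ≤ b := by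
  have h1 : 3 * a^2 ≤ 4 := by linarith [sq_nonneg (a + 2 * b), show (a+2*b)^2 + 3*a^2 = 4*(a^2+a*b+b^2) by ring]
  have h2 : 3 * b^2 ≤ 4 := by linarith [sq_nonneg (b + 2 * a), show (b+2*a)^2 + 3*b^2 = 4*(a^2+a*b+b^2) by ring]
  refine ⟨?_, ?_, ?_, ?_⟩ <;> by_contra hc <;> push Not at hc <;> nlinarith

theorem ar_p {n : ℕ} (f b : Fin n → ℕ) (i j k : Fin n) (hij : i ≠ j) (hik : i ≠ k) (hjk : j ≠ k)
    (hf : ∀ l, 0 < f l) (hbi : 0 < b i) (hbj : 0 < b j) (hbk : 0 < b k)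
    (hne : f i = f j → b i = b j → False)
    (p q : Fin n → ℤ) (hk : p k = p i + p j) (qi : q i = p i) (qj : q j = p j) (qk : q k = p k)
    (h8 : ∑ l, (p l + q l)^2 ≤ 8) (h1 : ∑ l, (p l + q l) * f l = 0) (h2 : ∑ l, (p l + q l) * b l = 0) :
    p i = 0 ∧ p j = 0 := by
  classical
  have key : ∀ F : Fin n → ℤ, ∑ l, F l = F i + (F j + (F k + ∑ l ∈ ((Finset.univ.erase i).erase j).erase k, F l)) := by
    intro F
    rw [Finset.add_sum_erase _ F (by simp [hik.symm, hjk.symm]), Finset.add_sum_erase _ F (by simp [hij.symm]), Finset.add_sum_erase _ F (by simp)]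
  have h8' := h8
  rw [key] at h8 h1 h2
  by_contra hcon
  set R := ((Finset.univ.erase i).erase j).erase k
  have hR : 0 ≤ ∑ l ∈ R, (p l + q l)^2 := Finset.sum_nonneg fun _ _ => sq_nonneg _
  rw [qi, qj, qk, hk] at h8
  have hb : p i ^2 + p i * p j + p j ^ 2 ≤ 1 := by linarith [show (p i + p i)^2 + ((p j + p j)^2 + (p i + p j + (p i + p j))^2) = 8 * (p i ^2 + p i * p j + p j ^ 2) by ring]
  have hp : 1 ≤ p i ^2 + p i * p j + p j ^ 2 := by
    by_contra h
    apply hcon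
    have h' : p i ^2 + p i * p j + p j ^ 2 ≤ 0 := by omega
    constructor
    · have : p i ^ 2 = 0 := by nlinarith [sq_nonneg (p i), sq_nonneg (p i + 2 * p j)]
      exact pow_eq_zero_iff (by norm_num) |>.1 this
    · have : p j ^ 2 = 0 := by nlinarith [sq_nonneg (p j), sq_nonneg (p j + 2 * p i)]
      exact pow_eq_zero_iff (by norm_num) |>.1 this
  have hR0 : ∑ l ∈ R, (p l + q l)^2 = 0 := by linarith [show (p i + p i)^2 + ((p j + p j)^2 + (p i + p j + (p i + p j))^2) = 8 * (p i ^2 + p i * p j + p j ^ 2) by ring]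
  have hz : ∀ l ∈ R, p l + q l = 0 := by
    intro l hl
    have := (Finset.sum_eq_zero_iff_of_nonneg (fun _ _ => sq_nonneg _)).1 hR0 l hl
    exact pow_eq_zero_iff (by norm_num) |>.1 this
  rw [Finset.sum_eq_zero (s := R) (fun l hl => by rw [hz l hl, zero_mul]), qi, qj, qk, hk] at h1 h2
  have f1 := hf i
  have f2 := hf j
  have f3 := hf k
  obtain ⟨b1, b2, b3, b4⟩ := four_bd _ _ hb
  have e1 : p i = -1 ∨ p i = 0 ∨ p i = 1 := by omega
  have e2 : p j = -1 ∨ p j = 0 ∨ p j = 1 := by omega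
  rcases e1 with e1 | e1 | e1 <;> rcases e2 with e2 | e2 | e2 <;> rw [e1, e2] at h1 h2 hb hp <;> first | (norm_num at hp; done) | (norm_num at hb; done) | omega | (exact hne (by omega) (by omega))

/-- in an odd group, an element conjugate to its inverse is trivial -/
theorem odd_real {H : Type*} [Group H] [Fintype H] (hodd : Odd (Nat.card H)) (h o : H) (e : h⁻¹ * o⁻¹ * h = o) : o = 1 := by
  obtain ⟨m, hm⟩ := hodd
  have hp : ∀ y : H, y ^ (2*m+1) = 1 := by intro y; rw [← hm]; exact pow_card_eq_one'
  have e' : o⁻¹ = h * o * h⁻¹ := by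
    calc o⁻¹ = h * (h⁻¹ * o⁻¹ * h) * h⁻¹ := by group
      _ = _ := by rw [e]
  have e2 : Commute (h^2) o := by
    have e3 : o = h * o⁻¹ * h⁻¹ := by
      have := congrArg (·⁻¹) e'
      simpa [mul_assoc] using this
    show h^2 * o = o * h^2
    nth_rewrite 2 [e3]
    rw [e']
    simp [pow_two, mul_assoc]
  have e3 : h = (h^2)^(m+1) := by
    rw [← pow_mul, show 2*(m+1) = (2*m+1)+1 by ring, pow_succ, hp, one_mul]
  have e4 : Commute h o := by rw [e3]; exact e2.pow_left _
  have e5 : o⁻¹ = o := by rw [e', e4.eq]; simp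
  have e6 : o * o = 1 := by nth_rewrite 1 [← e5]; simp
  have := hp o
  rw [pow_succ, pow_mul, pow_two, e6, one_pow, one_mul] at this
  exact this

namespace Wed
theorem selfdual {H : Type*} [Group H] [Fintype H] (hodd : Odd (Nat.card H)) (W : Wed H) (ξ0 : Fin W.n)
    (h0 : ∀ h, W.chi ξ0 (sg h) = 1) (ξ : Fin W.n) (hξ : ∀ h, W.chi ξ (sg h⁻¹) = W.chi ξ (sg h)) : ξ = ξ0 := by
  classical
  have hc : (Fintype.card H : ℂ) ≠ 0 := by exact_mod_cast Fintype.card_ne_zero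
  choose δ hδ using W.exists_dual
  have h1 : ∑ i, ∑ h, W.chi i (sg h) * W.chi i (sg h) = ∑ i, if i = δ i then (Fintype.card H : ℂ) else 0 := by
    apply Finset.sum_congr rfl
    intro i _
    rw [← W.row_orth i (δ i)]
    apply Finset.sum_congr rfl
    intro h _
    rw [hδ, inv_inv]
  rw [Finset.sum_comm] at h1
  simp only [W.col_orth] at h1
  have h2 : ∑ h : H, ((Finset.univ.filter (fun h' : H => h'⁻¹ * h⁻¹ * h' = h)).card : ℂ) = Fintype.card H := by
    rw [Finset.sum_eq_single 1]
    · simp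
    · intro b _ hb
      rw [Nat.cast_eq_zero, Finset.card_eq_zero, Finset.filter_eq_empty_iff]
      intro h' _ e
      exact hb (odd_real hodd h' b e)
    · simp
  rw [h2, ← Finset.sum_filter, Finset.sum_const, nsmul_eq_mul] at h1
  have h3 : (Finset.univ.filter (fun i => i = δ i)).card = 1 := by
    have : ((Finset.univ.filter (fun i => i = δ i)).card : ℂ) = 1 := by
      apply mul_right_cancel₀ hc
      rw [← h1, one_mul]
    exact_mod_cast this
  apply Finset.card_le_one.1 h3.le
  · simp only [Finset.mem_filter, Finset.mem_univ, true_and]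
    apply W.chi_inj
    intro h
    rw [hδ, hξ]
  · simp only [Finset.mem_filter, Finset.mem_univ, true_and]
    apply W.chi_inj
    intro h
    rw [hδ, h0, h0]
end Wed


open Classical in
noncomputable def phi {G : Type*} [Group G] [Fintype G] (O : Subgroup G) (v : G) (ξ : O → ℂ) (g : G) : ℂ :=
  ∑ o : O, 2 * ξ o * ((if g = v * o then 1 else 0) + (if g = v⁻¹ * o then 1 else 0))

section
variable {G : Type*} [Group G] [Fintype G] (O : Subgroup G) (v : G) (ξ : O → ℂ)

open Classical in
theorem phi_sum (F : G → ℂ) : ∑ g, phi O v ξ g * F g = ∑ o : O, 2 * ξ o * (F (v * o) + F (v⁻¹ * o)) := by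
  simp only [phi, Finset.sum_mul]
  rw [Finset.sum_comm]
  apply Finset.sum_congr rfl
  intro o _
  have : ∀ g : G, 2 * ξ o * ((if g = v * o then 1 else 0) + (if g = v⁻¹ * o then 1 else 0)) * F g =
    (if g = v * o then 2 * ξ o * F g else 0) + (if g = v⁻¹ * o then 2 * ξ o * F g else 0) := by
    intro g
    split_ifs <;> ring
  simp only [this, Finset.sum_add_distrib, Finset.sum_ite_eq', Finset.mem_univ, if_true]
  ring

theorem phi_ne (g : G) (h : phi O v ξ g ≠ 0) : ∃ o : O, g = v * o ∨ g = v⁻¹ * o := by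
  classical
  by_contra hc
  push Not at hc
  apply h
  apply Finset.sum_eq_zero
  intro o _
  rw [if_neg (hc o).1, if_neg (hc o).2]
  ring

theorem phi_val (hx : v * v ∉ O) (o : O) : phi O v ξ (v * o) = 2 * ξ o ∧ phi O v ξ (v⁻¹ * o) = 2 * ξ o := by
  classical
  constructor
  · rw [phi, Finset.sum_eq_single o]
    · rw [if_pos rfl, if_neg]
      · ring
      · intro h
        apply hx
        have : v * v = (o * o⁻¹ : G) := by
          have h2 := congrArg (fun z => v * z * (o : G)⁻¹) h
          simpa [mul_assoc] using h2
        rw [this]; simp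
    · intro o' _ hne
      rw [if_neg, if_neg]
      · ring
      · intro h
        apply hx
        have : v * v = (o' * o⁻¹ : G) := by
          have h2 := congrArg (fun z => v * z * (o : G)⁻¹) h
          simpa [mul_assoc] using h2
        rw [this]; exact O.mul_mem o'.2 (O.inv_mem o.2)
      · intro h
        exact hne (Subtype.ext (mul_left_cancel h)).symm
    · simp
  · rw [phi, Finset.sum_eq_single o]
    · rw [if_pos rfl, if_neg]
      · ring
      · intro h
        apply hx
        have : v * v = (o * o⁻¹ : G) := by
          have h2 := congrArg (fun z => v * z * (o : G)⁻¹) h.symm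
          simpa [mul_assoc] using h2
        rw [this]; simp
    · intro o' _ hne
      rw [if_neg, if_neg]
      · ring
      · intro h
        exact hne (Subtype.ext (mul_left_cancel h)).symm
      · intro h
        apply hx
        have : v * v = (o * o'⁻¹ : G) := by
          have h2 := congrArg (fun z => v * z * (o' : G)⁻¹) h.symm
          simpa [mul_assoc] using h2
        rw [this]; exact O.mul_mem o.2 (O.inv_mem o'.2)
    · simp

theorem phi_conj (α : O ≃* O) (l : G) (hα : ∀ o : O, (α o : G) = l * o * l⁻¹)
   (h : l * v * l⁻¹ = v ∨ l * v * l⁻¹ = v⁻¹) (g : G) : phi O v ξ (l * g * l⁻¹) = phi O v (fun o => ξ (α o)) g := by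
  classical
  rw [phi, phi, ← Equiv.sum_comp α.toEquiv]
  apply Finset.sum_congr rfl
  intro o _
  simp only [MulEquiv.toEquiv_eq_coe, EquivLike.coe_coe, hα]
  have key : ∀ a b, l * a * l⁻¹ = b → (l * g * l⁻¹ = b * (l * o * l⁻¹) ↔ g = a * o) := by
    rintro a _ rfl
    constructor
    · intro h
      have h2 := congrArg (fun z => l⁻¹ * z * l) h
      simpa [mul_assoc] using h2
    · rintro rfl
      simp [mul_assoc]
  have hinv : ∀ a b, l * a * l⁻¹ = b → l * a⁻¹ * l⁻¹ = b⁻¹ := by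
    rintro a _ rfl; simp [mul_assoc]
  rcases h with h | h
  · simp only [key v v h, key v⁻¹ v⁻¹ (hinv _ _ h)]
  · have h' := hinv _ _ h
    rw [inv_inv] at h'
    simp only [key v v⁻¹ h, key v⁻¹ v h']
    ring
end

/-- T_i functional -/
noncomputable def TT {G : Type*} [Group G] [Fintype G] (W : Wed G) (O : Subgroup G) (v : G) (i : Fin W.n) :
    MonoidAlgebra ℂ O →ₗ[ℂ] ℂ :=
  W.chi i ∘ₗ (LinearMap.mulRight ℂ ((1/2 : ℂ) • (sg v + sg v⁻¹))) ∘ₗ (MonoidAlgebra.mapDomainAlgHom ℂ ℂ O.subtype).toLinearMap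

section
variable {G : Type*} [Group G] [Fintype G] (W : Wed G) (O : Subgroup G) (v : G)

theorem iota_sg (o : O) : (MonoidAlgebra.mapDomainAlgHom ℂ ℂ O.subtype) (sg o) = sg (o : G) := by
  simp [sg]

theorem TT_apply (i) (a) : TT W O v i a = W.chi i (MonoidAlgebra.mapDomainAlgHom ℂ ℂ O.subtype a * ((1/2 : ℂ) • (sg v + sg v⁻¹))) := rfl

theorem TT_sg (i) (o : O) : TT W O v i (sg o) = (W.chi i (sg (o * v)) + W.chi i (sg (o * v⁻¹))) / 2 := by
  rw [TT_apply, iota_sg, mul_smul_comm, map_smul, mul_add, sg_mul, sg_mul, map_add, smul_eq_mul]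
  ring

theorem iota_comm (hO : ∀ o ∈ O, o * v = v * o) (a) (z : G) (hz : z = v ∨ z = v⁻¹ ∨ z = v * v ∨ z = 1):
    MonoidAlgebra.mapDomainAlgHom ℂ ℂ O.subtype a * sg z = sg z * MonoidAlgebra.mapDomainAlgHom ℂ ℂ O.subtype a := by
  have : (LinearMap.mulRight ℂ (sg z)) ∘ₗ (MonoidAlgebra.mapDomainAlgHom ℂ ℂ O.subtype).toLinearMap =
    (LinearMap.mulLeft ℂ (sg z)) ∘ₗ (MonoidAlgebra.mapDomainAlgHom ℂ ℂ O.subtype).toLinearMap := by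
    apply lin_ext
    intro o
    simp only [LinearMap.comp_apply, AlgHom.toLinearMap_apply, iota_sg, LinearMap.mulRight_apply, LinearMap.mulLeft_apply, sg_mul]
    congr 1
    have h : Commute (o : G) v := hO o o.2
    rcases hz with rfl | rfl | rfl | rfl
    · exact h
    · exact h.inv_right
    · exact h.mul_right h
    · simp
  exact LinearMap.congr_fun this a

theorem TT_trace (hO : ∀ o ∈ O, o * v = v * o) (i) (a b) : TT W O v i (a * b) = TT W O v i (b * a) := by
  have hc : ∀ a, MonoidAlgebra.mapDomainAlgHom ℂ ℂ O.subtype a * ((1/2 : ℂ) • (sg v + sg v⁻¹)) =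
     ((1/2 : ℂ) • (sg v + sg v⁻¹)) * MonoidAlgebra.mapDomainAlgHom ℂ ℂ O.subtype a := by
    intro a
    rw [mul_smul_comm, smul_mul_assoc, mul_add, add_mul, iota_comm O v hO a v (by simp), iota_comm O v hO a v⁻¹ (by simp)]
  rw [TT_apply, TT_apply, map_mul (MonoidAlgebra.mapDomainAlgHom ℂ ℂ O.subtype), map_mul (MonoidAlgebra.mapDomainAlgHom ℂ ℂ O.subtype), mul_assoc, W.chi_comm, mul_assoc, ← hc, mul_assoc]

theorem TT_int (h4 : v ^ 4 = 1) (hO : ∀ o ∈ O, o * v = v * o) (i) (a : MonoidAlgebra ℂ O) (ha : a * a = a) :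
    ∃ c : ℤ, TT W O v i a = c := by
  have hv3 : v * v * v = v⁻¹ := by
    rw [eq_inv_iff_mul_eq_one, ← h4]; simp [pow_succ, mul_assoc]
  set A := MonoidAlgebra.mapDomainAlgHom ℂ ℂ O.subtype a with hA
  have hAA : A * A = A := by rw [hA, ← map_mul, ha]
  have c1 : A * sg v = sg v * A := iota_comm O v hO a v (by simp)
  have c2 : A * sg (v * v) = sg (v * v) * A := iota_comm O v hO a (v*v) (by simp)
  have c3 : A * sg v⁻¹ = sg v⁻¹ * A := iota_comm O v hO a v⁻¹ (by simp)
  have hT : TT W O v i a = W.chi i (A * ((1/2 : ℂ) • (sg v + sg v⁻¹))) := rfl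
  set V := sg v with hV
  set X := sg (v * v) with hX
  set U := sg v⁻¹ with hU
  have hv4 : v * v * (v * v) = 1 := by rw [← h4]; simp [pow_succ, mul_assoc]
  have m1 : V * V = X := by rw [hV, sg_mul]
  have m2 : X * X = 1 := by rw [hX, sg_mul, hv4, sg_one]
  have m3 : V * X = U := by rw [hV, sg_mul, ← mul_assoc, hv3]
  have m4 : X * V = U := by rw [hV, sg_mul, hv3]
  have m5 : V * U = 1 := by rw [hV, hU, sg_mul]; simp [sg_one]
  have m6 : U * V = 1 := by rw [hV, hU, sg_mul]; simp [sg_one]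
  have m7 : X * U = V := by rw [← m3, ← mul_assoc, m4, ← m3, mul_assoc, m2, mul_one]
  have m8 : U * X = V := by rw [← m3, mul_assoc, m2, mul_one]
  have m9 : U * U = X := by
    calc U * U = U * (V * X) := by rw [m3]
      _ = X := by rw [← mul_assoc, m6, one_mul]
  have z0 : ((1/4 : ℂ) • (1 + V + X + U)) * ((1/4 : ℂ) • (1 + V + X + U)) = ((1/4 : ℂ) • (1 + V + X + U)) := by
    simp only [smul_mul_smul_comm, mul_add, add_mul, one_mul, mul_one, m1, m2, m3, m4, m5, m6, m7, m8, m9]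
    module
  have z2 : ((1/4 : ℂ) • (1 - V + X - U)) * ((1/4 : ℂ) • (1 - V + X - U)) = ((1/4 : ℂ) • (1 - V + X - U)) := by
    simp only [smul_mul_smul_comm, mul_add, add_mul, mul_sub, sub_mul, one_mul, mul_one, m1, m2, m3, m4, m5, m6, m7, m8, m9]
    module
  have k0 : A * ((1/4 : ℂ) • (1 + V + X + U)) = ((1/4 : ℂ) • (1 + V + X + U)) * A := by
    simp only [mul_smul_comm, smul_mul_assoc, mul_add, add_mul, c1, c2, c3, mul_one, one_mul]
  have k2 : A * ((1/4 : ℂ) • (1 - V + X - U)) = ((1/4 : ℂ) • (1 - V + X - U)) * A := by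
    simp only [mul_smul_comm, smul_mul_assoc, mul_add, add_mul, mul_sub, sub_mul, c1, c2, c3, mul_one, one_mul]
  obtain ⟨r0, h0, -⟩ := W.chi_idem i (A * ((1/4 : ℂ) • (1 + V + X + U))) (by
    rw [mul_assoc, ← mul_assoc _ A, ← k0, mul_assoc, z0, ← mul_assoc, hAA])
  obtain ⟨r2, h2, -⟩ := W.chi_idem i (A * ((1/4 : ℂ) • (1 - V + X - U))) (by
    rw [mul_assoc, ← mul_assoc _ A, ← k2, mul_assoc, z2, ← mul_assoc, hAA])
  refine ⟨r0 - r2, ?_⟩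
  rw [hT]
  push_cast
  rw [← h0, ← h2, ← map_sub, ← mul_sub]
  congr 2
  module

theorem TT_exp (WO : Wed O) (hO : ∀ o ∈ O, o * v = v * o) (i) (o : O) :
    (W.chi i (sg (o * v)) + W.chi i (sg (o * v⁻¹))) / 2 = ∑ ξ, TT W O v i (WO.E ξ) * WO.chi ξ (sg o) := by
  rw [← TT_sg, WO.traceLike (TT W O v i) (TT_trace W O v hO i)]

theorem hat_phi (WO : Wed O) (hO : ∀ o ∈ O, o * v = v * o) (hcard : Nat.card (Subgroup.centralizer ({v} : Set G)) = 4 * Nat.card O)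
    (i) (ξ) : hat W v (phi O v (fun o => WO.chi ξ (sg o))) i = TT W O v i (WO.E ξ) := by
  classical
  have hc : (Fintype.card O : ℂ) ≠ 0 := by exact_mod_cast Fintype.card_ne_zero
  have h1 : ∑ g, phi O v (fun o => WO.chi ξ (sg o)) g⁻¹ * W.chi i (sg g) = ∑ g, phi O v (fun o => WO.chi ξ (sg o)) g * W.chi i (sg g⁻¹) := by
    rw [← Equiv.sum_comp (Equiv.inv G)]
    simp
  rw [hat, h1, phi_sum, cL, hcard, Nat.card_eq_fintype_card]
  have h2 : ∀ o : O, 2 * WO.chi ξ (sg o) * (W.chi i (sg (v * o)⁻¹) + W.chi i (sg (v⁻¹ * o : G)⁻¹)) =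
    4 * ∑ η, TT W O v i (WO.E η) * (WO.chi η (sg o⁻¹) * WO.chi ξ (sg (o⁻¹)⁻¹)) := by
    intro o
    have := TT_exp W O v WO hO i o⁻¹
    simp only [← mul_assoc, ← Finset.sum_mul]
    rw [← this]
    simp only [mul_inv_rev, inv_inv, Subgroup.coe_inv]
    ring
  have h3 : ∑ o : O, ∑ η, TT W O v i (WO.E η) * (WO.chi η (sg o⁻¹) * WO.chi ξ (sg (o⁻¹)⁻¹)) = Fintype.card O * TT W O v i (WO.E ξ) := by
    rw [show ∑ o : O, ∑ η, TT W O v i (WO.E η) * (WO.chi η (sg o⁻¹) * WO.chi ξ (sg (o⁻¹)⁻¹)) = ∑ o : O, ∑ η, TT W O v i (WO.E η) * (WO.chi η (sg o) * WO.chi ξ (sg o⁻¹)) from Equiv.sum_comp (Equiv.inv O) (fun o => ∑ η, TT W O v i (WO.E η) * (WO.chi η (sg o) * WO.chi ξ (sg o⁻¹))), Finset.sum_comm]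
    simp only [← Finset.mul_sum, WO.row_orth, mul_ite, mul_zero, Finset.sum_ite_eq', Finset.mem_univ, if_true]
    ring
  simp only [h2, ← Finset.mul_sum, h3]
  push_cast
  field_simp
end


namespace Quat
variable {G : Type*} [Group G] [Fintype G] {K : Finset G} {x v w : G} {p : ℕ} (Q : Quat K x v w p) 
include Q

theorem norm4 (O : Subgroup G) (hodd : Odd (Nat.card O)) (hO : ∀ o ∈ O, o * v = v * o)
    (hOw : ∀ o ∈ O, w * o * w⁻¹ ∈ O)
    (hdec : ∀ l, l * v = v * l → ∃ a : ℕ, ∃ o ∈ O, l = v ^ a * o)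
    (hcard : Nat.card (Subgroup.centralizer ({v} : Set G)) = 4 * Nat.card O) : False := by
  classical
  obtain ⟨W⟩ := Wed.exists G
  obtain ⟨WO⟩ := Wed.exists O
  obtain ⟨b, i0, hb, hbq, h0, hd0, hb0, hbi⟩ := Q.exists_data W
  obtain ⟨ξ0, hξ0⟩ := WO.exists_triv
  have hc : (Fintype.card O : ℂ) ≠ 0 := by exact_mod_cast Fintype.card_ne_zero
  have hcL : cL v = 4 * (Fintype.card O : ℂ) := by rw [cL, hcard, Nat.card_eq_fintype_card]; push_cast; ring
  have h4 := Q.vpow4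
  have hx : v * v ∉ O := by
    intro h
    have h2 : orderOf (⟨v * v, h⟩ : O) ∣ 2 := by
      apply orderOf_dvd_of_pow_eq_one
      ext
      simp only [SubmonoidClass.mk_pow, OneMemClass.coe_one]
      rw [← h4]; simp [pow_succ, mul_assoc]
    have h3 : orderOf (⟨v * v, h⟩ : O) ∣ Nat.card O := orderOf_dvd_natCard _
    have h5 := Nat.dvd_gcd h2 h3
    rw [Nat.Coprime.gcd_eq_one (Nat.coprime_two_left.2 hodd), Nat.dvd_one, orderOf_eq_one_iff] at h5
    have h6 : v * v = 1 := congrArg Subtype.val h5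
    have h7 : orderOf v ∣ 2 := orderOf_dvd_of_pow_eq_one (by rw [pow_two, h6])
    rw [Q.v4] at h7
    omega
  -- conj automorphism by w
  let f : O →* O :=
    { toFun := fun o => ⟨w * o * w⁻¹, hOw o o.2⟩
      map_one' := by ext; simp
      map_mul' := by intro a b; ext; simp [mul_assoc] }
  have hfb : Function.Bijective f := by
    rw [← Finite.injective_iff_bijective]
    intro a b hab
    have := congrArg Subtype.val hab
    simpa [f] using this
  let α : O ≃* O := MulEquiv.ofBijective f hfb
  have hα : ∀ o, (α o : G) = w * o * w⁻¹ := fun o => rfl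
  choose tw htw using WO.exists_twist α
  choose δ hδ using WO.exists_dual
  choose π hπ using W.exists_dual
  have htwinj : ∀ ξ η, tw ξ = tw η → ξ = η := by
    intro ξ η h
    apply WO.chi_inj
    intro g
    obtain ⟨g, rfl⟩ := α.surjective g
    rw [← htw, ← htw, h]
  set P : Fin WO.n → G → ℂ := fun ξ => phi O v (fun o => WO.chi ξ (sg o)) with hP
  have hPs : ∀ ξ g, P ξ g ≠ 0 → v ∈ Subgroup.zpowers g := by
    intro ξ g hg
    have key : ∀ u : G, (u = v ∨ u = v⁻¹) → ∀ o ∈ O, v ∈ Subgroup.zpowers (u * o) := by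
      intro u hu o ho
      have hcomm : Commute u o := by
        have : Commute v o := (hO o ho).symm
        rcases hu with rfl | rfl
        · exact this
        · exact this.inv_left
      have h1 : (u * o)^(Nat.card O) = u ^ (Nat.card O) := by
        rw [hcomm.mul_pow]
        have : (⟨o, ho⟩ : O)^(Nat.card O) = 1 := pow_card_eq_one'
        have := congrArg Subtype.val this
        simp only [SubmonoidClass.mk_pow, OneMemClass.coe_one] at this
        rw [this, mul_one]
      have h2 : u ^ (Nat.card O) ∈ Subgroup.zpowers (u * o) := by
        rw [← h1]; exact Subgroup.npow_mem_zpowers _ _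
      have hu4 : u ^ 4 = 1 := by rcases hu with rfl | rfl <;> simp [h4]
      obtain ⟨m, hm⟩ := hodd
      have h3 : u ∈ Subgroup.zpowers (u * o) := by
        have : u = (u ^ (Nat.card O))^(Nat.card O) := by
          rw [← pow_mul, hm, show (2*m+1)*(2*m+1) = 4*(m^2+m)+1 by ring, pow_succ, pow_mul, hu4]; simp
        have h5 := Subgroup.pow_mem _ h2 (Nat.card O)
        rwa [← this] at h5
      rcases hu with rfl | rfl
      · exact h3
      · simpa using Subgroup.inv_mem _ h3
    obtain ⟨o, h | h⟩ := phi_ne O v _ g hg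
    · rw [h]; exact key _ (Or.inl rfl) o o.2
    · rw [h]; exact key _ (Or.inr rfl) o o.2
  have hPL : ∀ ξ l, l * v = v * l → ∀ g, P ξ (l * g * l⁻¹) = P ξ g := by
    intro ξ l hl g
    obtain ⟨a, o, ho, e⟩ := hdec l hl
    have h1 : ∀ u : O, ((MulAut.conj (⟨o, ho⟩ : O) u : O) : G) = l * u * l⁻¹ := by
      intro u
      have hcom : Commute (v ^ a) (o * u * o⁻¹) := by
        apply Commute.pow_left
        have : o * u * o⁻¹ ∈ O := O.mul_mem (O.mul_mem ho u.2) (O.inv_mem ho)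
        exact (hO _ this).symm
      have h2 := hcom.eq
      simp only [MulAut.conj_apply, Subgroup.coe_mul, Subgroup.coe_inv]
      rw [e]
      calc o * u * o⁻¹ = o * u * o⁻¹ * v ^ a * (v ^ a)⁻¹ := by simp [mul_assoc]
        _ = v ^ a * (o * u * o⁻¹) * (v ^ a)⁻¹ := by rw [← h2]
        _ = _ := by simp only [mul_inv_rev, mul_assoc]
    simp only [hP]
    rw [phi_conj O v _ (MulAut.conj (⟨o, ho⟩ : O)) l h1 (Or.inl (by rw [hl]; simp))]
    congr 1
    funext u
    rw [MulAut.conj_apply, ← sg_mul, WO.chi_comm, sg_mul]; simp [mul_assoc]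
  have hPw : ∀ ξ g, P ξ (w * g * w⁻¹) = P (tw ξ) g := by
    intro ξ g
    simp only [hP]
    rw [phi_conj O v _ α w hα (Or.inr Q.hw)]
    simp only [htw]
  choose p' hp' using fun (ξ : Fin WO.n) (i : Fin W.n) => TT_int W O v h4 hO i (WO.E ξ) (WO.E_idem ξ)
  have hhat : ∀ ξ i, hat W v (P ξ) i = p' ξ i := by
    intro ξ i
    rw [← hp']
    exact hat_phi W O v WO hO hcard i ξ
  have hexp : ∀ i (o : O), (W.chi i (sg (o * v)) + W.chi i (sg (o * v⁻¹))) / 2 = ∑ ξ, (p' ξ i : ℂ) * WO.chi ξ (sg o) := by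
    intro i o
    rw [TT_exp W O v WO hO i o]
    simp only [hp']
  have hproj : ∀ i ξ, (p' ξ i : ℂ) * Fintype.card O = ∑ o : O, (W.chi i (sg (o * v)) + W.chi i (sg (o * v⁻¹))) / 2 * WO.chi ξ (sg o⁻¹) := by
    intro i ξ
    simp only [hexp, Finset.sum_mul]
    rw [Finset.sum_comm]
    simp only [mul_assoc, ← Finset.mul_sum, WO.row_orth, mul_ite, mul_zero, Finset.sum_ite_eq', Finset.mem_univ, if_true]
  have hgram : ∀ ξ η, ∑ i, p' ξ i * p' η i = (if ξ = η then 2 else 0) + (if tw ξ = η then 2 else 0) := by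
    intro ξ η
    have h1 := hat_isom W v w Q.v4 Q.hw (P ξ) (P η) (hPs ξ) (hPs η) (hPL ξ)
    have h2 : ∀ ζ, ∑ y, P η y⁻¹ * P ζ y = if ζ = η then 8 * (Fintype.card O : ℂ) else 0 := by
      intro ζ
      have h3 : ∑ y, P η y⁻¹ * P ζ y = ∑ y, P ζ y * P η y⁻¹ := Finset.sum_congr rfl fun _ _ => mul_comm _ _
      rw [h3]
      simp only [hP]
      rw [phi_sum O v _ (fun y => phi O v (fun o => WO.chi η (sg o)) y⁻¹)]
      have h4 : ∀ o : O, (v * o : G)⁻¹ = v⁻¹ * (o⁻¹ : O) := by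
        intro o
        have : Commute v (o : G) := (hO o o.2).symm
        rw [mul_inv_rev, Subgroup.coe_inv, this.inv_inv.eq]
      have h5 : ∀ o : O, (v⁻¹ * o : G)⁻¹ = v * (o⁻¹ : O) := by
        intro o
        have : Commute v (o : G) := (hO o o.2).symm
        rw [mul_inv_rev, Subgroup.coe_inv, inv_inv, this.inv_right.eq]
      simp only [h4, h5, (phi_val O v _ hx _).1, (phi_val O v _ hx _).2]
      have h6 := WO.row_orth ζ η
      have h7 : ∀ o : O, 2 * WO.chi ζ (sg o) * (2 * WO.chi η (sg o⁻¹) + 2 * WO.chi η (sg o⁻¹)) = 8 * (WO.chi ζ (sg o) * WO.chi η (sg o⁻¹)) := by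
        intro o; ring
      simp only [h7, ← Finset.mul_sum, h6]
      split_ifs <;> ring
    simp only [hPw, mul_add, Finset.sum_add_distrib, h2, hhat, hcL] at h1
    have h5 : ((∑ i, p' ξ i * p' η i : ℤ) : ℂ) = (((if ξ = η then 2 else 0) + (if tw ξ = η then 2 else 0) : ℤ) : ℂ) := by
      push_cast
      rw [h1]
      split_ifs <;> push_cast <;> field_simp <;> ring
    exact_mod_cast h5
  have hdual : ∀ ξ i, p' ξ (π i) = p' (δ ξ) i := by
    intro ξ i
    have h1 := hproj (π i) ξ
    have h2 := hproj i (δ ξ)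
    have h3 : (p' ξ (π i) : ℂ) * Fintype.card O = p' (δ ξ) i * Fintype.card O := by
      rw [h1, h2, ← Equiv.sum_comp (Equiv.inv O)]
      apply Finset.sum_congr rfl
      intro o _
      have : Commute v (o : G) := (hO o o.2).symm
      simp only [Equiv.inv_apply, hπ, hδ, Subgroup.coe_inv, mul_inv_rev, inv_inv]
      rw [this.eq, this.inv_left.eq]
      ring
    exact_mod_cast mul_right_cancel₀ hc h3
  have hp0 : ∀ ξ, p' ξ i0 = if ξ = ξ0 then 1 else 0 := by
    intro ξ
    have h1 := hproj i0 ξ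
    simp only [h0] at h1
    have h2 := WO.row_orth ξ0 ξ
    simp only [hξ0] at h2
    norm_num at h1
    simp only [one_mul] at h2
    rw [h2] at h1
    split_ifs with h
    · rw [if_pos h.symm] at h1
      have : (p' ξ i0 : ℂ) = 1 := mul_right_cancel₀ hc (by rw [h1, one_mul])
      exact_mod_cast this
    · rw [if_neg (fun e => h e.symm)] at h1
      exact_mod_cast (mul_eq_zero.1 h1).resolve_right hc
  have htw0 : tw ξ0 = ξ0 := WO.chi_inj (fun g => by rw [htw, hξ0, hξ0])
  have hδ0 : δ ξ0 = ξ0 := WO.chi_inj (fun g => by rw [hδ, hξ0, hξ0])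
  have hδδ : ∀ ξ, δ (δ ξ) = ξ := fun ξ => WO.chi_inj (fun g => by rw [hδ, hδ, inv_inv])
  have hδne : ∀ ξ, ξ ≠ ξ0 → δ ξ ≠ ξ := by
    intro ξ h h'
    apply h
    apply WO.selfdual hodd ξ0 hξ0
    intro o
    rw [← hδ, h']
  have hd1 : ∀ ξ, WO.chi ξ (sg 1) = WO.d ξ := fun ξ => by rw [sg_one, WO.chi_one]
  have hfπ : ∀ i, W.d (π i) = W.d i := by
    intro i
    have := hπ i 1
    rw [inv_one, sg_one, W.chi_one, W.chi_one] at this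
    exact_mod_cast this
  have hbπ : ∀ i, b (π i) = b i := by
    intro i
    have h1 := hπ i x
    have hxi : x⁻¹ = x := inv_eq_of_mul_eq_one_right Q.xx
    rw [hxi, hb, hb, hfπ] at h1
    have h2 : (b (π i) : ℂ) = b i := by linear_combination (-1/2) * h1
    exact_mod_cast h2
  -- c
  have hrat := fun ξ => Q.to_rat W (p' ξ) b (P ξ) (hPs ξ) (hhat ξ) hb
  have hcc : ∑ i, (p' ξ0 i)^2 = 4 := by
    have := hgram ξ0 ξ0
    rw [htw0, if_pos rfl] at this
    simp only [pow_two, this]; norm_num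
  obtain ⟨i, j, k, hij, hik, hjk, hi0, hj0, hk0, ci, cj, ck, cl, heq⟩ :=
    ar4 (p' ξ0) W.d b i0 (by rw [hp0, if_pos rfl]) hcc W.d_pos hd0 hb0 hbi (hrat ξ0).1 (hrat ξ0).2.1 (hrat ξ0).2.2
  have hbp : ∀ l, l ≠ i0 → 0 < b l := fun l hl => Nat.pos_of_ne_zero fun h => hl (hbi l h)
  have hne : W.d i = W.d j → b i = b j → False := by
    intro h1 h2
    rw [h1, h2] at heq
    have h3 := hbp j hj0
    have h4 := W.d_pos j
    have h5 : 0 < (b j)^2 * W.d j := by positivity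
    have h6 : (0:ℤ) < (b j : ℤ)^2 * W.d j := by exact_mod_cast h5
    nlinarith
  have hcπ : ∀ l, p' ξ0 (π l) = p' ξ0 l := by intro l; rw [hdual, hδ0]
  have hπ0 : ∀ l, l ≠ i0 → π l ≠ i0 := by
    intro l hl h
    have := hbπ l
    rw [h, hb0] at this
    have := hbp l hl
    omega
  have hcase : ∀ l, p' ξ0 l ≠ 0 → l = i0 ∨ l = i ∨ l = j ∨ l = k := by
    intro l hl
    by_contra hcon
    push Not at hcon
    exact hl (cl l hcon.1 hcon.2.1 hcon.2.2.1 hcon.2.2.2)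
  have πk : π k = k := by
    have h1 := hcπ k
    rcases hcase (π k) (by rw [h1, ck]; norm_num) with h | h | h | h
    · exact absurd h (hπ0 k hk0)
    · rw [h, ci, ck] at h1; norm_num at h1
    · rw [h, cj, ck] at h1; norm_num at h1
    · exact h
  have πi : π i = i := by
    have h1 := hcπ i
    rcases hcase (π i) (by rw [h1, ci]; norm_num) with h | h | h | h
    · exact absurd h (hπ0 i hi0)
    · exact h
    · exact (hne (by rw [← h, hfπ]) (by rw [← h, hbπ])).elim
    · rw [h, ci, ck] at h1; norm_num at h1
  have πj : π j = j := by
    have h1 := hcπ j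
    rcases hcase (π j) (by rw [h1, cj]; norm_num) with h | h | h | h
    · exact absurd h (hπ0 j hj0)
    · exact (hne (by rw [← h, hfπ]) (by rw [← h, hbπ])).elim
    · exact h
    · rw [h, cj, ck] at h1; norm_num at h1
  have hzero : ∀ ξ, ξ ≠ ξ0 → p' ξ i = 0 ∧ p' ξ j = 0 := by
    intro ξ hξ
    have ho := hgram ξ0 ξ
    rw [htw0, if_neg hξ.symm, ← Finset.add_sum_erase _ _ (Finset.mem_univ i0)] at ho
    have hs : ∑ l ∈ Finset.univ.erase i0, p' ξ0 l * p' ξ l = - p' ξ i - p' ξ j + p' ξ k := by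
      rw [← Finset.sum_subset (s₁ := {i, j, k})]
      · rw [Finset.sum_insert (by simp [hij, hik]), Finset.sum_insert (by simp [hjk]), Finset.sum_singleton, ci, cj, ck]
        ring
      · intro l hl
        simp only [Finset.mem_insert, Finset.mem_singleton] at hl
        rcases hl with rfl | rfl | rfl <;> simp [hi0, hj0, hk0]
      · intro l hl hl'
        simp only [Finset.mem_insert, Finset.mem_singleton, not_or, Finset.mem_erase, Finset.mem_univ, and_true] at hl hl'
        rw [cl l hl hl'.1 hl'.2.1 hl'.2.2, zero_mul]
    rw [hs, hp0 ξ, if_neg hξ] at ho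
    have hδq : ∀ l, p' (δ ξ) l = p' ξ (π l) := fun l => (hdual ξ l).symm
    refine ar_p W.d b i j k hij hik hjk W.d_pos (hbp i hi0) (hbp j hj0) (hbp k hk0) hne (p' ξ) (p' (δ ξ)) (by linarith)
      (by rw [hδq, πi]) (by rw [hδq, πj]) (by rw [hδq, πk]) ?_ ?_ ?_
    · have e1 : ∑ l, (p' ξ l + p' (δ ξ) l)^2 = ∑ l, p' ξ l * p' ξ l + 2 * ∑ l, p' ξ l * p' (δ ξ) l + ∑ l, p' (δ ξ) l * p' (δ ξ) l := by
        rw [Finset.mul_sum, ← Finset.sum_add_distrib, ← Finset.sum_add_distrib]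
        exact Finset.sum_congr rfl fun _ _ => by ring
      rw [e1, hgram, hgram, hgram, if_pos rfl, if_pos rfl, if_neg (hδne ξ hξ).symm]
      by_cases h1 : tw ξ = ξ
      · have h2 : tw ξ ≠ δ ξ := fun h => hδne ξ hξ (by rw [← h, h1])
        rw [if_neg h2]
        split_ifs <;> norm_num
      · rw [if_neg h1]
        by_cases h2 : tw ξ = δ ξ
        · have h3 : tw (δ ξ) ≠ δ ξ := fun h => hδne ξ hξ (htwinj _ _ (by rw [h, h2]))
          rw [if_neg h3]
          split_ifs <;> norm_num
        · rw [if_neg h2]; split_ifs <;> norm_num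
    · have e1 := (hrat ξ).1
      have e2 := (hrat (δ ξ)).1
      have e3 : ((∑ l, (p' ξ l + p' (δ ξ) l) * W.d l : ℤ) : ℚ) = 0 := by
        push_cast
        simp only [add_mul, Finset.sum_add_distrib, e1, e2, add_zero]
      exact_mod_cast e3
    · have e1 := (hrat ξ).2.1
      have e2 := (hrat (δ ξ)).2.1
      have e3 : ((∑ l, (p' ξ l + p' (δ ξ) l) * b l : ℤ) : ℚ) = 0 := by
        push_cast
        simp only [add_mul, Finset.sum_add_distrib, e1, e2, add_zero]
      exact_mod_cast e3
  have hfin : ∀ l, (∀ ξ, ξ ≠ ξ0 → p' ξ l = 0) → p' ξ0 l = -1 → W.chi l (sg v) = -1 := by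
    intro l h1 h2
    have h3 := hexp l 1
    rw [Finset.sum_eq_single ξ0 (fun ξ _ h => by rw [h1 ξ h]; simp) (by simp), hξ0, h2] at h3
    have h4 : W.chi l (sg v⁻¹) = W.chi l (sg v) := by
      rw [← Q.hw, Q.chi_conj]
    simp only [OneMemClass.coe_one, one_mul, h4] at h3
    push_cast at h3
    linear_combination h3
  obtain ⟨eb1, q1, hq1⟩ := hbq i
  obtain ⟨eb2, q2, hq2⟩ := hbq j
  rw [hfin i (fun ξ h => (hzero ξ h).1) ci] at hq1
  rw [hfin j (fun ξ h => (hzero ξ h).2) cj] at hq2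
  refine nt_final (b i) (b j) (W.d i) (W.d j) q1 q2 (hbp i hi0) eb1 eb2 ?_ ?_ heq
  · exact_mod_cast hq1.symm
  · exact_mod_cast hq2.symm
end Quat


theorem ext2 {G : Type*} [Group G] [Finite G] (H R : Subgroup G) (hR : IsPGroup 2 R) (hle : H ≤ R) (hne : H ≠ R) :
    ∃ w ∈ R, w ∉ H ∧ w * w ∈ H ∧ ∀ h ∈ H, w * h * w⁻¹ ∈ H := by
  haveI : Fact (Nat.Prime 2) := ⟨Nat.prime_two⟩
  have hHp : IsPGroup 2 H := hR.to_le hle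
  obtain ⟨a, ha⟩ := IsPGroup.iff_card.1 hHp
  obtain ⟨r, hr⟩ := IsPGroup.iff_card.1 hR
  have har : a < r := by
    have h1 : Nat.card H ≤ Nat.card R := Subgroup.card_le_of_le hle
    rw [ha, hr] at h1
    have h2 := (Nat.pow_le_pow_iff_right (by norm_num)).1 h1
    rcases h2.lt_or_eq with h | h
    · exact h
    · exfalso; apply hne
      apply Subgroup.eq_of_le_of_card_ge hle
      rw [ha, hr, h]
  have hc : Nat.card (H.subgroupOf R) = 2 ^ a := by
    rw [← ha]; exact Nat.card_congr (Subgroup.subgroupOfEquivOfLe hle).toEquiv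
  obtain ⟨M, hM, hHM⟩ := Sylow.exists_subgroup_card_pow_succ (p := 2) (n := a) (G := R) (by rw [hr]; exact pow_dvd_pow _ har) hc
  have hidx : ((H.subgroupOf R).subgroupOf M).index = 2 := by
    have h1 := Subgroup.card_mul_index ((H.subgroupOf R).subgroupOf M)
    rw [Nat.card_congr (Subgroup.subgroupOfEquivOfLe hHM).toEquiv, hc, hM, pow_succ] at h1
    exact Nat.eq_of_mul_eq_mul_left (by positivity) h1
  have hnt : (H.subgroupOf R).subgroupOf M ≠ ⊤ := by
    intro h; rw [h, Subgroup.index_top] at hidx; norm_num at hidx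
  obtain ⟨m, hm⟩ : ∃ m : M, m ∉ (H.subgroupOf R).subgroupOf M := by
    by_contra hcon
    push Not at hcon
    exact hnt ((Subgroup.eq_top_iff' _).2 hcon)
  refine ⟨(m : R), (m : R).2, ?_, ?_, ?_⟩
  · intro h; exact hm (by simpa [Subgroup.mem_subgroupOf] using h)
  · have := Subgroup.mul_self_mem_of_index_two hidx m
    simpa [Subgroup.mem_subgroupOf] using this
  · intro h hh
    have hn := Subgroup.normal_of_index_eq_two hidx
    have hhM : (⟨h, hle hh⟩ : R) ∈ M := hHM (by simpa [Subgroup.mem_subgroupOf] using hh)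
    have := hn.conj_mem ⟨⟨h, hle hh⟩, hhM⟩ (by simpa [Subgroup.mem_subgroupOf] using hh) m
    simpa [Subgroup.mem_subgroupOf] using this

theorem zpow_conj {G : Type*} [Group G] (g t : G) (j : ℤ) (h : g * t * g⁻¹ = t ^ j) (k : ℤ) : g * t ^ k * g⁻¹ = t ^ (j * k) := by
  rw [← conj_zpow, h, zpow_mul]

/-- key computation -/
theorem keycomp {G : Type*} [Group G] [Finite G] (x t : G) (n : ℕ)
    (hu : ∀ z : G, z * z = 1 → z * x = x * z → z = 1 ∨ z = x) (ht : orderOf t = 2 ^ (n+1)) (hx : t ^ (2 ^ n) = x)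
    (hmax : ∀ g : G, (∃ m : ℕ, g ^ (2 ^ m) = 1) → g ^ (2 ^ (n+1)) = 1)
    (g : G) (hg : g ∉ Subgroup.zpowers t) (hgg : g * g ∈ Subgroup.zpowers t) (j : ℤ) (hj : g * t * g⁻¹ = t ^ j)
    (hj4 : j % 4 = 1) : False := by
  obtain ⟨l, hl⟩ := hgg
  simp only at hl
  have ht1 : t ^ (2^(n+1)) = 1 := by rw [← ht]; exact pow_orderOf_eq_one t
  have hzero : ∀ k : ℤ, t ^ k = 1 ↔ (2^(n+1) : ℤ) ∣ k := by
    intro k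
    rw [← orderOf_dvd_iff_zpow_eq_one, ht]; push_cast; rfl
  have hg2 : g ^ (2^(n+1)) = 1 := by
    apply hmax
    refine ⟨n+2, ?_⟩
    rw [pow_succ' 2 (n+1), pow_mul, pow_two, ← hl, ← zpow_natCast, ← zpow_mul, hzero]
    push_cast
    exact Dvd.intro_left _ rfl
  have hleven : (2:ℤ) ∣ l := by
    rw [pow_succ' 2 n, pow_mul, pow_two, ← hl, ← zpow_natCast, ← zpow_mul, hzero] at hg2
    push_cast at hg2
    rw [pow_succ, mul_comm] at hg2
    exact Int.dvd_of_mul_dvd_mul_right (by positivity) hg2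
  obtain ⟨m, rfl⟩ := hleven
  obtain ⟨u, hu'⟩ : ∃ u : ℤ, j + 1 = 2 * (2 * u + 1) := ⟨(j - 1)/4, by omega⟩
  have hcop : IsCoprime (2*u+1) ((2:ℤ)^(n+1)) := by
    apply IsCoprime.pow_right
    exact ⟨1, -u, by ring⟩
  obtain ⟨a, c, hac⟩ := hcop
  set i : ℤ := - m * a with hi
  have hcomm : Commute (g*g) t := by rw [← hl]; exact Commute.zpow_left (Commute.refl t) _
  have hsq : (g * t ^ i) * (g * t ^ i) = 1 := by
    have h1 := zpow_conj g t j hj i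
    calc (g * t ^ i) * (g * t ^ i) = (g * t ^ i * g⁻¹) * (g * g) * t ^ i := by group
      _ = t ^ (j * i + 2 * m + i) := by rw [h1, ← hl, zpow_add, zpow_add]
      _ = 1 := by
        rw [hzero]
        refine ⟨2 * m * c, ?_⟩
        have : j = 2 * (2*u+1) - 1 := by linarith
        rw [this, hi]
        linear_combination -(2 * m) * hac
  have hjodd : (2:ℤ) ∣ j - 1 := by omega
  have hgx : g * x * g⁻¹ = x := by
    have h1 := zpow_conj g t j hj (2^n)
    have h2 : t ^ ((2:ℤ)^n) = x := by rw [← hx]; exact_mod_cast zpow_natCast t (2^n)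
    rw [h2] at h1
    rw [h1, ← h2]
    have : t ^ (j * 2^n) = t ^ ((j-1) * 2^n) * t ^ ((2:ℤ)^n) := by rw [← zpow_add]; congr 1; ring
    rw [this, (hzero _).2, one_mul]
    obtain ⟨k, hk⟩ := hjodd
    exact ⟨k, by rw [hk]; ring⟩
  have hyx : (g * t ^ i) * x = x * (g * t ^ i) := by
    have h1 : g * x = x * g := mul_inv_eq_iff_eq_mul.1 hgx
    have h2 : Commute (t ^ i) x := by rw [← hx]; exact (Commute.refl t).zpow_left _ |>.pow_right _
    rw [mul_assoc, h2.eq, ← mul_assoc, h1, mul_assoc]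
  have hT : ∀ k : ℤ, t ^ k ∈ Subgroup.zpowers t := fun k => Subgroup.zpow_mem _ (Subgroup.mem_zpowers t) k
  have hxT : x ∈ Subgroup.zpowers t := by rw [← hx]; exact Subgroup.npow_mem_zpowers _ _
  rcases hu _ hsq hyx with h | h
  · apply hg
    rw [mul_eq_one_iff_eq_inv.1 h]
    exact Subgroup.inv_mem _ (hT _)
  · apply hg
    rw [eq_mul_inv_of_mul_eq h]
    exact Subgroup.mul_mem _ hxT (Subgroup.inv_mem _ (hT _))


theorem odd_of_odd_pow_two {G : Type*} [Group G] [Finite G] (g : G) (m k : ℕ) (hm : Odd m) (h1 : g ^ (k * m) = 1) (h2 : ∃ e : ℕ, g ^ (2^e) = 1) :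
    ∀ a, k = 2 ^ a → g ^ k = 1 := by
  rintro a rfl
  obtain ⟨e, he⟩ := h2
  have h3 : orderOf g ∣ 2^a * m := orderOf_dvd_of_pow_eq_one h1
  have h4 : orderOf g ∣ 2^e := orderOf_dvd_of_pow_eq_one he
  obtain ⟨b, hb, hb'⟩ := (Nat.dvd_prime_pow Nat.prime_two).1 h4
  apply orderOf_dvd_iff_pow_eq_one.1
  apply Nat.Coprime.dvd_of_dvd_mul_right _ h3
  rw [hb']
  exact Nat.Coprime.pow_left _ (Nat.coprime_two_left.2 hm)

theorem quat_false {G : Type*} [Group G] [Fintype G] {K : Finset G} {x t w : G} {p n : ℕ}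
    (Q : Quat K x (t ^ (2 ^ n)) w p) (ht : orderOf t = 2 ^ (n+2)) (hx : t ^ (2 ^ (n+1)) = x)
    (hu : ∀ z : G, z * z = 1 → z * x = x * z → z = 1 ∨ z = x)
    (hmax : ∀ g : G, (∃ m : ℕ, g ^ (2 ^ m) = 1) → g ^ (2 ^ (n+2)) = 1)
    (j : ℤ) (hj : w * t * w⁻¹ = t ^ j) (hj4 : j % 4 = 3) : False := by
  classical
  haveI : Fact (Nat.Prime 2) := ⟨Nat.prime_two⟩
  obtain ⟨v, hv⟩ : ∃ v, v = t ^ (2^n) := ⟨_, rfl⟩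
  rw [← hv] at Q
  have hzero : ∀ k : ℤ, t ^ k = 1 ↔ (2^(n+2) : ℤ) ∣ k := by
    intro k
    rw [← orderOf_dvd_iff_zpow_eq_one, ht]; push_cast; rfl
  let L : Subgroup G := Subgroup.centralizer ({v} : Set G)
  have hL : ∀ l, l ∈ L ↔ l * v = v * l := fun l => Subgroup.mem_centralizer_singleton_iff
  have htL : t ∈ L := by rw [hL, hv]; exact ((Commute.refl t).pow_right _).eq
  have hTL : Subgroup.zpowers t ≤ L := by rw [Subgroup.zpowers_le]; exact htL
  have hTp : IsPGroup 2 (Subgroup.zpowers t) := IsPGroup.of_card (n := n+2) (by rw [Nat.card_zpowers, ht])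
  let tL : L := ⟨t, htL⟩
  have htLo : orderOf tL = 2^(n+2) := by rw [← ht]; exact (Subgroup.orderOf_mk t htL)
  have hTp' : IsPGroup 2 (Subgroup.zpowers tL) := IsPGroup.of_card (n := n+2) (by rw [Nat.card_zpowers, htLo])
  let P : Sylow 2 L :=
    { toSubgroup := Subgroup.zpowers tL
      isPGroup' := hTp'
      is_maximal' := by
        intro R hR hle
        by_contra hne
        obtain ⟨g, hgR, hg, hgg, hgn⟩ := ext2 _ R hR hle (fun h => hne h.symm)
        obtain ⟨k, hk⟩ := hgn tL (Subgroup.mem_zpowers _)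
        have hk' : (g : G) * t * (g : G)⁻¹ = t ^ k := by
          have := congrArg (Subtype.val) hk
          simpa [tL] using this.symm
        have hmem : ∀ y : L, (y : G) ∈ Subgroup.zpowers t ↔ y ∈ Subgroup.zpowers tL := by
          intro y
          constructor
          · rintro ⟨a, ha⟩
            exact ⟨a, Subtype.ext (by simpa [tL] using ha)⟩
          · rintro ⟨a, ha⟩
            exact ⟨a, by rw [← ha]; simp [tL]⟩
        refine keycomp x t (n+1) hu ht hx hmax g (by rwa [hmem]) (by rw [← Subgroup.coe_mul, hmem]; exact hgg) k hk' ?_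
        have h1 : (g : G) * v = v * g := (hL g).1 g.2
        have h2 := zpow_conj (g : G) t k hk' (2^n)
        have h3 : t ^ ((2:ℤ)^n) = v := by rw [hv]; exact_mod_cast zpow_natCast t (2^n)
        rw [h3, h1, mul_inv_cancel_right] at h2
        have h4 : t ^ ((k - 1) * 2^n) = 1 := by
          rw [sub_mul, one_mul, zpow_sub, h3, ← h2]; simp
        rw [hzero, pow_add, mul_comm] at h4
        have h5 := Int.dvd_of_mul_dvd_mul_right (by positivity) h4
        omega }
  have hPc : IsCyclic P := by
    show IsCyclic (Subgroup.zpowers tL)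
    infer_instance
  have hcardP : Nat.card P = 2^(n+2) := by
    show Nat.card (Subgroup.zpowers tL) = _
    rw [Nat.card_zpowers, htLo]
  have hmin : (Nat.card L).minFac = 2 := by
    rw [Nat.minFac_eq_two_iff]
    have h1 : Nat.card P ∣ Nat.card L := Subgroup.card_subgroup_dvd_card _
    rw [hcardP] at h1
    exact (dvd_pow_self 2 (by omega)).trans h1
  let τ : L →* P := MonoidHom.transferSylow P (hPc.normalizer_le_centralizer hmin)
  have hτP : ∀ g (hg : g ∈ P), ((τ g : P) : L) = g ^ (P : Subgroup L).index := by
    intro g hg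
    have := MonoidHom.transferSylow_eq_pow P (hPc.normalizer_le_centralizer hmin) g hg
    exact congrArg Subtype.val this
  have hodd : Odd (P : Subgroup L).index := by
    rw [← Nat.not_even_iff_odd, even_iff_two_dvd]
    exact P.not_dvd_index
  set k0 := (P : Subgroup L).index with hk0
  have h2P : ∀ y : P, ∃ e : ℕ, y ^ (2^e) = 1 := fun y => by
    obtain ⟨e, he⟩ := P.isPGroup' y
    exact ⟨e, he⟩
  have htP : tL ∈ P := Subgroup.mem_zpowers tL
  -- key property
  have hkey : ∀ l : L, τ l ^ 2 ≠ 1 → v ∈ Subgroup.zpowers (l : G) := by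
    intro l hl
    by_contra hvl
    apply hl
    obtain ⟨e, m, hm, hem⟩ := Nat.exists_eq_two_pow_mul_odd (orderOf_pos l).ne'
    have hs : (l ^ m) ^ (2^e) = 1 := by rw [← pow_mul, mul_comm, ← hem]; exact pow_orderOf_eq_one l
    have hsp : IsPGroup 2 (Subgroup.zpowers (l ^ m)) := by
      obtain ⟨a, -, ha⟩ := (Nat.dvd_prime_pow Nat.prime_two).1 (orderOf_dvd_of_pow_eq_one hs)
      exact IsPGroup.of_card (n := a) (by rw [Nat.card_zpowers, ha])
    obtain ⟨R, hR⟩ := hsp.exists_le_sylow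
    obtain ⟨c, hc⟩ := MulAction.exists_smul_eq L R P
    have hcs : c * l ^ m * c⁻¹ ∈ P := by
      rw [← hc]
      have : l ^ m ∈ R := hR (Subgroup.mem_zpowers _)
      exact Sylow.smul_def (g := c) (P := R) ▸ Subgroup.smul_mem_pointwise_smul _ (MulAut.conj c) _ this
    obtain ⟨a, ha⟩ := hcs
    simp only at ha
    have hsq : (c * l ^ m * c⁻¹)^2 = 1 := by
      rw [← ha]
      have hvn : v ∉ Subgroup.zpowers (t ^ a) := by
        intro hva
        apply hvl
        have h1 : (v : G) ∈ Subgroup.zpowers ((c : G) * (l:G) ^ m * (c : G)⁻¹) := by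
          have : (c : G) * (l:G) ^ m * (c : G)⁻¹ = t ^ a := by
            have := congrArg Subtype.val ha
            simpa [tL] using this.symm
          rw [this]; exact hva
        obtain ⟨b, hb⟩ := h1
        simp only [conj_zpow] at hb
        have h2 : (c : G) * v = v * c := (hL c).1 c.2
        have h3 : ((l:G)^m)^b = v := by
          have h4 : ((l:G)^m)^b = (c:G)⁻¹ * v * c := by rw [← hb]; group
          rw [h4, mul_assoc, ← h2]; simp
        rw [← h3]
        exact Subgroup.zpow_mem _ (Subgroup.npow_mem_zpowers _ _) _
      suffices h : (t ^ a)^2 = 1 by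
        apply Subtype.ext
        simpa [tL] using h
      by_contra hne
      apply hvn
      -- gcd argument
      have hna : ¬ ((2:ℤ)^(n+1) ∣ a) := by
        rintro ⟨q, rfl⟩
        apply hne
        rw [← zpow_natCast, ← zpow_mul, hzero]
        exact ⟨q, by push_cast; ring⟩
      have hg : ((Int.gcd a (2^(n+2)) : ℕ) : ℤ) ∣ 2^n := by
        have h1 : Int.gcd a (2^(n+2)) ∣ 2^(n+2) := by
          have : ((Int.gcd a (2^(n+2)) : ℕ) : ℤ) ∣ 2^(n+2) := Int.gcd_dvd_right ..
          exact_mod_cast this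
        obtain ⟨r, hr, hr'⟩ := (Nat.dvd_prime_pow Nat.prime_two).1 h1
        have h2 : ((Int.gcd a (2^(n+2)) : ℕ) : ℤ) ∣ a := Int.gcd_dvd_left ..
        rw [hr'] at h2 ⊢
        have : r ≤ n := by
          by_contra hcon
          apply hna
          refine dvd_trans ?_ h2
          push_cast
          exact pow_dvd_pow _ (by omega)
        push_cast
        exact pow_dvd_pow _ this
      obtain ⟨q, hq⟩ := hg
      have hbez := Int.gcd_eq_gcd_ab a (2^(n+2))
      refine ⟨Int.gcdA a (2^(n+2)) * q, ?_⟩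
      simp only
      have h3 : t ^ ((2:ℤ)^n) = v := by rw [hv]; exact_mod_cast zpow_natCast t (2^n)
      rw [← h3, hq, hbez, add_mul, zpow_add, ← zpow_mul]
      have : t ^ (2 ^ (n + 2) * a.gcdB (2 ^ (n + 2)) * q) = 1 := by
        rw [hzero]; exact ⟨_, mul_assoc _ _ _⟩
      rw [this, mul_one, mul_assoc]
    have h1 : τ (c * l ^ m * c⁻¹) = (τ l)^m := by
      haveI : IsMulCommutative P := by infer_instance
      rw [map_mul, map_mul, mul_comm', map_inv, inv_mul_cancel_left, map_pow]
    have h2 : (τ l)^(2^1*m) = 1 := by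
      rw [pow_one, mul_comm, pow_mul, ← h1, ← map_pow, hsq, map_one]
    have := odd_of_odd_pow_two (τ l) m (2^1) hm h2 (h2P _) 1 rfl
    simpa using this
  have hτt : τ tL = (⟨tL, htP⟩ : P)^k0 := by
    apply Subtype.ext; rw [hτP _ htP]; rfl
  rcases Nat.eq_zero_or_pos n with hn | hn
  · -- n = 0
    subst hn
    have hvt : v = t := by rw [hv]; simp
    have hcompl : (τ.ker).IsComplement' (P : Subgroup L) := hPc.isComplement' hmin
    have hodd' : Odd (Nat.card τ.ker) := by
      rw [← Nat.not_even_iff_odd, even_iff_two_dvd]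
      exact MonoidHom.not_dvd_card_ker_transferSylow P (hPc.normalizer_le_centralizer hmin)
    have hmemO : ∀ g, g ∈ τ.ker.map L.subtype ↔ g ∈ L ∧ Odd (orderOf g) := by
      intro g
      constructor
      · rintro ⟨l, hl, rfl⟩
        refine ⟨l.2, ?_⟩
        have h1 : orderOf (⟨l, hl⟩ : τ.ker) ∣ Nat.card τ.ker := orderOf_dvd_natCard _
        have h2 : orderOf (L.subtype l) = orderOf (⟨l, hl⟩ : τ.ker) := by
          rw [Subgroup.orderOf_mk]
          exact Subgroup.orderOf_coe l
        rw [h2]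
        exact Odd.of_dvd_nat hodd' h1
      · rintro ⟨hgL, ho⟩
        refine ⟨⟨g, hgL⟩, ?_, rfl⟩
        rw [SetLike.mem_coe, MonoidHom.mem_ker]
        have h1 : (τ ⟨g, hgL⟩)^(2^0 * orderOf g) = 1 := by
          rw [pow_zero, one_mul, ← map_pow]
          have : (⟨g, hgL⟩ : L)^(orderOf g) = 1 := Subtype.ext (by simp [pow_orderOf_eq_one])
          rw [this, map_one]
        have := odd_of_odd_pow_two _ _ _ ho h1 (h2P _) 0 rfl
        simpa using this
    have hcardO : Nat.card (τ.ker.map L.subtype) = Nat.card τ.ker :=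
      (Nat.card_congr (τ.ker.equivMapOfInjective L.subtype L.subtype_injective).toEquiv).symm
    refine Q.norm4 (τ.ker.map L.subtype) (by rw [hcardO]; exact hodd') ?_ ?_ ?_ ?_
    · intro o ho
      exact (hL o).1 ((hmemO o).1 ho).1
    · intro o ho
      rw [hmemO] at ho ⊢
      exact ⟨Q.conj_mem o ho.1, by rw [orderOf_conj']; exact ho.2⟩
    · intro l hl
      have h1 := hcompl.symm.mul_eq
      have h2 : (⟨l, (hL l).2 hl⟩ : L) ∈ ((P : Subgroup L) : Set L) * (τ.ker : Set L) := by rw [h1]; trivial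
      obtain ⟨a, ha, o, ho, hao⟩ := h2
      obtain ⟨q, hq⟩ := (Submonoid.mem_powers_iff _ _).1 (mem_powers_iff_mem_zpowers.2 (show a ∈ Subgroup.zpowers tL from ha))
      refine ⟨q, o, ⟨o, ho, rfl⟩, ?_⟩
      have := congrArg Subtype.val hao
      simp only [Subgroup.coe_mul] at this
      rw [← this, ← hq, hvt]; simp [tL]
    · rw [hcardO]
      have := hcompl.card_mul
      have h2 : Nat.card (P : Subgroup L) = 4 := hcardP.trans (by norm_num)
      rw [h2] at this
      rw [mul_comm]; exact this.symm
  · -- n ≥ 1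
    have hprim := Complex.isPrimitiveRoot_exp (2^(n+1)) (by positivity)
    set ζ := Complex.exp (2 * Real.pi * Complex.I / ((2^(n+1) : ℕ) : ℂ)) with hζ
    obtain ⟨z, hz⟩ : ∃ z : ℂˣ, (z : ℂ) = ζ := ⟨(hprim.isUnit (by positivity)).unit, rfl⟩
    have hzp : IsPrimitiveRoot z (2^(n+1)) := by
      rw [← IsPrimitiveRoot.coe_units_iff, hz]; exact hprim
    let gP : P := ⟨tL, htP⟩
    have hgP : ∀ y : P, y ∈ Subgroup.zpowers gP := by
      rintro ⟨y, a, ha⟩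
      exact ⟨a, Subtype.ext ha⟩
    have hgPo : orderOf gP = 2^(n+2) := by rw [← htLo]; exact Subgroup.orderOf_mk _ _
    let lam : P →* ℂˣ := monoidHomOfForallMemZpowers hgP (g' := z) (by
      rw [hgPo, ← hzp.eq_orderOf]; exact pow_dvd_pow _ (by omega))
    have hlam : lam gP = z := monoidHomOfForallMemZpowers_apply_gen _ _
    have hzz : ∀ a : ℤ, z ^ a = 1 ↔ (2^(n+1) : ℤ) ∣ a := by
      intro a; rw [hzp.zpow_eq_one_iff_dvd]; push_cast; rfl
    refine Q.norm3 ((Units.coeHom ℂ).comp (lam.comp τ)) ?_ ?_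
    · intro l hl
      apply hkey
      intro h
      apply hl
      obtain ⟨a, ha⟩ := hgP (τ l)
      simp only at ha
      simp only [MonoidHom.comp_apply, Units.coeHom_apply]
      rw [← ha, map_zpow, hlam, (hzz a).2]
      · simp
      · rw [← ha, ← zpow_natCast, ← zpow_mul, ← orderOf_dvd_iff_zpow_eq_one, hgPo, pow_succ] at h
        push_cast at h
        exact Int.dvd_of_mul_dvd_mul_right (by positivity) h
    · refine ⟨tL, ?_⟩
      have h1 : Q.cw tL = tL ^ j := by
        apply Subtype.ext
        show w * t * w⁻¹ = _
        rw [hj]; simp [tL]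
      intro h
      rw [h1] at h
      simp only [MonoidHom.comp_apply, Units.coeHom_apply, Units.val_inj] at h
      have h2 : lam (τ tL) = z ^ (k0 : ℤ) := by
        rw [hτt, map_pow, zpow_natCast]; congr 1
      rw [map_zpow, map_zpow, h2, ← zpow_mul] at h
      have h3 : z ^ ((k0 : ℤ) * (j - 1)) = 1 := by
        rw [mul_sub, zpow_sub, h, mul_one, mul_inv_cancel]
      rw [hzz] at h3
      have h4 : IsCoprime ((2:ℤ)^(n+1)) (k0 : ℤ) := by
        apply IsCoprime.pow_left
        obtain ⟨q, hq⟩ := hodd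
        exact ⟨-q, 1, by rw [hq]; push_cast; ring⟩
      have h5 := h4.dvd_of_dvd_mul_left h3
      have h6 : (4:ℤ) ∣ j - 1 := by
        refine dvd_trans ?_ h5
        have : (2:ℤ)^2 ∣ 2^(n+1) := pow_dvd_pow _ (by omega)
        norm_num at this ⊢; exact this
      omega


theorem hu_conj {G : Type*} [Group G] {x : G} (hu : ∀ z : G, z * z = 1 → z * x = x * z → z = 1 ∨ z = x) (g : G) :
    ∀ z : G, z * z = 1 → z * (g * x * g⁻¹) = (g * x * g⁻¹) * z → z = 1 ∨ z = g * x * g⁻¹ := by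
  intro z hz hc
  rcases hu (g⁻¹ * z * g) (by
    calc g⁻¹ * z * g * (g⁻¹ * z * g) = g⁻¹ * (z * z) * g := by group
      _ = 1 := by rw [hz]; simp) (by
    calc g⁻¹ * z * g * x = g⁻¹ * (z * (g * x * g⁻¹)) * g := by group
      _ = g⁻¹ * ((g * x * g⁻¹) * z) * g := by rw [hc]
      _ = _ := by group) with h | h
  · left
    calc z = g * (g⁻¹ * z * g) * g⁻¹ := by group
      _ = 1 := by rw [h]; simp
  · right
    rw [← h]; group

theorem inv_in_K {G : Type*} [Group G] [Finite G] {x : G} (hxx : x * x = 1) (hx1 : x ≠ 1)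
    (hu : ∀ z : G, z * z = 1 → z * x = x * z → z = 1 ∨ z = x) (y : G) (hy : y * y = 1) (hy1 : y ≠ 1) :
    ∃ g, y = g * x * g⁻¹ := by
  haveI : Fact (Nat.Prime 2) := ⟨Nat.prime_two⟩
  have h2g : ∀ y : G, y * y = 1 → IsPGroup 2 (Subgroup.zpowers y) := by
    intro y hy
    obtain ⟨a, -, ha⟩ := (Nat.dvd_prime_pow Nat.prime_two).1 (show orderOf y ∣ 2^1 from orderOf_dvd_of_pow_eq_one (by rw [pow_one, pow_two, hy]))
    exact IsPGroup.of_card (n := a) (by rw [Nat.card_zpowers, ha])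
  obtain ⟨S, hS⟩ := (h2g y hy).exists_le_sylow
  obtain ⟨R, hR⟩ := (h2g x hxx).exists_le_sylow
  obtain ⟨g, hg⟩ := MulAction.exists_smul_eq G R S
  have hyS : y ∈ S := hS (Subgroup.mem_zpowers y)
  have hxS : g * x * g⁻¹ ∈ S := by
    rw [← hg]
    exact Sylow.smul_def (g := g) (P := R) ▸ Subgroup.smul_mem_pointwise_smul _ (MulAut.conj g) _ (hR (Subgroup.mem_zpowers x))
  refine ⟨g, ?_⟩
  have hx'1 : g * x * g⁻¹ ≠ 1 := by
    intro h; apply hx1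
    have : x = g⁻¹ * (g * x * g⁻¹) * g := by group
    rw [this, h]; simp
  haveI : Nontrivial S := ⟨⟨⟨y, hyS⟩, 1, fun h => hy1 (congrArg Subtype.val h)⟩⟩
  haveI := S.isPGroup'.center_nontrivial
  have hcp : IsPGroup 2 (Subgroup.center S) := S.isPGroup'.to_subgroup _
  obtain ⟨a, ha0, ha⟩ := hcp.nontrivial_iff_card.1 inferInstance
  obtain ⟨z, hz⟩ := exists_prime_orderOf_dvd_card' (G := Subgroup.center S) 2 (by rw [ha]; exact dvd_pow_self 2 (by omega))
  have hz2 : z * z = 1 := by rw [← pow_two]; exact orderOf_dvd_iff_pow_eq_one.1 hz.dvd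
  have hz1 : z ≠ 1 := by rintro rfl; simp at hz
  have hzc : ∀ s ∈ S, s * ((z : S) : G) = ((z : S) : G) * s := by
    intro s hs
    have := Subgroup.mem_center_iff.1 z.2 ⟨s, hs⟩
    exact congrArg Subtype.val this
  have hzz : ((z : S) : G) * ((z : S) : G) = 1 := by
    have := congrArg (fun q : Subgroup.center S => ((q : S) : G)) hz2
    simpa using this
  have hz1' : ((z : S) : G) ≠ 1 := by
    intro h; apply hz1; apply Subtype.ext; apply Subtype.ext; simpa using h
  have e1 := (hu_conj hu g _ hzz (hzc _ hxS).symm).resolve_left hz1'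
  have h2 := hzc y hyS
  rw [e1] at h2
  exact (hu_conj hu g y hy h2).resolve_left hy1

theorem e2 {G : Type*} [Group G] [Fintype G] (K : Finset G) (x : G) (p : ℕ)
    (conj : ∀ u ∈ K, ∀ g, g⁻¹ * u * g ∈ K) (cls : ∀ u ∈ K, ∃ g, u = g⁻¹ * x * g) (xK : x ∈ K)
    (gen : Subgroup.closure (K : Set G) = ⊤) (podd : Odd p) (pw : ∀ u ∈ K, ∀ v ∈ K, (u * v)^p = 1)
    (hxx : x * x = 1) (hx1 : x ≠ 1) (hu : ∀ z : G, z * z = 1 → z * x = x * z → z = 1 ∨ z = x)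
    (S : Sylow 2 G) : IsCyclic S := by
  classical
  haveI : Fact (Nat.Prime 2) := ⟨Nat.prime_two⟩
  have hxo : orderOf x = 2 := by
    apply orderOf_eq_prime _ hx1
    rw [pow_two, hxx]
  obtain ⟨t, ht, htmax⟩ := Finset.exists_max_image (Finset.univ.filter (fun g : G => ∃ m : ℕ, g ^ (2^m) = 1)) orderOf
    ⟨x, by simp only [Finset.mem_filter, Finset.mem_univ, true_and]; exact ⟨1, by rw [pow_one, pow_two, hxx]⟩⟩
  simp only [Finset.mem_filter, Finset.mem_univ, true_and] at ht htmax
  have h2o : ∀ g : G, (∃ m : ℕ, g ^ (2^m) = 1) → ∃ a, orderOf g = 2 ^ a := by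
    rintro g ⟨m, hm⟩
    obtain ⟨a, -, ha⟩ := (Nat.dvd_prime_pow Nat.prime_two).1 (orderOf_dvd_of_pow_eq_one hm)
    exact ⟨a, ha⟩
  obtain ⟨n', hn'⟩ := h2o t ht
  have hmax : ∀ g : G, (∃ m : ℕ, g ^ (2 ^ m) = 1) → g ^ (2 ^ n') = 1 := by
    intro g hg
    obtain ⟨a, ha⟩ := h2o g hg
    have := htmax g hg
    rw [ha, hn'] at this
    have h3 := (Nat.pow_le_pow_iff_right (by norm_num)).1 this
    apply orderOf_dvd_iff_pow_eq_one.1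
    rw [ha]
    exact pow_dvd_pow _ h3
  have hn1 : 1 ≤ n' := by
    have := htmax x ⟨1, by rw [pow_one, pow_two, hxx]⟩
    rw [hxo, hn'] at this
    by_contra h
    have : n' = 0 := by omega
    subst this
    norm_num at this
  obtain ⟨n, rfl⟩ : ∃ n, n' = n + 1 := ⟨n' - 1, by omega⟩
  obtain ⟨g, hg⟩ := inv_in_K hxx hx1 hu (t ^ (2^n)) (by
    rw [← pow_add, ← two_mul, ← pow_succ', ← hn']; exact pow_orderOf_eq_one t) (by
    intro h
    have := orderOf_dvd_of_pow_eq_one h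
    rw [hn'] at this
    have := (Nat.pow_dvd_pow_iff_le_right (by norm_num)).1 this
    omega)
  -- replace t
  obtain ⟨s, hs⟩ : ∃ s, s = g⁻¹ * t * g⁻¹⁻¹ := ⟨_, rfl⟩
  have hso : orderOf s = 2^(n+1) := by rw [hs, orderOf_conj', hn']
  have hsx : s ^ (2^n) = x := by
    rw [hs, conj_pow, hg]; group
  have hzero : ∀ k : ℤ, s ^ k = 1 ↔ (2^(n+1) : ℤ) ∣ k := by
    intro k
    rw [← orderOf_dvd_iff_zpow_eq_one, hso]; push_cast; rfl
  have hsp : IsPGroup 2 (Subgroup.zpowers s) := IsPGroup.of_card (n := n+1) (by rw [Nat.card_zpowers, hso])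
  obtain ⟨R, hR⟩ := hsp.exists_le_sylow
  by_cases hRc : Subgroup.zpowers s = R
  · have : IsCyclic R := by
      have : IsCyclic (R : Subgroup G) := by rw [← hRc]; infer_instance
      exact this
    exact isCyclic_of_surjective (R.equiv S) (R.equiv S).surjective
  exfalso
  obtain ⟨w, hwR, hw, hww, hwn⟩ := ext2 _ (R : Subgroup G) R.isPGroup' hR hRc
  obtain ⟨j, hj⟩ := hwn s (Subgroup.mem_zpowers s)
  simp only at hj
  have h2n : s ^ ((2:ℤ)^n) = x := by rw [← hsx]; exact_mod_cast zpow_natCast s (2^n)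
  have hjodd : j % 2 = 1 := by
    by_contra h
    have h1 := zpow_conj w s j hj.symm (2^n)
    rw [h2n, (hzero _).2] at h1
    · apply hx1
      have : x = w⁻¹ * (w * x * w⁻¹) * w := by group
      rw [this, h1]; simp
    · refine ⟨j/2, ?_⟩
      have h3 : j = 2 * (j/2) := by omega
      nth_rewrite 1 [h3]; ring
  have hcase : j % 4 = 1 ∨ j % 4 = 3 := by omega
  rcases hcase with h4 | h4
  · exact keycomp x s n hu hso hsx hmax w hw hww j hj.symm h4
  rcases Nat.eq_zero_or_pos n with hn | hn
  · subst hn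
    refine keycomp x s 0 hu hso hsx hmax w hw hww 1 ?_ (by norm_num)
    rw [← hj]
    have : s ^ j = s ^ (j - 1) * s ^ (1:ℤ) := by rw [← zpow_add]; congr 1; ring
    rw [this, (hzero _).2, one_mul]
    norm_num; omega
  obtain ⟨m, rfl⟩ : ∃ m, n = m + 1 := ⟨n - 1, by omega⟩
  have h2m : s ^ ((2:ℤ)^m) = s ^ (2^m) := by exact_mod_cast zpow_natCast s (2^m)
  have Q : Quat K x (s ^ (2^m)) w p :=
    { conj := conj, cls := cls, xK := xK, gen := gen, podd := podd, pw := pw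
      v4 := by
        rw [orderOf_pow_of_dvd (by positivity) (by rw [hso]; exact pow_dvd_pow _ (by omega)), hso]
        rw [show m + 1 + 1 = 2 + m by ring, pow_add, Nat.mul_div_cancel _ (by positivity)]; norm_num
      vx := by
        rw [← pow_add, ← two_mul, ← pow_succ', hsx]
      hw := by
        have h1 := zpow_conj w s j hj.symm (2^m)
        rw [h2m] at h1
        rw [h1, eq_inv_iff_mul_eq_one, ← h2m, ← zpow_add, hzero]
        refine ⟨(j+1)/4, ?_⟩
        have : j + 1 = 4 * ((j+1)/4) := by omega
        calc j * 2^m + 2^m = (j + 1) * 2^m := by ring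
          _ = 4 * ((j+1)/4) * 2^m := by rw [← this]
          _ = _ := by ring }
  exact quat_false Q hso hsx hu hmax j hj.symm h4


structure Hyp {G : Type*} [Group G] (p : ℕ) (K : Set G) : Prop where
  conj : ∀ u ∈ K, ∀ g : G, g * u * g⁻¹ ∈ K
  inv : ∀ u ∈ K, u * u = 1
  pw : ∀ u ∈ K, ∀ v ∈ K, (u * v) ^ p = 1

namespace Hyp
variable {G : Type*} [Group G] {p : ℕ} {K : Set G}

theorem inv_eq (h : Hyp p K) {u} (hu : u ∈ K) : u⁻¹ = u := inv_eq_of_mul_eq_one_left (h.inv u hu)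

theorem mid_eq (h : Hyp p K) {j : ℕ} (hp : p + 1 = 2 * j) {u v m : G} (hu : u ∈ K) (hv : v ∈ K) (hm : m ∈ K)
    (e : m * u * m = v) : m = u * (u * v) ^ j := by
  have h1 : (u * m) ^ 2 = u * v := by rw [pow_two, ← e]; group
  rw [← h1, ← pow_mul, ← hp, pow_succ, h.pw u hu m hm, one_mul, ← mul_assoc, h.inv u hu, one_mul]

theorem mid_uniq (h : Hyp p K) (hp : Odd p) {u m m' : G} (hu : u ∈ K) (hm : m ∈ K) (hm' : m' ∈ K)
    (e : m * u * m = m' * u * m') : m = m' := by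
  obtain ⟨i, hi⟩ := hp
  have hv : m' * u * m' ∈ K := by
    have := h.conj u hu m'
    rwa [h.inv_eq hm'] at this
  have hj : p + 1 = 2 * (i+1) := by omega
  rw [h.mid_eq hj hu hv hm e, ← h.mid_eq hj hu hv hm' rfl]

theorem mid_ex (h : Hyp p K) (hp : Odd p) {u v : G} (hu : u ∈ K) (hv : v ∈ K) : ∃ m ∈ K, m * u * m = v := by
  obtain ⟨i, hi⟩ := hp
  have hj : p + 1 = 2 * (i+1) := by omega
  set s := u * v with hs
  have hsp : s ^ p = 1 := h.pw u hu v hv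
  have inv1 : u * s * u⁻¹ = s⁻¹ := by
    rw [hs, mul_inv_rev, h.inv_eq hu, h.inv_eq hv, ← mul_assoc u u v, h.inv u hu, one_mul]
  have invn : ∀ n : ℕ, u * s ^ n * u⁻¹ = (s ^ n)⁻¹ := by
    intro n
    rw [← conj_pow, inv1, inv_pow]
  have e0 : s ^ (2 * (i+1)) = s := by rw [← hj, pow_succ, hsp, one_mul]
  refine ⟨u * s ^ (i+1), ?_, ?_⟩
  · have e1 : s ^ (i+1) = s ^ ((i+1)*(i+1)) * s ^ ((i+1)*(i+1)) := by
      rw [← pow_add]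
      conv_lhs => rw [← e0, ← pow_mul]
      congr 1; ring
    have e2 := invn ((i+1)*(i+1))
    have e3 : u * s ^ (i+1) = (s ^ ((i+1)*(i+1)))⁻¹ * u * ((s ^ ((i+1)*(i+1)))⁻¹)⁻¹ := by
      rw [inv_inv, ← e2, e1]; simp only [mul_assoc, inv_mul_cancel_left]
    rw [e3]
    exact h.conj u hu _
  · have e4 : u * (u * s ^ (i+1) * u * (u * s ^ (i+1))) = s := by
      rw [show u * (u * s ^ (i+1) * u * (u * s ^ (i+1))) = (u * u) * s ^ (i+1) * (u * u) * s ^ (i+1) by group,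
        h.inv u hu, one_mul, mul_one, ← pow_add, ← two_mul, e0]
    rw [hs] at e4
    exact mul_left_cancel e4

/-- conjugation action of the group on a conjugation-closed set -/
@[reducible] def act (h : Hyp p K) : MulAction G K where
  smul g u := ⟨g * u * g⁻¹, h.conj u u.2 g⟩
  one_smul u := Subtype.ext (by change 1 * (u : G) * 1⁻¹ = u; simp)
  mul_smul a b u := Subtype.ext (by change a * b * (u : G) * (a*b)⁻¹ = a * (b * u * b⁻¹) * a⁻¹; group)

theorem exists_conj (h : Hyp p K) (hp : Odd p) {u v : G} (hu : u ∈ K) (hv : v ∈ K) : ∃ g ∈ K, g * u * g⁻¹ = v := by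
  obtain ⟨m, hm, e⟩ := h.mid_ex hp hu hv
  exact ⟨m, hm, by rw [h.inv_eq hm, e]⟩

theorem card_idx (h : Hyp p K) (hp : Odd p) {y : G} (hy : y ∈ K) : K.ncard = (Subgroup.centralizer ({y} : Set G)).index := by
  letI := h.act
  have h1 := MulAction.index_stabilizer G (⟨y, hy⟩ : K)
  have h2 : MulAction.stabilizer G (⟨y, hy⟩ : K) = Subgroup.centralizer ({y} : Set G) := by
    ext g
    rw [MulAction.mem_stabilizer_iff, Subgroup.mem_centralizer_singleton_iff, Subtype.ext_iff]
    change g * y * g⁻¹ = y ↔ _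
    rw [mul_inv_eq_iff_eq_mul]
  have h3 : MulAction.orbit G (⟨y, hy⟩ : K) = Set.univ := by
    rw [Set.eq_univ_iff_forall]
    rintro ⟨v, hv⟩
    obtain ⟨g, _, e⟩ := h.exists_conj hp hy hv
    exact ⟨g, Subtype.ext e⟩
  rw [h2, h3, Set.ncard_univ, Nat.card_coe_set_eq] at h1
  exact h1.symm

theorem card_pow [Finite G] [hpp : Fact p.Prime] (h : Hyp p K) (hp : Odd p) {x : G} (hx : x ∈ K)
    (good : IsPGroup p (Subgroup.closure (K * K))) : ∃ n, K.ncard = p ^ n := by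
  letI := h.act
  obtain ⟨n, hn⟩ := good.card_orbit (α := K) ⟨x, hx⟩
  refine ⟨n, ?_⟩
  have h3 : MulAction.orbit (Subgroup.closure (K * K)) (⟨x, hx⟩ : K) = Set.univ := by
    rw [Set.eq_univ_iff_forall]
    rintro ⟨v, hv⟩
    obtain ⟨m, hm, e⟩ := h.mid_ex hp hx hv
    refine ⟨⟨m * x, Subgroup.subset_closure (Set.mul_mem_mul hm hx)⟩, Subtype.ext ?_⟩
    change m * x * x * (m * x)⁻¹ = v
    rw [mul_assoc m x x, h.inv x hx, mul_inv_rev, h.inv_eq hm, h.inv_eq hx, mul_one, ← mul_assoc, e]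
  rw [h3, Nat.card_univ, Nat.card_coe_set_eq] at hn
  exact hn

theorem sub (h : Hyp p K) (H : Subgroup G) : Hyp p (H.subtype ⁻¹' K) where
  conj u hu g := h.conj u hu g
  inv u hu := Subtype.ext (h.inv u hu)
  pw u hu v hv := Subtype.ext (h.pw u hu v hv)

theorem img (h : Hyp p K) {Q : Type*} [Group Q] (φ : G →* Q) (hφ : Function.Surjective φ) : Hyp p (φ '' K) where
  conj := by
    rintro _ ⟨u, hu, rfl⟩ g
    obtain ⟨g, rfl⟩ := hφ g
    exact ⟨_, h.conj u hu g, by simp⟩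
  inv := by
    rintro _ ⟨u, hu, rfl⟩
    rw [← map_mul, h.inv u hu, map_one]
  pw := by
    rintro _ ⟨u, hu, rfl⟩ _ ⟨v, hv, rfl⟩
    rw [← map_mul, ← map_pow, h.pw u hu v hv, map_one]

end Hyp

def WS (p : ℕ) (G : Type*) [Group G] : Prop := ∀ K : Set G, Hyp p K → IsPGroup p (Subgroup.closure (K * K))

namespace Hyp
variable {G : Type*} [Group G] {p : ℕ} {K : Set G}

theorem sub_good (h : Hyp p K) (H : Subgroup G) (w : WS p H) : IsPGroup p (Subgroup.closure ((K ∩ H) * (K ∩ H))) := by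
  have h1 := (w _ (h.sub H)).map H.subtype
  rw [MonoidHom.map_closure, Set.image_mul] at h1
  have : H.subtype '' (H.subtype ⁻¹' K) = K ∩ H := by
    rw [Set.image_preimage_eq_inter_range]; congr 1; simp
  rwa [this] at h1

theorem sub_card [Finite G] [Fact p.Prime] (h : Hyp p K) (hp : Odd p) (H : Subgroup G) (w : WS p H) {x : G} (hx : x ∈ K) (hxH : x ∈ H) :
    ∃ n, (K ∩ H : Set G).ncard = p ^ n := by
  obtain ⟨n, hn⟩ := (h.sub H).card_pow hp (x := ⟨x, hxH⟩) hx (w _ (h.sub H))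
  refine ⟨n, ?_⟩
  have : H.subtype '' (H.subtype ⁻¹' K) = K ∩ H := by
    rw [Set.image_preimage_eq_inter_range]; congr 1; simp
  rw [← this, Set.ncard_image_of_injective _ H.subtype_injective, hn]

theorem quot_good (h : Hyp p K) {Q : Type*} [Group Q] (φ : G →* Q) (hφ : Function.Surjective φ) (w : WS p Q)
    (hk : IsPGroup p φ.ker) : IsPGroup p (Subgroup.closure (K * K)) := by
  have h1 := (w _ (h.img φ hφ)).comap_of_ker_isPGroup φ hk
  refine h1.to_le ?_
  rw [Subgroup.closure_le]
  rintro _ ⟨u, hu, v, hv, rfl⟩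
  refine Subgroup.subset_closure ?_
  exact ⟨φ u, ⟨u, hu, rfl⟩, φ v, ⟨v, hv, rfl⟩, (map_mul φ u v).symm⟩

end Hyp


universe uu

/-- transitivity of a Sylow subgroup on a set of prime power size -/
theorem Hyp.sylow_trans {G : Type uu} [Group G] [Finite G] {p : ℕ} [Fact p.Prime] {K : Set G} (h : Hyp p K) (hp : Odd p)
    {x : G} (hx : x ∈ K) (b : ℕ) (hk : K.ncard = p ^ b) (P : Subgroup G) (a : ℕ) (hP : Nat.card P = p ^ a)
    (hmax : ¬ p ^ (a+1) ∣ Nat.card G) {v : G} (hv : v ∈ K) : ∃ g ∈ P, g * x * g⁻¹ = v := by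
  letI := h.act
  have hp1 : 1 < p := (Fact.out : p.Prime).one_lt
  have h1 := MulAction.index_stabilizer P (⟨x, hx⟩ : K)
  set T := MulAction.stabilizer P (⟨x, hx⟩ : K) with hT
  have hTp : IsPGroup p T := (IsPGroup.of_card hP).to_subgroup T
  obtain ⟨c, hc⟩ := IsPGroup.iff_card.1 hTp
  have h2 : T.index * Nat.card T = p ^ a := by rw [T.index_mul_card, hP]
  have hle : T.map P.subtype ≤ Subgroup.centralizer ({x} : Set G) := by
    rintro _ ⟨t, ht, rfl⟩
    rw [Subgroup.mem_centralizer_singleton_iff]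
    have := congrArg Subtype.val (MulAction.mem_stabilizer_iff.1 ht)
    change (t : G) * x * (t : G)⁻¹ = x at this
    rwa [mul_inv_eq_iff_eq_mul] at this
  have hd := Subgroup.card_dvd_of_le hle
  rw [Subgroup.card_map_of_injective P.subtype_injective, hc] at hd
  have h3 := (Subgroup.centralizer ({x} : Set G)).index_mul_card
  rw [← h.card_idx hp hx, hk] at h3
  have h4 : p ^ (b + c) ∣ Nat.card G := by
    rw [← h3, pow_add]; exact Nat.mul_dvd_mul_left _ hd
  have h5 : b + c ≤ a := by
    by_contra hcon
    exact hmax ((pow_dvd_pow p (by omega)).trans h4)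
  rw [hc] at h2
  have h6 : p ^ b ≤ T.index := by
    have : p ^ b * p ^ c ≤ T.index * p ^ c := by
      rw [h2, ← pow_add]; exact Nat.pow_le_pow_right (by omega) h5
    exact Nat.le_of_mul_le_mul_right this (by positivity)
  have h7 : MulAction.orbit P (⟨x, hx⟩ : K) = Set.univ := by
    apply Set.eq_of_subset_of_ncard_le (Set.subset_univ _)
    rw [Set.ncard_univ, Nat.card_coe_set_eq, hk, ← h1]
    exact h6
  have h8 : (⟨v, hv⟩ : K) ∈ MulAction.orbit P (⟨x, hx⟩ : K) := by rw [h7]; trivial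
  obtain ⟨g, hg⟩ := h8
  exact ⟨g, g.2, congrArg Subtype.val hg⟩

theorem extp {G : Type uu} [Group G] [Finite G] {p : ℕ} [Fact p.Prime] (P : Subgroup G) (a : ℕ) (hP : Nat.card P = p ^ a)
    (hd : p ^ (a+1) ∣ Nat.card G) : ∃ Q : Subgroup G, P ≤ Q ∧ Nat.card Q = p ^ (a+1) ∧ Q ≤ Subgroup.normalizer (P : Set G) := by
  obtain ⟨Q, hQ, hle⟩ := Sylow.exists_subgroup_card_pow_succ hd hP
  refine ⟨Q, hle, hQ, ?_⟩
  have hp : p.Prime := Fact.out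
  have h1 : (P.subgroupOf Q).index = p := by
    have := (P.subgroupOf Q).index_mul_card
    rw [Nat.card_congr (Subgroup.subgroupOfEquivOfLe hle).toEquiv, hP, hQ, pow_succ, mul_comm] at this
    exact Nat.eq_of_mul_eq_mul_left (pow_pos hp.pos a) this
  have h2 : (P.subgroupOf Q).Normal := by
    apply Subgroup.normal_of_index_eq_minFac_card
    rw [h1, hQ, hp.pow_minFac (by omega)]
  exact (Subgroup.normal_subgroupOf_iff_le_normalizer hle).1 h2

theorem Hyp.case_c {G : Type uu} [Group G] [Finite G] {p : ℕ} [Fact p.Prime] {K : Set G} (h : Hyp p K) (hp : Odd p)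
    (IH : ∀ (H : Type uu) [Group H] [Finite H], Nat.card H < Nat.card G → WS p H)
    {x v : G} (hx : x ∈ K) (hv : v ∈ K) (hxv : x ≠ v) (b : ℕ) (hk : K.ncard = p ^ b) :
    IsPGroup p (Subgroup.closure (K * K)) := by
  classical
  have hpp : p.Prime := Fact.out
  let S : Set (Subgroup G) := {P | IsPGroup p P ∧ ∀ g ∈ P, x * g * x⁻¹ ∈ P}
  have hxi := h.inv_eq hx
  have hS : Subgroup.zpowers (x * v) ∈ S := by
    refine ⟨?_, ?_⟩
    · have hxv1 : x * v ≠ 1 := by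
        intro e; apply hxv
        rw [← h.inv_eq hv]; exact eq_inv_of_mul_eq_one_left e
      apply IsPGroup.of_card (n := 1)
      rw [Nat.card_zpowers, pow_one]
      exact orderOf_eq_prime (h.pw x hx v hv) hxv1
    · rintro _ ⟨n, rfl⟩
      refine ⟨-n, ?_⟩
      simp only
      rw [← conj_zpow, zpow_neg, ← inv_zpow]
      congr 1
      rw [mul_inv_rev, h.inv_eq hv, hxi, ← mul_assoc, h.inv x hx, one_mul]
  obtain ⟨P, hPS, hPmax⟩ := Set.exists_max_image S (fun P => Nat.card P) (Set.toFinite S) ⟨_, hS⟩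
  obtain ⟨hPp, hPx⟩ := hPS
  have hPnt : 1 < Nat.card P := by
    have := hPmax _ hS
    have h2 : Nat.card (Subgroup.zpowers (x * v)) ≠ 1 := by
      intro e
      rw [Subgroup.card_eq_one, Subgroup.zpowers_eq_bot] at e
      apply hxv
      rw [← h.inv_eq hv]; exact eq_inv_of_mul_eq_one_left e
    have h3 : 0 < Nat.card (Subgroup.zpowers (x * v)) := Nat.card_pos
    omega
  have hmax' : ∀ Q ∈ S, P ≤ Q → Q = P := fun Q hQ hle => by
    have := hPmax Q hQ
    exact (SetLike.coe_injective (Set.eq_of_subset_of_ncard_le (s := (P : Set G)) (t := (Q : Set G)) hle (by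
      rw [← Nat.card_coe_set_eq, ← Nat.card_coe_set_eq]; exact this))).symm
  by_cases hN : Subgroup.normalizer (P : Set G) = ⊤
  · haveI : P.Normal := Subgroup.normalizer_eq_top_iff.1 hN
    refine h.quot_good (QuotientGroup.mk' P) (QuotientGroup.mk'_surjective P) (IH _ ?_) ?_
    · have := P.card_eq_card_quotient_mul_card_subgroup
      have h3 : 0 < Nat.card (G ⧸ P) := Nat.card_pos
      rw [this]; nlinarith
    · rwa [QuotientGroup.ker_mk']
  · set N := Subgroup.normalizer (P : Set G) with hNdef
    have hNlt : Nat.card N < Nat.card G := by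
      refine lt_of_le_of_ne (Nat.card_le_card_of_injective _ N.subtype_injective) ?_
      intro e; exact hN (Subgroup.eq_top_of_card_eq N e)
    have hxN : x ∈ N := by
      rw [hNdef, Subgroup.mem_normalizer_iff]
      intro g
      refine ⟨hPx g, fun hg => ?_⟩
      have := hPx _ hg
      have e : x * (x * g * x⁻¹) * x⁻¹ = g := by
        rw [hxi, show x * (x * g * x) * x = (x * x) * g * (x * x) by group, h.inv x hx]; simp
      rwa [e] at this
    have hW := h.sub_good N (IH N hNlt)
    set W := Subgroup.closure ((K ∩ N) * (K ∩ N)) with hWdef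
    have hWN : W ≤ N := by
      rw [hWdef, Subgroup.closure_le]
      rintro _ ⟨a, ha, b, hb, rfl⟩
      exact N.mul_mem ha.2 hb.2
    have hWx : ∀ g ∈ W, x * g * x⁻¹ ∈ W := by
      have : W ≤ W.comap (MulAut.conj x).toMonoidHom := by
        conv_lhs => rw [hWdef]
        rw [Subgroup.closure_le]
        rintro _ ⟨a, ha, b, hb, rfl⟩
        apply Subgroup.subset_closure
        refine ⟨x * a * x⁻¹, ⟨h.conj a ha.1 x, N.mul_mem (N.mul_mem hxN ha.2) (N.inv_mem hxN)⟩,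
          x * b * x⁻¹, ⟨h.conj b hb.1 x, N.mul_mem (N.mul_mem hxN hb.2) (N.inv_mem hxN)⟩, ?_⟩
        simp
      intro g hg
      exact this hg
    have hWP : W ≤ P := by
      have : W ⊔ P = P := by
        refine hmax' _ ⟨hW.to_sup_of_normal_right' hPp hWN, ?_⟩ le_sup_right
        have : W ⊔ P ≤ (W ⊔ P).comap (MulAut.conj x).toMonoidHom := by
          refine sup_le ?_ ?_
          · intro g hg; exact (le_sup_left : W ≤ W ⊔ P) (hWx g hg)
          · intro g hg; exact (le_sup_right : P ≤ W ⊔ P) (hPx g hg)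
        intro g hg
        exact this hg
      exact sup_eq_right.1 this
    obtain ⟨a, ha⟩ := IsPGroup.iff_card.1 hPp
    have hnd : ¬ p ^ (a+1) ∣ Nat.card G := by
      intro hd
      obtain ⟨Q, hPQ, hQ, hQN⟩ := extp P a ha hd
      have : Q = P := by
        refine hmax' Q ⟨IsPGroup.of_card hQ, ?_⟩ hPQ
        intro n hn
        have h1 : x * (n * x * n⁻¹) ∈ P := hWP (Subgroup.subset_closure (Set.mul_mem_mul ⟨hx, hxN⟩
          ⟨h.conj x hx n, N.mul_mem (N.mul_mem (hQN hn) hxN) (N.inv_mem (hQN hn))⟩))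
        have e : x * n * x⁻¹ = x * (n * x * n⁻¹) * n := by rw [hxi]; group
        rw [e]
        exact Q.mul_mem (hPQ h1) hn
      rw [this, ha] at hQ
      have := Nat.pow_right_injective hpp.two_le hQ
      omega
    have key : ∀ u ∈ K, x * u ∈ P := by
      intro u hu
      obtain ⟨g, hg, e⟩ := h.sylow_trans hp hx b hk P a ha hnd hu
      rw [← e, show x * (g * x * g⁻¹) = (x * g * x) * g⁻¹ by group]
      have := hPx g hg
      rw [hxi] at this
      exact P.mul_mem this (P.inv_mem hg)
    refine hPp.to_le ?_
    rw [Subgroup.closure_le]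
    rintro _ ⟨u, hu, w, hw, rfl⟩
    have e : u * w = (x * u)⁻¹ * (x * w) := by rw [mul_inv_rev, h.inv_eq hu, hxi, mul_assoc, ← mul_assoc x x, h.inv x hx, one_mul]
    change u * w ∈ P
    rw [e]
    exact P.mul_mem (P.inv_mem (key u hu)) (key w hw)



theorem Hyp.central {G : Type uu} [Group G] [Finite G] {p : ℕ} [Fact p.Prime] {K : Set G} (h : Hyp p K) (hp : Odd p)
    (IH : ∀ (H : Type uu) [Group H] [Finite H], Nat.card H < Nat.card G → WS p H)
    {x z : G} (hx : x ∈ K) (hz : z * z = 1) (hz1 : z ≠ 1) (hc : ∀ g, g * z = z * g) : ∃ n, K.ncard = p ^ n := by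
  have hz2 : z ^ 2 = 1 := by rw [pow_two, hz]
  set Z := Subgroup.zpowers z with hZ
  haveI : Z.Normal := by
    refine ⟨?_⟩
    rintro _ ⟨n, rfl⟩ g
    refine ⟨n, ?_⟩
    have : Commute g z := hc g
    simp only
    rw [(this.zpow_right n).eq, mul_inv_cancel_right]
  have hcardZ : Nat.card Z = 2 := by
    rw [hZ, Nat.card_zpowers]; exact orderOf_eq_prime hz2 hz1
  have hlt : Nat.card (G ⧸ Z) < Nat.card G := by
    have := Z.card_eq_card_quotient_mul_card_subgroup
    have h3 : 0 < Nat.card (G ⧸ Z) := Nat.card_pos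
    rw [this, hcardZ]; omega
  have hs := QuotientGroup.mk'_surjective Z
  have hi := h.img (QuotientGroup.mk' Z) hs
  obtain ⟨n, hn⟩ := hi.card_pow hp (x := QuotientGroup.mk' Z x) ⟨x, hx, rfl⟩ (IH _ hlt _ hi)
  refine ⟨n, ?_⟩
  rw [← hn, Set.InjOn.ncard_image]
  intro u hu v hv e
  have e1 : u⁻¹ * v ∈ Z := QuotientGroup.eq.1 e
  rw [h.inv_eq hu] at e1
  have e2 : (u * v) ^ 2 = 1 := by
    obtain ⟨m, hm⟩ := e1
    simp only at hm
    rw [← hm, ← zpow_natCast, ← zpow_mul, mul_comm, zpow_mul, zpow_natCast, hz2, one_zpow]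
  have e3 := h.pw u hu v hv
  have e4 : u * v = 1 := by
    obtain ⟨i, hi⟩ := hp
    rw [hi, pow_succ, pow_mul, e2, one_pow, one_mul] at e3
    exact e3
  rw [← h.inv_eq hv]; exact eq_inv_of_mul_eq_one_left e4

theorem cent_lt {G : Type uu} [Group G] [Finite G] {z : G} (hz : ¬ ∀ g, g * z = z * g) :
    Nat.card (Subgroup.centralizer ({z} : Set G)) < Nat.card G := by
  refine lt_of_le_of_ne (Nat.card_le_card_of_injective _ (Subgroup.subtype_injective _)) ?_
  intro e
  apply hz
  have := Subgroup.eq_top_of_card_eq _ e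
  intro g
  have hg : g ∈ Subgroup.centralizer ({z} : Set G) := by rw [this]; trivial
  exact (Subgroup.mem_centralizer_singleton_iff.1 hg)

theorem Hyp.case_d {G : Type uu} [Group G] [Finite G] {p : ℕ} [Fact p.Prime] {K : Set G} (h : Hyp p K) (hp : Odd p)
    (IH : ∀ (H : Type uu) [Group H] [Finite H], Nat.card H < Nat.card G → WS p H)
    {x z : G} (hx : x ∈ K) (hz : z * z = 1) (hz1 : z ≠ 1) (hzx : z ≠ x) (hc : z * x = x * z) : ∃ n, K.ncard = p ^ n := by
  classical
  have hzi : z⁻¹ = z := inv_eq_of_mul_eq_one_left hz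
  have hxi := h.inv_eq hx
  by_cases c1 : ∀ g, g * z = z * g
  · exact h.central hp IH hx hz hz1 c1
  by_cases c2 : ∀ g, g * (x * z) = (x * z) * g
  · refine h.central hp IH hx (z := x * z) ?_ ?_ c2
    · rw [show x * z * (x * z) = x * (z * x) * z by group, hc, show x * (x * z) * z = (x * x) * (z * z) by group, hz, h.inv x hx, one_mul]
    · intro e; apply hzx
      rw [← hxi]; exact (inv_eq_of_mul_eq_one_right e).symm
  obtain ⟨a, ha⟩ := h.sub_card hp _ (IH _ (cent_lt c1)) hx (Subgroup.mem_centralizer_singleton_iff.2 hc.symm)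
  obtain ⟨b, hb⟩ := h.sub_card hp _ (IH _ (cent_lt c2)) hx (Subgroup.mem_centralizer_singleton_iff.2
    (by rw [mul_assoc, hc]))
  refine ⟨a + b, ?_⟩
  have conjz : ∀ u ∈ K, z * u * z ∈ K := by
    intro u hu; have := h.conj u hu z; rwa [hzi] at this
  have zz : ∀ u, z * (z * u * z) * z = u := by
    intro u; rw [show z * (z * u * z) * z = (z*z) * u * (z*z) by group, hz]; simp
  have hmid : ∀ u ∈ K, ∃ m ∈ K, m * u * m = z * u * z := fun u hu => h.mid_ex hp hu (conjz u hu)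
  let f : G → G := fun u => if hu : u ∈ K then (hmid u hu).choose else 1
  have hf : ∀ u ∈ K, f u ∈ K ∧ f u * u * f u = z * u * z := by
    intro u hu
    have := (hmid u hu).choose_spec
    simp only [f, dif_pos hu]; exact this
  have comz : ∀ m, z * m * z = m → m * z = z * m := by
    intro m e
    conv_lhs => rw [← e]
    rw [mul_assoc, hz, mul_one]
  have hfz : ∀ u ∈ K, f u * z = z * f u := by
    intro u hu
    obtain ⟨h1, h2⟩ := hf u hu
    apply comz
    apply h.mid_uniq hp (conjz u hu) (conjz _ h1) h1
    have e1 : z * f u * z * (z * u * z) * (z * f u * z) = z * (f u * u * f u) * z := by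
      rw [show z * f u * z * (z * u * z) * (z * f u * z) = z * f u * (z * z) * u * (z * z) * f u * z by group, hz]; group
    have e2 : f u * (z * u * z) * f u = u := by
      rw [← h2, show f u * (f u * u * f u) * f u = (f u * f u) * u * (f u * f u) by group, h.inv _ h1]; simp
    rw [e1, e2, h2, zz]
  let s := K.toFinite.toFinset
  have hKf : K.Finite := K.toFinite
  have hs : ∀ u, u ∈ hKf.toFinset ↔ u ∈ K := fun u => hKf.mem_toFinset
  let Kz : Set G := K ∩ (Subgroup.centralizer ({z} : Set G) : Set G)
  let Ky : Set G := K ∩ (Subgroup.centralizer ({x * z} : Set G) : Set G)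
  have hKz : Kz.Finite := Kz.toFinite
  have hcount := Finset.card_eq_sum_card_fiberwise (f := f) (s := hKf.toFinset) (t := hKz.toFinset) (by
    intro u hu
    have hu' : u ∈ K := (hs u).1 hu
    rw [Finset.mem_coe, hKz.mem_toFinset]
    exact ⟨(hf u hu').1, Subgroup.mem_centralizer_singleton_iff.2 (hfz u hu')⟩)
  have hfib : ∀ w ∈ hKz.toFinset, (hKf.toFinset.filter (fun u => f u = w)).card = Ky.ncard := by
    intro w hw
    rw [hKz.mem_toFinset] at hw
    obtain ⟨hwK, hwz⟩ := hw
    replace hwz := Subgroup.mem_centralizer_singleton_iff.1 hwz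
    obtain ⟨c, hcK, hcw⟩ := h.mid_ex hp hx hwK
    have hci := h.inv_eq hcK
    have hcz : c * z = z * c := by
      apply comz
      apply h.mid_uniq hp hx (conjz _ hcK) hcK
      have hx' : z * x * z = x := by rw [hc, mul_assoc, hz, mul_one]
      have hw' : z * w * z = w := by rw [← hwz, mul_assoc, hz, mul_one]
      conv_lhs => rw [← hx']
      rw [show z * c * z * (z * x * z) * (z * c * z) = z * c * (z * z) * x * (z * z) * c * z by group, hz]
      rw [show z * c * 1 * x * 1 * c * z = z * (c * x * c) * z by group, hcw, hw']
    have himg : (MulAut.conj c) '' Ky = {u | u ∈ K ∧ f u = w} := by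
      have hxz : c * (x * z) * c⁻¹ = w * z := by
        rw [hci, show c * (x * z) * c = c * x * (z * c) by group, ← hcz, ← hcw]; group
      have hfw : ∀ u ∈ K, f u = w ↔ u * (w * z) = (w * z) * u := by
        intro u hu
        obtain ⟨h1, h2⟩ := hf u hu
        have hwi := h.inv_eq hwK
        have : (w * u * w = z * u * z) ↔ u * (w * z) = (w * z) * u := by
          constructor
          · intro e
            have : w * (w * u * w) * z = w * (z * u * z) * z := by rw [e]
            rw [show w * (w * u * w) * z = (w * w) * (u * (w * z)) by group, h.inv _ hwK, one_mul,
              show w * (z * u * z) * z = w * z * u * (z * z) by group, hz, mul_one] at this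
            exact this
          · intro e
            have : w * (u * (w * z)) * z = w * (w * z * u) * z := by rw [e]
            rw [show w * (u * (w * z)) * z = w * u * w * (z * z) by group, hz, mul_one,
              show w * (w * z * u) * z = (w * w) * (z * u * z) by group, h.inv _ hwK, one_mul] at this
            exact this
        rw [← this]
        constructor
        · intro e; rw [e] at h2; exact h2
        · intro e; exact h.mid_uniq hp hu h1 hwK (h2.trans e.symm)
      ext u
      constructor
      · rintro ⟨y, ⟨hyK, hy⟩, rfl⟩
        have hy' := Subgroup.mem_centralizer_singleton_iff.1 hy
        have hmem : c * y * c⁻¹ ∈ K := h.conj y hyK c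
        refine ⟨hmem, (hfw _ hmem).2 ?_⟩
        rw [← hxz]
        rw [show c * y * c⁻¹ * (c * (x * z) * c⁻¹) = c * (y * (x * z)) * c⁻¹ by group, hy']; group
      · rintro ⟨huK, hu⟩
        have hu' := (hfw u huK).1 hu
        have hmem : c⁻¹ * u * c ∈ K := by have := h.conj u huK c⁻¹; rwa [inv_inv] at this
        refine ⟨c⁻¹ * u * c, ⟨hmem, Subgroup.mem_centralizer_singleton_iff.2 ?_⟩, ?_⟩
        · have hxz' : x * z = c⁻¹ * (w * z) * c := by rw [← hxz]; group
          rw [hxz', show c⁻¹ * u * c * (c⁻¹ * (w * z) * c) = c⁻¹ * (u * (w * z)) * c by group, hu']; group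
        · change c * (c⁻¹ * u * c) * c⁻¹ = u
          group
    rw [← Set.ncard_coe_finset, ← Set.ncard_image_of_injective Ky (MulAut.conj c).injective, himg]
    congr 1
    ext u
    simp [hs]
  rw [Finset.sum_congr rfl hfib, Finset.sum_const, smul_eq_mul] at hcount
  rw [Set.ncard_eq_toFinset_card K hKf, hcount, ← Set.ncard_eq_toFinset_card Kz hKz, pow_add, ← ha, ← hb]



theorem Hyp.case_e {G : Type uu} [Group G] [Finite G] {p : ℕ} [Fact p.Prime] {K : Set G} (h : Hyp p K) (hp : Odd p)
    (gen : Subgroup.closure K = ⊤)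
    {x : G} (hx : x ∈ K) (hx1 : x ≠ 1) (hu : ∀ z : G, z * z = 1 → z * x = x * z → z = 1 ∨ z = x) :
    ∃ n, K.ncard = p ^ n := by
  classical
  haveI := Fintype.ofFinite G
  haveI : Fact (Nat.Prime 2) := ⟨Nat.prime_two⟩
  have hpp : p.Prime := Fact.out
  have hxx := h.inv x hx
  obtain ⟨S⟩ : Nonempty (Sylow 2 G) := inferInstance
  have hKf : K.Finite := K.toFinite
  have hcyc : IsCyclic S := by
    refine e2 hKf.toFinset x p ?_ ?_ ?_ ?_ hp ?_ hxx hx1 hu S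
    · intro u hu g
      rw [hKf.mem_toFinset] at hu ⊢
      have := h.conj u hu g⁻¹
      rwa [inv_inv] at this
    · intro u hu
      rw [hKf.mem_toFinset] at hu
      obtain ⟨m, hm, e⟩ := h.exists_conj hp hx hu
      exact ⟨m⁻¹, by rw [inv_inv, e]⟩
    · rwa [hKf.mem_toFinset]
    · rw [hKf.coe_toFinset, gen]
    · intro u hu v hv
      rw [hKf.mem_toFinset] at hu hv
      exact h.pw u hu v hv
  have hxo : orderOf x = 2 := orderOf_eq_prime (by rw [pow_two, hxx]) hx1
  have h2G : 2 ∣ Nat.card G := hxo ▸ orderOf_dvd_natCard x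
  have hmin : (Nat.card G).minFac = 2 := (Nat.minFac_eq_two_iff _).2 h2G
  have inK : ∀ y : G, y * y = 1 → y ≠ 1 → y ∈ K := by
    intro y hy hy1
    obtain ⟨g, rfl⟩ := inv_in_K hxx hx1 hu y hy hy1
    exact h.conj x hx g
  -- helper
  have main : ∀ r : ℕ, r.Prime → r ∣ K.ncard → r = p := by
    intro r hr hrk
    haveI : Fact r.Prime := ⟨hr⟩
    by_contra hrp
    suffices hs : ∃ y ∈ K, ∃ R : Subgroup G, R ≤ Subgroup.centralizer ({y} : Set G) ∧ ¬ r ∣ R.index by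
      obtain ⟨y, hy, R, hle, hR⟩ := hs
      rw [h.card_idx hp hy] at hrk
      exact hR (hrk.trans (Subgroup.index_dvd_of_le hle))
    have h2S : 2 ∣ Nat.card S := by
      rw [S.card_eq_multiplicity]
      apply dvd_pow_self
      exact (Nat.Prime.factorization_pos_of_dvd Nat.prime_two Nat.card_pos.ne' h2G).ne'
    by_cases hr2 : r = 2
    · subst hr2
      obtain ⟨y, hy⟩ := exists_prime_orderOf_dvd_card' (G := S) 2 h2S
      have hyy : y * y = 1 := by rw [← pow_two]; exact orderOf_dvd_iff_pow_eq_one.1 hy.dvd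
      have hy1 : y ≠ 1 := by rintro rfl; simp at hy
      refine ⟨y, inK _ (congrArg Subtype.val hyy) (fun e => hy1 (Subtype.ext e)), S, ?_, S.not_dvd_index⟩
      intro s hs
      rw [Subgroup.mem_centralizer_singleton_iff]
      letI := hcyc.commGroup
      have := IsMulCommutative.is_comm.comm (⟨s, hs⟩ : S) y
      exact congrArg Subtype.val this
    · have hNC := IsCyclic.normalizer_le_centralizer hmin hcyc
      set N := (MonoidHom.transferSylow S hNC).ker with hN
      have hcomp : N.IsComplement' S := MonoidHom.ker_transferSylow_isComplement' S hNC
      have hNi : N.index = Nat.card S := hcomp.symm.index_eq_card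
      obtain ⟨R⟩ : Nonempty (Sylow r N) := inferInstance
      set R' := (R : Subgroup N).map N.subtype with hR'
      have hR'p : IsPGroup r R' := R.isPGroup'.map _
      have hRi : ¬ r ∣ R'.index := by
        rw [hR', Subgroup.index_map_subtype, hr.dvd_mul]
        rintro (hh | hh)
        · exact R.not_dvd_index hh
        · rw [hNi, S.card_eq_multiplicity] at hh
          exact hr2 ((Nat.prime_dvd_prime_iff_eq hr Nat.prime_two).1 (hr.dvd_of_dvd_pow hh))
      have hfr := Sylow.normalizer_sup_eq_top R
      set M := Subgroup.normalizer (R' : Set G) with hM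
      have h2M : 2 ∣ Nat.card M := by
        have e1 : N.relIndex (M ⊔ N) = N.relIndex M := Subgroup.relIndex_sup_right _ _
        rw [hfr, Subgroup.relIndex_top_right, hNi] at e1
        rw [e1] at h2S
        exact h2S.trans (Subgroup.relIndex_dvd_card _ _)
      obtain ⟨y, hy⟩ := exists_prime_orderOf_dvd_card' (G := M) 2 h2M
      have hyy : y * y = 1 := by rw [← pow_two]; exact orderOf_dvd_iff_pow_eq_one.1 hy.dvd
      have hy1 : y ≠ 1 := by rintro rfl; simp at hy
      have hyK : (y : G) ∈ K := inK _ (congrArg Subtype.val hyy) (fun e => hy1 (Subtype.ext e))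
      refine ⟨y, hyK, R', ?_, hRi⟩
      intro g hg
      rw [Subgroup.mem_centralizer_singleton_iff]
      have hyi := h.inv_eq hyK
      have e1 : (y : G) * g * (y : G)⁻¹ * g⁻¹ ∈ R' :=
        R'.mul_mem ((Subgroup.mem_normalizer_iff.1 y.2 g).1 hg) (R'.inv_mem hg)
      have e2 : (y : G) * g * (y : G)⁻¹ * g⁻¹ = y * (g * y * g⁻¹) := by rw [hyi]; group
      have e3 : ((y : G) * g * (y : G)⁻¹ * g⁻¹) ^ p = 1 := by
        rw [e2]; exact h.pw _ hyK _ (h.conj _ hyK g)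
      obtain ⟨n, hn⟩ := hR'p ⟨_, e1⟩
      have hn' := congrArg Subtype.val hn
      have hcop : Nat.Coprime p (r ^ n) := Nat.Coprime.pow_right n ((Nat.coprime_primes hpp hr).2 (Ne.symm hrp))
      have e4 : orderOf ((y : G) * g * (y : G)⁻¹ * g⁻¹) ∣ 1 := by
        rw [← hcop.gcd_eq_one]
        exact Nat.dvd_gcd (orderOf_dvd_of_pow_eq_one e3) (orderOf_dvd_of_pow_eq_one hn')
      rw [Nat.dvd_one, orderOf_eq_one_iff] at e4
      have := mul_inv_eq_one.1 e4
      rw [mul_inv_eq_iff_eq_mul] at this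
      exact this.symm
  have hk0 : K.ncard ≠ 0 := by
    rw [Ne, Set.ncard_eq_zero hKf]; exact Set.nonempty_iff_ne_empty.1 ⟨x, hx⟩
  exact ⟨_, Nat.eq_prime_pow_of_unique_prime_dvd hk0 (fun {d} hd hdk => main d hd hdk)⟩

theorem theoremW {p : ℕ} [Fact p.Prime] (hp : Odd p) : ∀ (n : ℕ) (G : Type uu) [Group G] [Finite G], Nat.card G = n → WS p G := by
  intro n
  induction n using Nat.strong_induction_on with
  | _ n ih =>
  intro G _ _ hn K h
  have IH : ∀ (H : Type uu) [Group H] [Finite H], Nat.card H < Nat.card G → WS p H := by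
    intro H _ _ hlt
    exact ih _ (hn ▸ hlt) H rfl
  by_cases htriv : ∀ u ∈ K, ∀ v ∈ K, u = v
  · have : Subgroup.closure (K * K) = ⊥ := by
      rw [eq_bot_iff, Subgroup.closure_le]
      rintro _ ⟨u, hu, v, hv, rfl⟩
      rw [htriv u hu v hv]
      exact h.inv v hv
    rw [this]
    exact IsPGroup.of_bot
  push Not at htriv
  obtain ⟨x, hx, v, hv, hxv⟩ := htriv
  by_cases gen : Subgroup.closure K = ⊤
  · suffices hk : ∃ b, K.ncard = p ^ b by
      obtain ⟨b, hb⟩ := hk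
      exact h.case_c hp IH hx hv hxv b hb
    have hx1 : x ≠ 1 := by
      rintro rfl
      obtain ⟨m, hm, e⟩ := h.mid_ex hp hx hv
      rw [mul_one, h.inv m hm] at e
      exact hxv e
    by_cases hu : ∀ z : G, z * z = 1 → z * x = x * z → z = 1 ∨ z = x
    · exact h.case_e hp gen hx hx1 hu
    · push Not at hu
      obtain ⟨z, hz, hzc, hz1, hzx⟩ := hu
      exact h.case_d hp IH hx hz hz1 hzx hzc
  · have hlt : Nat.card (Subgroup.closure K) < Nat.card G := by
      refine lt_of_le_of_ne (Nat.card_le_card_of_injective _ (Subgroup.subtype_injective _)) ?_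
      intro e; exact gen (Subgroup.eq_top_of_card_eq _ e)
    have := h.sub_good _ (IH _ hlt)
    rwa [Set.inter_eq_left.2 Subgroup.subset_closure] at this



theorem solv_comm {G : Type uu} [Group G] (K : Set G) (hK : ∀ u ∈ K, ∀ v ∈ K, u * v = v * u) : Group.IsSolvable (Subgroup.closure K) := by
  have h : IsMulCommutative (Subgroup.closure K) := Subgroup.isMulCommutative_closure hK
  exact isSolvable_of_comm (fun a b => h.is_comm.comm a b)

theorem solv_fin {G : Type uu} [Group G] (N : Subgroup G) [N.Normal] (hN : Group.IsSolvable N) (K : Set G) (hK : ∀ u ∈ K, ∀ v ∈ K, u * v ∈ N)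
    (x : G) (hx : x ∈ K) : Group.IsSolvable (Subgroup.closure K) := by
  set H := Subgroup.closure K with hH
  let φ := QuotientGroup.mk' N
  have hle : H.map φ ≤ Subgroup.zpowers (φ x)⁻¹ := by
    rw [hH, MonoidHom.map_closure, Subgroup.closure_le]
    rintro _ ⟨u, hu, rfl⟩
    have : φ (u * x) = 1 := (QuotientGroup.eq_one_iff _).2 (hK u hu x hx)
    rw [map_mul] at this
    rw [eq_inv_of_mul_eq_one_left this]
    exact Subgroup.mem_zpowers _
  haveI s1 : Group.IsSolvable (H.map φ) := by
    have : Group.IsSolvable (Subgroup.zpowers (φ x)⁻¹) := by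
      rw [Subgroup.zpowers_eq_closure]
      apply solv_comm
      rintro u rfl v rfl
      rfl
    exact solvable_of_solvable_injective (Subgroup.inclusion_injective hle)
  haveI s2 : Group.IsSolvable (N.subgroupOf H) := by
    let f : N.subgroupOf H →* N := (H.subtype.comp (N.subgroupOf H).subtype).codRestrict N (fun y => y.2)
    apply solvable_of_solvable_injective (f := f)
    intro a b e
    have := congrArg Subtype.val e
    exact Subtype.ext (Subtype.ext this)
  apply solvable_of_ker_le_range (N.subgroupOf H).subtype (φ.subgroupMap H)
  intro a ha
  rw [Subgroup.range_subtype]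
  have : φ (a : G) = 1 := congrArg Subtype.val (MonoidHom.mem_ker.1 ha)
  exact (QuotientGroup.eq_one_iff (N := N) (a : G)).1 this

theorem solv_p {G : Type uu} [Group G] [Finite G] {p : ℕ} [Fact p.Prime] (h : IsPGroup p G) : Group.IsSolvable G := by
  have := h.isNilpotent
  infer_instance

theorem caseB {G : Type uu} [Group G] [Finite G] (K D : Set G) (conj : ∀ u ∈ K, ∀ g : G, g * u * g⁻¹ ∈ K)
    (inv : ∀ u ∈ K, u * u = 1) (x : G) (hx : x ∈ K) (n : ℕ) (hDo : ∀ s ∈ D, orderOf s = n)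
    (hKD : K * K = {1} ∪ D) (hne : D.Nonempty) (hD1 : (1 : G) ∉ D) : Group.IsSolvable (Subgroup.closure K) := by
  have inv' : ∀ u ∈ K, u⁻¹ = u := fun u hu => inv_eq_of_mul_eq_one_left (inv u hu)
  obtain ⟨d, hd⟩ := hne
  have hdK : d ∈ K * K := by rw [hKD]; exact Or.inr hd
  obtain ⟨u, hu, v, hv, huv⟩ := hdK
  simp only at huv
  have hsq : ∀ i : ℕ, d ^ (2 * i) = 1 ∨ d ^ (2 * i) ∈ D := by
    intro i
    have : d ^ (2 * i) ∈ K * K := by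
      refine ⟨u, hu, (d^i)⁻¹ * u * ((d^i)⁻¹)⁻¹, conj u hu _, ?_⟩
      have e : u * d * u⁻¹ = d⁻¹ := by
        rw [← huv, mul_inv_rev, inv' u hu, inv' v hv, ← mul_assoc u u v, inv u hu, one_mul]
      have e2 : u * (d ^ i) * u⁻¹ = (d^i)⁻¹ := by rw [← conj_pow, e, inv_pow]
      simp only
      rw [← e2, inv' u hu, mul_assoc, two_mul, pow_add]
      have : (u * d ^ i * u)⁻¹ = d ^ i := by
        have e3 := e2
        rw [inv' u hu] at e3
        rw [e3, inv_inv]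
      rw [this, show u * (u * d ^ i * u * (u * d ^ i)) = (u * u) * d ^ i * (u * u) * d ^ i by group, inv u hu]
      simp
    rw [hKD] at this
    exact this
  by_cases h2 : d ^ 2 = 1
  · have hn : n ∣ 2 := by rw [← hDo d hd]; exact orderOf_dvd_of_pow_eq_one h2
    have hall : ∀ s ∈ K * K, s ^ 2 = 1 := by
      intro s hs
      rw [hKD] at hs
      rcases hs with hs | hs
      · rw [hs]; simp
      · exact orderOf_dvd_iff_pow_eq_one.1 (by rw [hDo s hs]; exact hn)
    apply solv_comm
    intro a ha b hb
    have := hall (a * b) (Set.mul_mem_mul ha hb)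
    rw [pow_two] at this
    have e := eq_inv_of_mul_eq_one_left this
    rw [e, mul_inv_rev, inv' a ha, inv' b hb]
  · have h2D : d ^ 2 ∈ D := (hsq 1).resolve_left h2
    have hod : orderOf d = n := hDo d hd
    have hnpos : 0 < n := hod ▸ orderOf_pos d
    have hodd : Odd n := by
      have h1 := hDo _ h2D
      rw [orderOf_pow, hod] at h1
      by_contra hc
      rw [Nat.not_odd_iff_even] at hc
      rw [Nat.gcd_eq_right hc.two_dvd] at h1
      omega
    have hn1 : n ≠ 1 := by
      intro e; rw [e, orderOf_eq_one_iff] at hod; rw [hod] at hd; exact hD1 hd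
    have hprime : n.Prime := by
      obtain ⟨r, hr, hrn⟩ := Nat.exists_prime_and_dvd hn1
      obtain ⟨k, hk⟩ := hodd
      have hpr : d ^ (2 * ((k + 1) * r)) = d ^ r := by
        rw [show 2 * ((k+1) * r) = n * r + r by rw [hk]; ring, pow_add, pow_mul, ← hod, pow_orderOf_eq_one, one_pow, one_mul]
      have := hsq ((k+1) * r)
      rw [hpr] at this
      rcases this with h1 | h1
      · have := orderOf_dvd_of_pow_eq_one h1
        rw [hod] at this
        rwa [Nat.dvd_antisymm this hrn]
      · have h3 := hDo _ h1
        rw [orderOf_pow, hod, Nat.gcd_eq_right hrn] at h3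
        have := Nat.div_lt_self hnpos hr.one_lt
        omega
    haveI : Fact n.Prime := ⟨hprime⟩
    have hyp : Hyp n K := ⟨conj, inv, by
      intro a ha b hb
      have : a * b ∈ K * K := Set.mul_mem_mul ha hb
      rw [hKD] at this
      rcases this with hs | hs
      · rw [Set.mem_singleton_iff.1 hs]; simp
      · rw [← hDo _ hs, pow_orderOf_eq_one]⟩
    have hP := theoremW hodd _ G rfl K hyp
    haveI : (Subgroup.closure (K * K)).Normal := by
      have : Subgroup.closure (K * K) = Subgroup.normalClosure (K * K) := by
        apply le_antisymm Subgroup.closure_le_normalClosure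
        rw [Subgroup.normalClosure, Subgroup.closure_le]
        intro y hy
        obtain ⟨s, ⟨a, ha, b, hb, rfl⟩, hs⟩ := Group.mem_conjugatesOfSet_iff.1 hy
        obtain ⟨g, rfl⟩ := isConj_iff.1 hs
        apply Subgroup.subset_closure
        exact ⟨_, conj a ha g, _, conj b hb g, by simp⟩
      rw [this]; infer_instance
    exact solv_fin (Subgroup.closure (K*K)) (solv_p hP) K
      (fun a ha b hb => Subgroup.subset_closure (Set.mul_mem_mul ha hb)) x hx

theorem caseA {G : Type uu} [Group G] [Finite G] (K D : Set G) (conj : ∀ u ∈ K, ∀ g : G, g * u * g⁻¹ ∈ K)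
    (cls : ∀ u ∈ K, ∀ v ∈ K, ∃ g : G, v = g * u * g⁻¹)
    (inv : ∀ u ∈ K, u⁻¹ ∈ K) (x : G) (hx : x ∈ K) (hxx : x * x ≠ 1) (n : ℕ) (hDo : ∀ s ∈ D, orderOf s = n)
    (hDc : ∀ s ∈ D, ∀ t ∈ D, ∃ g : G, t = g * s * g⁻¹)
    (hKD : K * K = {1} ∪ D) : Group.IsSolvable (Subgroup.closure K) := by
  classical
  have hKf : K.Finite := K.toFinite
  have hx2 : x * x ∈ D := by
    have : x * x ∈ K * K := Set.mul_mem_mul hx hx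
    rw [hKD] at this
    exact this.resolve_left hxx
  have hDK : D.ncard ≤ K.ncard := by
    have : D ⊆ (fun u => u * u) '' K := by
      intro t ht
      obtain ⟨g, rfl⟩ := hDc _ hx2 t ht
      exact ⟨_, conj x hx g, by simp⟩
    exact (Set.ncard_le_ncard this (Set.toFinite _)).trans (Set.ncard_image_le hKf)
  have hKK : (K * K).ncard ≤ K.ncard + 1 := by
    rw [hKD]
    have := Set.ncard_union_le ({1} : Set G) D
    rw [Set.ncard_singleton] at this
    omega
  by_cases hk : K.ncard ≤ 2
  · have hxi : x ≠ x⁻¹ := fun e => hxx (mul_eq_one_iff_eq_inv.2 e)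
    have : ({x, x⁻¹} : Set G) = K := by
      apply Set.eq_of_subset_of_ncard_le
      · rintro y (rfl | rfl)
        · exact hx
        · exact inv x hx
      · rw [Set.ncard_pair hxi]; exact hk
      · exact hKf
    apply solv_comm
    rw [← this]
    rintro u (rfl | rfl) v (rfl | rfl) <;> simp
  · push Not at hk
    set A := hKf.toFinset with hA
    have hAK : (A : Set G) = K := hKf.coe_toFinset
    have hcA : A.card = K.ncard := (Set.ncard_eq_toFinset_card K hKf).symm
    have hcAA : (A * A).card = (K * K).ncard := by
      rw [← Set.ncard_coe_finset, Finset.coe_mul, hAK]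
    have hdbl : ((A * A).card : ℚ) < (3 / 2 : ℚ) * A.card := by
      rw [hcA, hcAA]
      have h1 : ((K * K).ncard : ℚ) ≤ K.ncard + 1 := by exact_mod_cast hKK
      have h2 : (2 : ℚ) < K.ncard := by exact_mod_cast hk
      linarith
    let N := Finset.invMulSubgroup A hdbl
    have hN : (N : Set G) = K * K := by
      rw [Finset.invMulSubgroup_eq_inv_mul, hAK]
      congr 1
      ext y
      rw [Finset.coe_inv, hAK, Set.mem_inv]
      exact ⟨fun h => by simpa using inv _ h, fun h => inv _ h⟩
    have hNm : ∀ y, y ∈ N ↔ y ∈ K * K := fun y => by rw [← hN]; rfl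
    haveI : N.Normal := by
      refine ⟨?_⟩
      intro y hy g
      rw [hNm] at hy ⊢
      obtain ⟨a, ha, b, hb, rfl⟩ := hy
      exact ⟨_, conj a ha g, _, conj b hb g, by simp⟩
    have hord : ∀ y ∈ N, y ≠ 1 → orderOf y = n := by
      intro y hy hy1
      rw [hNm, hKD] at hy
      exact hDo y (hy.resolve_left hy1)
    have hx2N : x * x ∈ N := (hNm _).2 (Set.mul_mem_mul hx hx)
    have hcard : Nat.card N ≠ 1 := by
      intro e
      rw [Subgroup.card_eq_one] at e
      rw [e] at hx2N
      exact hxx hx2N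
    obtain ⟨r, hr, hrn⟩ := Nat.exists_prime_and_dvd hcard
    haveI : Fact r.Prime := ⟨hr⟩
    obtain ⟨y, hy⟩ := exists_prime_orderOf_dvd_card' (G := N) r hrn
    have hnr : n = r := by
      rw [← hord y y.2 ?_, Subgroup.orderOf_coe, hy]
      intro e
      have : y = 1 := Subtype.ext e
      rw [this, orderOf_one] at hy
      exact hr.one_lt.ne hy
    have hNp : IsPGroup r N := by
      intro g
      refine ⟨1, ?_⟩
      rw [pow_one]
      by_cases hg : (g : G) = 1
      · have : g = 1 := Subtype.ext hg
        rw [this, one_pow]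
      · have := hord g g.2 hg
        rw [hnr, Subgroup.orderOf_coe] at this
        rw [← this, pow_orderOf_eq_one]
    exact solv_fin N (solv_p hNp) K (fun a ha b hb => (hNm _).2 (Set.mul_mem_mul ha hb)) x hx

/-- **Theorem A (solvability part).** If `K = x^G` is a conjugacy class of a finite group `G`
with `K² = {1} ∪ D` for a conjugacy class `D = d^G` of a non-identity element `d`, then
`⟨K⟩` is a solvable normal subgroup of `G`. -/
theorem square_of_class_eq_one_union_class_solvable
    {G : Type*} [Group G] [Fintype G] (x d : G) (hx : x ≠ 1) (hd : d ≠ 1)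
    (K D : Set G) (hK : K = conjClass x) (hD : D = conjClass d)
    (hKD : K * K = {1} ∪ D) :
    (Subgroup.closure K).Normal ∧ IsSolvable (Subgroup.closure K) := by
  change (Subgroup.closure K).Normal ∧ Group.IsSolvable (Subgroup.closure K)
  have hmem : ∀ (c a : G), a ∈ conjClass c ↔ ∃ g : G, a = g⁻¹ * c * g := fun c a => Iff.rfl
  have conj : ∀ u ∈ K, ∀ g : G, g * u * g⁻¹ ∈ K := by
    rw [hK]
    rintro u ⟨h, rfl⟩ g
    exact ⟨h * g⁻¹, by group⟩
  have cls : ∀ c, ∀ u ∈ conjClass c, ∀ v ∈ conjClass c, ∃ g : G, v = g * u * g⁻¹ := by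
    rintro c u ⟨a, rfl⟩ v ⟨b, rfl⟩
    exact ⟨b⁻¹ * a, by group⟩
  have hxK : x ∈ K := by rw [hK]; exact ⟨1, by simp⟩
  have hdD : d ∈ D := by rw [hD]; exact ⟨1, by simp⟩
  have hDo : ∀ s ∈ D, orderOf s = orderOf d := by
    intro s hs
    obtain ⟨g, rfl⟩ := cls d d (hD ▸ hdD) s (hD ▸ hs)
    exact orderOf_conj' g d
  have hD1 : (1 : G) ∉ D := by
    intro h
    have := hDo 1 h
    rw [orderOf_one, eq_comm, orderOf_eq_one_iff] at this
    exact hd this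
  constructor
  · have : Subgroup.closure K = Subgroup.normalClosure K := by
      apply le_antisymm Subgroup.closure_le_normalClosure
      rw [Subgroup.normalClosure, Subgroup.closure_le]
      intro y hy
      obtain ⟨s, hs, hs'⟩ := Group.mem_conjugatesOfSet_iff.1 hy
      obtain ⟨g, rfl⟩ := isConj_iff.1 hs'
      exact Subgroup.subset_closure (conj s hs g)
    rw [this]; infer_instance
  · by_cases hxx : x * x = 1
    · refine caseB K D conj ?_ x hxK (orderOf d) hDo hKD ⟨d, hdD⟩ hD1
      intro u hu
      obtain ⟨g, rfl⟩ := cls x x (hK ▸ hxK) u (hK ▸ hu)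
      rw [show g * x * g⁻¹ * (g * x * g⁻¹) = g * (x * x) * g⁻¹ by group, hxx]; simp
    · have h1 : (1 : G) ∈ K * K := by rw [hKD]; exact Or.inl rfl
      obtain ⟨u, hu, v, hv, huv⟩ := h1
      refine caseA K D conj (fun a ha b hb => cls x a (hK ▸ ha) b (hK ▸ hb)) ?_ x hxK hxx (orderOf d) hDo
        (fun a ha b hb => cls d a (hD ▸ ha) b (hD ▸ hb)) hKD
      intro w hw
      obtain ⟨g, rfl⟩ := cls x u (hK ▸ hu) w (hK ▸ hw)
      have e : u⁻¹ = v := inv_eq_of_mul_eq_one_right huv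
      have := conj v hv g
      rw [← e] at this
      rwa [show (g * u * g⁻¹)⁻¹ = g * u⁻¹ * g⁻¹ by group]
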